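/- arXiv:0709.0564 — 3 statements merged into one kernel-verified Lean document; each statement's English description precedes it below -/
import Mathlib

section
/- Let Γ be a distance-regular graph with classical parameters (D, b, α, β), D ≥ 4, and intersection numbers a₁ = 0 and a₂ ≠ 0. Suppose s t u z w is a pentagon in Γ, where s, u ∈ Γ₃(x) and z ∈ Γ₂(x) for some vertex x. Then for every v ∈ B(x,u) one has ∂(v,s) ≠ 2. -/
/-!
Common definitions: distance-regular graphs (via an intersection-number function `p`),
classical parameters, and the sets `B(x,y)`, `A(x,y)`, `C(x,y)`.
The distance `∂` is `SimpleGraph.dist`.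
-/

variable {V : Type*}

/-- `Γ` is distance-regular with intersection numbers `p h i j = p^h_{ij}`
(for indices up to the diameter `D`). -/
def SimpleGraph.IsDistRegularWith (G : SimpleGraph V) (D : ℕ) (p : ℕ → ℕ → ℕ → ℕ) : Prop :=
  ∀ h i j : ℕ, h ≤ D → i ≤ D → j ≤ D → ∀ x y : V, G.dist x y = h →
    {z : V | G.dist x z = i ∧ G.dist y z = j}.ncard = p h i j

/-- The Gaussian bracket `[i] = 1 + b + b² + ⋯ + b^{i-1}`. -/
def gaussBracket (b : ℝ) (i : ℕ) : ℝ := ∑ k ∈ Finset.range i, b ^ k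

/-- A distance-regular graph with intersection numbers `p` has classical parameters
`(D, b, α, β)`: `b ∉ {0, -1}`, `c_i = [i](1 + α[i-1])` and `b_i = ([D]-[i])(β - α[i])`
for `0 ≤ i ≤ D`, where `c_i = p^i_{1,i-1}` and `b_i = p^i_{1,i+1}`. -/
def HasClassicalParams (D : ℕ) (p : ℕ → ℕ → ℕ → ℕ) (b α β : ℝ) : Prop :=
  b ≠ 0 ∧ b ≠ -1 ∧
    (∀ i ≤ D, (p i 1 (i - 1) : ℝ) = gaussBracket b i * (1 + α * gaussBracket b (i - 1))) ∧
    (∀ i ≤ D, (p i 1 (i + 1) : ℝ) =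
      (gaussBracket b D - gaussBracket b i) * (β - α * gaussBracket b i))

/-- `B(x,y) = Γ₁(x) ∩ Γ_{∂(x,y)+1}(y)`. -/
def Bset (G : SimpleGraph V) (x y : V) : Set V :=
  {v | G.dist x v = 1 ∧ G.dist y v = G.dist x y + 1}

/-- `A(x,y) = Γ₁(x) ∩ Γ_{∂(x,y)}(y)`. -/
def Aset (G : SimpleGraph V) (x y : V) : Set V :=
  {v | G.dist x v = 1 ∧ G.dist y v = G.dist x y}

/-- `C(x,y) = Γ₁(x) ∩ Γ_{∂(x,y)-1}(y)`. -/
def Cset (G : SimpleGraph V) (x y : V) : Set V :=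
  {v | G.dist x v = 1 ∧ G.dist y v = G.dist x y - 1}

open Classical in
lemma aux_card [Fintype V] (G : SimpleGraph V) (D : ℕ) (p : ℕ → ℕ → ℕ → ℕ)
    (hdiam_le : ∀ x y : V, G.dist x y ≤ D) (hdr : G.IsDistRegularWith D p)
    (x y : V) (i j : ℕ) (hi : i ≤ D) (hj : j ≤ D) :
    (Finset.univ.filter (fun z => G.dist x z = i ∧ G.dist y z = j)).card = p (G.dist x y) i j := by
  rw [← hdr _ i j (hdiam_le x y) hi hj x y rfl, ← Set.ncard_coe_finset]
  congr 1
  ext z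
  simp

open Classical in
lemma aux_sumF [Fintype V] (G : SimpleGraph V) (D : ℕ) (p : ℕ → ℕ → ℕ → ℕ)
    (hdiam_le : ∀ x y : V, G.dist x y ≤ D) (hdr : G.IsDistRegularWith D p)
    (F : ℕ → ℕ → ℝ) (x y : V) :
    ∑ z, F (G.dist x z) (G.dist y z) =
      ∑ i ∈ Finset.range (D+1), ∑ j ∈ Finset.range (D+1), (p (G.dist x y) i j : ℝ) * F i j := by
  have h1 : ∀ z, F (G.dist x z) (G.dist y z) =
      ∑ i ∈ Finset.range (D+1), ∑ j ∈ Finset.range (D+1),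
        if (G.dist x z = i ∧ G.dist y z = j) then F i j else 0 := by
    intro z
    rw [Finset.sum_eq_single (G.dist x z), Finset.sum_eq_single (G.dist y z)]
    · simp
    · intro j _ hj
      rw [if_neg]; rintro ⟨_, h⟩; exact hj h.symm
    · intro h; exact absurd (Finset.mem_range.2 (Nat.lt_succ_of_le (hdiam_le y z))) h
    · intro i _ hi
      apply Finset.sum_eq_zero
      intro j _
      rw [if_neg]; rintro ⟨h, _⟩; exact hi h.symm
    · intro h; exact absurd (Finset.mem_range.2 (Nat.lt_succ_of_le (hdiam_le x z))) h
  simp_rw [h1]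
  rw [Finset.sum_comm]
  apply Finset.sum_congr rfl
  intro i hi
  rw [Finset.sum_comm]
  apply Finset.sum_congr rfl
  intro j hj
  rw [← aux_card G D p hdiam_le hdr x y i j (Nat.lt_succ_iff.1 (Finset.mem_range.1 hi))
    (Nat.lt_succ_iff.1 (Finset.mem_range.1 hj)), ← Finset.sum_filter, Finset.sum_const, nsmul_eq_mul]

lemma aux_dist3 (G : SimpleGraph V) (hconn : G.Connected) (o y z : V) (h : G.dist y z = 1) :
    G.dist o z = G.dist o y - 1 ∧ 1 ≤ G.dist o y ∨ G.dist o z = G.dist o y ∨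
      G.dist o z = G.dist o y + 1 := by
  have h1 := hconn.dist_triangle (u := o) (v := y) (w := z)
  have h2 := hconn.dist_triangle (u := o) (v := z) (w := y)
  rw [G.dist_comm (u := z) (v := y)] at h2
  omega

open Classical in
/-- neighbours of `y`, split by distance from `o`. -/
lemma aux_nbr [Fintype V] (G : SimpleGraph V) (hconn : G.Connected) (D : ℕ) (p : ℕ → ℕ → ℕ → ℕ)
    (hD : 4 ≤ D)
    (hdiam_le : ∀ x y : V, G.dist x y ≤ D) (hdr : G.IsDistRegularWith D p)
    (o y : V) (i : ℕ) (hi : G.dist y o = i) (hi0 : 1 ≤ i) (hiD : i < D) :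
    p i 1 (i - 1) + p i 1 i + p i 1 (i + 1) = p 0 1 1 := by
  have e1 := aux_card G D p hdiam_le hdr y o 1 (i-1) (by omega) (by omega)
  have e2 := aux_card G D p hdiam_le hdr y o 1 i (by omega) (by omega)
  have e3 := aux_card G D p hdiam_le hdr y o 1 (i+1) (by omega) (by omega)
  have e4 := aux_card G D p hdiam_le hdr y y 1 1 (by omega) (by omega)
  rw [hi] at e1 e2 e3
  rw [G.dist_self] at e4
  rw [← e1, ← e2, ← e3, ← e4, ← Finset.card_union_of_disjoint, ← Finset.card_union_of_disjoint]
  · congr 1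
    ext z
    simp only [Finset.mem_union, Finset.mem_filter, Finset.mem_univ, true_and]
    have := aux_dist3 G hconn o y z
    rw [G.dist_comm (u := o) (v := y)] at this
    constructor
    · tauto
    · rintro ⟨h, _⟩
      have := this h
      rw [hi] at this
      tauto
  · rw [Finset.disjoint_left]
    intro z
    simp only [Finset.mem_union, Finset.mem_filter, Finset.mem_univ, true_and]
    omega
  · rw [Finset.disjoint_left]
    intro z
    simp only [Finset.mem_filter, Finset.mem_univ, true_and]
    omega

lemma aux_params (B b α β a2 c3 c4 k b1 b2 c2 : ℝ) (hb0 : b ≠ 0) (hb1 : b ≠ -1)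
    (hk : k = B * β) (hbb1 : b1 = (B - 1) * (β - α)) (hk1 : 1 + 0 + b1 = k)
    (hc2 : c2 = (1 + b) * (1 + α)) (hb2 : b2 = (B - (1 + b)) * (β - α * (1 + b)))
    (hk2 : c2 + a2 + b2 = k)
    (hc3 : c3 = (1 + b + b^2) * (1 + α * (1 + b)))
    (hc4 : c4 = (1 + b + b^2 + b^3) * (1 + α * (1 + b + b^2)))
    (h34 : c3 ≤ c4) (ha : 1 ≤ a2) :
    β = 1 + α - α * B ∧ a2 = -α * (1 + b)^2 ∧ b < -1 := by
  have hβ : β = 1 + α - α * B := by linarith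
  have ha2 : a2 = -α * (1 + b)^2 := by
    have : a2 = k - c2 - b2 := by linarith
    rw [this, hk, hc2, hb2, hβ]; ring
  refine ⟨hβ, ha2, ?_⟩
  by_contra hcon
  have hb : -1 < b := lt_of_le_of_ne (not_lt.1 hcon) (Ne.symm hb1)
  have h1 : 0 ≤ b^2 * (b + α * (1 + b + b^2) * (1 + b)) := by
    rw [hc3, hc4] at h34
    nlinarith
  have hb2 : 0 < b^2 := by positivity
  have h2 : 0 ≤ b + α * (1 + b + b^2) * (1 + b) := nonneg_of_mul_nonneg_right h1 hb2
  have h3 : 0 ≤ (b + α * (1 + b + b^2) * (1 + b)) * (1 + b) := mul_nonneg h2 (by linarith)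
  have h4 : (b + α * (1 + b + b^2) * (1 + b)) * (1 + b) = b * (1 + b) - a2 * (1 + b + b^2) := by
    rw [ha2]; ring
  rw [h4] at h3
  nlinarith [sq_nonneg (b + 1/2)]

lemma aux_gb (b : ℝ) (i : ℕ) : (b - 1) * gaussBracket b i = b ^ i - 1 := by
  unfold gaussBracket
  rw [mul_comm, geom_sum_mul]

/-- the arithmetic of the eigenvector equation -/
lemma aux_rec (B β b α k ξ θ c bb s s' q : ℝ) (hb : b < -1) (hk : k = B * β)
    (hβ : β = 1 + α - α * B)
    (hc : c = s * (1 + α * s')) (hbb : bb = (B - s) * (β - α * s))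
    (hs : (b - 1) * s = q - 1) (hs' : s ≠ 0 → b * s' = s - 1)
    (hθ : θ = k - ((b-1)*k + b + 1)/b) (hξ : ((b-1)*k + b + 1) * ξ = -(b+1)) :
    c * (b - 1) + bb * (1/b - 1) + k = (θ - k) * (ξ * q) + θ := by
  have hb0 : b ≠ 0 := by linarith
  have hq : q = (b-1)*s + 1 := by linarith
  have hcb : c * b = s * (b + α * (s - 1)) := by
    by_cases h : s = 0
    · rw [hc, h]; ring
    · have := hs' h
      rw [hc]; linear_combination s * α * this
  have h1 : (c * (b - 1) + bb * (1/b - 1)) * b = (θ - k) * b * (ξ * q + 1) := by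
    have e1 : (c * (b - 1) + bb * (1/b - 1)) * b = (c*b)*(b-1) + bb * (1 - b) := by
      field_simp
    have e2 : (θ - k) * b = -((b-1)*k + b + 1) := by
      rw [hθ]; field_simp; ring
    have e3 : -((b-1)*k + b + 1) * (ξ * q + 1) = (b+1) * q - ((b-1)*k + b + 1) := by
      linear_combination (-q) * hξ
    rw [e1, e2, e3, hcb, hbb, hq, hk, hβ]
    ring
  have h2 := mul_right_cancel₀ hb0 (h1.trans (by ring : _ = ((θ - k) * (ξ * q + 1)) * b))
  linarith

open Classical in
lemma aux_eig [Fintype V] (G : SimpleGraph V) (hconn : G.Connected) (D : ℕ) (p : ℕ → ℕ → ℕ → ℕ)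
    (hD : 4 ≤ D)
    (hdiam_le : ∀ x y : V, G.dist x y ≤ D) (hdr : G.IsDistRegularWith D p)
    (b α β ξ θ : ℝ) (hcp : HasClassicalParams D p b α β)
    (hβ : β = 1 + α - α * gaussBracket b D) (hb : b < -1)
    (hθ : θ = p 0 1 1 - ((b-1)*p 0 1 1 + b + 1)/b) (hξ : ((b-1)*p 0 1 1 + b + 1) * ξ = -(b+1))
    (o y : V) :
    ∑ z ∈ Finset.univ.filter (fun z => G.dist y z = 1), (ξ + (1/b)^(G.dist o z)) =
      θ * (ξ + (1/b)^(G.dist o y)) := by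
  obtain ⟨hb0, hb1, hc, hbb⟩ := hcp
  set i := G.dist o y with hi
  have hiD : i ≤ D := hdiam_le o y
  have hyo : G.dist y o = i := G.dist_comm
  have hk : (p 0 1 1 : ℝ) = gaussBracket b D * β := by
    have := hbb 0 (by omega)
    simpa [gaussBracket] using this
  have cnt1 := aux_card G D p hdiam_le hdr y o 1 (i-1) (by omega) (by omega)
  have cnt3 : (Finset.univ.filter (fun z => G.dist y z = 1 ∧ G.dist o z = i+1)).card
      = p (G.dist y o) 1 (i+1) := by
    by_cases h : i + 1 ≤ D
    · exact aux_card G D p hdiam_le hdr y o 1 (i+1) (by omega) h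
    · have hiD' : i = D := by omega
      have h0 := hbb i hiD
      rw [hyo]
      rw [hiD'] at h0 ⊢
      have h0' : p D 1 (D+1) = 0 := by
        have : (p D 1 (D+1) : ℝ) = 0 := by rw [h0]; ring
        exact_mod_cast this
      rw [h0', Finset.card_eq_zero, Finset.filter_eq_empty_iff]
      intro z _ hz
      have := hdiam_le o z
      omega
  have cnt0 := aux_card G D p hdiam_le hdr y y 1 1 (by omega) (by omega)
  rw [hyo] at cnt1 cnt3
  rw [G.dist_self] at cnt0
  have hpt : ∀ z ∈ Finset.univ.filter (fun z => G.dist y z = 1), (ξ + (1/b)^(G.dist o z)) =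
      (ξ + (1/b)^i) + (if G.dist o z = i - 1 then (b-1)*(1/b)^i else 0)
        + (if G.dist o z = i+1 then (1/b-1)*(1/b)^i else 0) := by
    intro z hz
    have hz' : G.dist y z = 1 := (Finset.mem_filter.1 hz).2
    rcases aux_dist3 G hconn o y z hz' with ⟨h, h1⟩ | h | h
    · rw [← hi] at h h1
      rw [if_pos h, if_neg (by omega), h]
      obtain ⟨j, hj⟩ : ∃ j, i = j + 1 := ⟨i-1, by omega⟩
      rw [hj]
      simp only [Nat.add_sub_cancel, pow_succ]
      field_simp
      ring
    · rw [← hi] at h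
      rw [if_neg, if_neg (by omega), h]
      · ring
      · intro h2
        have : i = 0 := by omega
        have hoy : o = y := (hconn.dist_eq_zero_iff).1 (by omega)
        subst hoy
        omega
    · rw [← hi] at h
      rw [if_neg (by omega), if_pos h, h, pow_succ]
      ring
  rw [Finset.sum_congr rfl hpt, Finset.sum_add_distrib, Finset.sum_add_distrib,
    ← Finset.sum_filter, ← Finset.sum_filter, Finset.filter_filter, Finset.filter_filter,
    Finset.sum_const, Finset.sum_const, Finset.sum_const, cnt1, cnt3]
  have cnt0' : (Finset.univ.filter (fun z => G.dist y z = 1)).card = p 0 1 1 := by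
    rw [← cnt0]; simp
  rw [cnt0']
  simp only [nsmul_eq_mul]
  have hrec := aux_rec (gaussBracket b D) β b α (p 0 1 1) ξ θ (p i 1 (i-1)) (p i 1 (i+1))
    (gaussBracket b i) (gaussBracket b (i-1)) (b^i) hb hk hβ (hc i hiD) (hbb i hiD)
    (aux_gb b i) (by
      intro hne
      have hi1 : i ≠ 0 := by
        intro h; apply hne; rw [h]; simp [gaussBracket]
      obtain ⟨j, hj⟩ : ∃ j, i = j + 1 := ⟨i-1, by omega⟩
      rw [hj]
      simp only [Nat.add_sub_cancel]
      unfold gaussBracket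
      rw [geom_sum_succ]
      ring) hθ hξ
  have hq : b^i * (1/b)^i = 1 := by
    rw [← mul_pow]; simp [hb0]
  linear_combination (1/b)^i * hrec + ξ * (θ - p 0 1 1) * hq

open Classical in
lemma aux_EE [Fintype V] (G : SimpleGraph V) (hconn : G.Connected) (D : ℕ) (p : ℕ → ℕ → ℕ → ℕ)
    (hdiam_le : ∀ x y : V, G.dist x y ≤ D) (hdr : G.IsDistRegularWith D p)
    (e : ℕ → ℝ) (θ : ℝ) (he0 : 0 < e 0) (x0 : V)
    (heig : ∀ o y : V, ∑ z ∈ Finset.univ.filter (fun z => G.dist y z = 1), e (G.dist o z) =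
      θ * e (G.dist o y)) :
    ∃ c > 0, ∀ x y : V, ∑ z, e (G.dist z x) * e (G.dist z y) = c * e (G.dist x y) := by
  set g : V → V → ℝ := fun x y => ∑ z, e (G.dist z x) * e (G.dist z y) with hg
  have hgd : ∀ x y x' y', G.dist x y = G.dist x' y' → g x y = g x' y' := by
    intro x y x' y' h
    have h1 := aux_sumF G D p hdiam_le hdr (fun i j => e i * e j) x y
    have h2 := aux_sumF G D p hdiam_le hdr (fun i j => e i * e j) x' y'
    rw [h, ← h2] at h1
    simp only [hg]
    simpa only [G.dist_comm] using h1
  have hge : ∀ x y, ∑ z ∈ Finset.univ.filter (fun z => G.dist y z = 1), g x z = θ * g x y := by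
    intro x y
    simp only [hg]
    rw [Finset.sum_comm, Finset.mul_sum]
    apply Finset.sum_congr rfl
    intro o _
    rw [← Finset.mul_sum, heig]
    ring
  refine ⟨g x0 x0 / e 0, ?_, ?_⟩
  · apply div_pos _ he0
    have : e (G.dist x0 x0) * e (G.dist x0 x0) ≤ g x0 x0 :=
      Finset.single_le_sum (f := fun z => e (G.dist z x0) * e (G.dist z x0))
        (fun z _ => mul_self_nonneg _) (Finset.mem_univ x0)
    rw [G.dist_self] at this
    nlinarith
  · have key : ∀ n : ℕ, ∀ x y, G.dist x y = n → g x y - g x0 x0 / e 0 * e n = 0 := by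
      intro n
      induction n using Nat.strong_induction_on with
      | _ n ih =>
        intro x y hxy
        rcases Nat.eq_zero_or_pos n with h0 | hpos
        · subst h0
          rw [hgd x y x0 x0 (by rw [hxy, G.dist_self])]
          field_simp
          ring
        · obtain ⟨y', hy1, hy2⟩ : ∃ y', G.dist y' y = 1 ∧ G.dist x y' = n - 1 := by
            obtain ⟨w, hw⟩ := hconn.exists_walk_length_eq_dist y x
            cases w with
            | nil => simp at hw; rw [G.dist_self] at hxy; omega
            | cons hadj w' =>
              rename_i v
              refine ⟨v, by rw [G.dist_comm]; exact SimpleGraph.dist_eq_one_iff_adj.2 hadj, ?_⟩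
              have h1 := G.dist_le w'
              simp only [SimpleGraph.Walk.length_cons] at hw
              have h2 := hconn.dist_triangle (u := y) (v := v) (w := x)
              rw [SimpleGraph.dist_eq_one_iff_adj.2 hadj] at h2
              rw [G.dist_comm] at hxy
              rw [G.dist_comm]
              omega
          set F : V → ℝ := fun z => g x z - g x0 x0 / e 0 * e (G.dist x z) with hF
          have hsum : ∑ z ∈ Finset.univ.filter (fun z => G.dist y' z = 1), F z = 0 := by
            simp only [hF]
            rw [Finset.sum_sub_distrib, ← Finset.mul_sum, hge, heig]
            have := ih (n-1) (by omega) x y' hy2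
            rw [← hy2] at this
            linear_combination θ * this
          have hval : ∀ z ∈ Finset.univ.filter (fun z => G.dist y' z = 1),
              F z = if G.dist x z = n then F y else 0 := by
            intro z hz
            have hz' : G.dist y' z = 1 := (Finset.mem_filter.1 hz).2
            split_ifs with h
            · simp only [hF]
              rw [hgd x z x y (by omega), h, hxy]
            · have h3 := aux_dist3 G hconn x y' z hz'
              have := ih (G.dist x z) (by omega) x z rfl
              exact this
          rw [Finset.sum_congr rfl hval, ← Finset.sum_filter, Finset.sum_const, nsmul_eq_mul] at hsum
          rcases mul_eq_zero.1 hsum with h | h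
          · exfalso
            have h' : (Finset.filter (fun z => G.dist x z = n)
              (Finset.univ.filter (fun z => G.dist y' z = 1))).card = 0 := by exact_mod_cast h
            rw [Finset.card_eq_zero] at h'
            have : y ∈ (Finset.filter (fun z => G.dist x z = n)
              (Finset.univ.filter (fun z => G.dist y' z = 1))) :=
              Finset.mem_filter.2 ⟨Finset.mem_filter.2 ⟨Finset.mem_univ _, hy1⟩, hxy⟩
            rw [h'] at this
            simp at this
          · simp only [hF] at h
            rw [hxy] at h
            exact h
    intro x y
    have := key _ x y rfl
    linarith

lemma aux_quad [Fintype V] (G : SimpleGraph V) (e : ℕ → ℝ) (c : ℝ)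
    (hK : ∀ x y : V, ∑ z, e (G.dist z x) * e (G.dist z y) = c * e (G.dist x y))
    (S T : Finset V) (x y : V) (κ : ℝ) :
    ∑ o, (∑ a ∈ S, e (G.dist o a) - ∑ a ∈ T, e (G.dist o a)
        - κ * (e (G.dist o x) - e (G.dist o y)))^2 =
      c * (∑ a ∈ S, ∑ a' ∈ S, e (G.dist a a') + ∑ a ∈ T, ∑ a' ∈ T, e (G.dist a a')
        - 2 * ∑ a ∈ S, ∑ a' ∈ T, e (G.dist a a')
        + κ^2 * (2 * e 0 - 2 * e (G.dist x y))
        - 2 * κ * (∑ a ∈ S, e (G.dist a x) - ∑ a ∈ S, e (G.dist a y)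
          - ∑ a ∈ T, e (G.dist a x) + ∑ a ∈ T, e (G.dist a y))) := by
  have hB : ∀ P Q : Finset V, ∑ o, (∑ a ∈ P, e (G.dist o a)) * (∑ a ∈ Q, e (G.dist o a)) =
      c * ∑ a ∈ P, ∑ a' ∈ Q, e (G.dist a a') := by
    intro P Q
    simp_rw [Finset.sum_mul_sum]
    rw [Finset.sum_comm, Finset.mul_sum]
    apply Finset.sum_congr rfl
    intro a _
    rw [Finset.sum_comm, Finset.mul_sum]
    apply Finset.sum_congr rfl
    intro a' _
    exact hK a a'
  have hB1 : ∀ (P : Finset V) (v : V), ∑ o, (∑ a ∈ P, e (G.dist o a)) * e (G.dist o v) =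
      c * ∑ a ∈ P, e (G.dist a v) := by
    intro P v
    have := hB P {v}
    simpa using this
  have hxx := hK x x
  have hyy := hK y y
  have hxy := hK x y
  rw [G.dist_self] at hxx hyy
  have hexp : ∀ o, (∑ a ∈ S, e (G.dist o a) - ∑ a ∈ T, e (G.dist o a)
        - κ * (e (G.dist o x) - e (G.dist o y)))^2 =
      (∑ a ∈ S, e (G.dist o a)) * (∑ a ∈ S, e (G.dist o a))
      + (∑ a ∈ T, e (G.dist o a)) * (∑ a ∈ T, e (G.dist o a))
      - 2 * ((∑ a ∈ S, e (G.dist o a)) * (∑ a ∈ T, e (G.dist o a)))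
      + κ^2 * (e (G.dist o x) * e (G.dist o x))
      + κ^2 * (e (G.dist o y) * e (G.dist o y))
      - 2 * κ^2 * (e (G.dist o x) * e (G.dist o y))
      - 2 * κ * ((∑ a ∈ S, e (G.dist o a)) * e (G.dist o x))
      + 2 * κ * ((∑ a ∈ S, e (G.dist o a)) * e (G.dist o y))
      + 2 * κ * ((∑ a ∈ T, e (G.dist o a)) * e (G.dist o x))
      - 2 * κ * ((∑ a ∈ T, e (G.dist o a)) * e (G.dist o y)) := by
    intro o; ring
  rw [Finset.sum_congr rfl (fun o _ => hexp o)]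
  simp only [Finset.sum_add_distrib, Finset.sum_sub_distrib, ← Finset.mul_sum, hB, hB1, hxx, hyy, hxy]
  ring

lemma aux_v3 (b α ξ N n c2 : ℝ) (e : ℕ → ℝ) (hb0 : b ≠ 0) (he : e = fun i => ξ + (1/b)^i)
    (hn : n = (1 + b + b^2) * (1 + α * (1 + b))) (hc2 : c2 = (1 + b) * (1 + α)) :
    n * (e 0 - e 2 + n * e 2) + n * (e 0 - e 2 + n * e 2)
      - 2 * (n * (n * e 3 + c2 * (e 1 - e 3)) + (e 2 - e 3) * N)
      + (b * (1 + α * (1 + b)))^2 * (2 * e 0 - 2 * e 3)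
      - 2 * (b * (1 + α * (1 + b))) * (2 * n * (e 1 - e 2)) = - (2 * (e 2 - e 3) * N) := by
  obtain ⟨r, hr⟩ : ∃ r, r = 1/b := ⟨_, rfl⟩
  have h1 : r * b = 1 := by rw [hr]; field_simp
  have hb : b = 1/r := by rw [hr]; simp
  have hr0 : r ≠ 0 := by intro h; rw [h] at h1; simp at h1
  rw [← hr] at he
  rw [he, hn, hc2, hb]
  field_simp
  ring

lemma aux_v2 (b α ξ n c2 : ℝ) (e : ℕ → ℝ) (hb0 : b ≠ 0) (he : e = fun i => ξ + (1/b)^i)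
    (hn : n = -α * (1 + b)^2) (hc2 : c2 = (1 + b) * (1 + α)) :
    n * (e 0 - e 2 + n * e 2) + n * (e 0 - e 2 + n * e 2)
      - 2 * (n * (n * e 2 + c2 * (e 1 - e 2)) + (e 3 - e 2) * 0)
      + (-α * (1 + b))^2 * (2 * e 0 - 2 * e 2)
      - 2 * (-α * (1 + b)) * (2 * n * (e 1 - e 2)) = 0 := by
  rw [he, hn, hc2]
  field_simp
  ring

lemma aux_fin (b α ξ n : ℝ) (e : ℕ → ℝ) (hb0 : b ≠ 0) (he : e = fun i => ξ + (1/b)^i)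
    (hn : n = -α * (1 + b)^2) :
    n * e 3 - n * e 4 - (-α * (1 + b)) * (e 2 - e 4) = 0 := by
  rw [he, hn]
  field_simp
  ring

lemma aux_mono (b ξ : ℝ) (e : ℕ → ℝ) (hb : b < -1) (he : e = fun i => ξ + (1/b)^i) :
    0 < e 2 - e 3 ∧ e 3 < e 4 := by
  have hrneg : 1/b < 0 := one_div_neg.2 (by linarith)
  have h2 : 0 < (1/b)^2 := by nlinarith
  have h3 : 0 < (1/b)^2 * (1 - 1/b) := mul_pos h2 (by linarith)
  have h4 : 0 < (1/b)^2 * (1 - 1/b) * (-(1/b)) := mul_pos h3 (by linarith)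
  rw [he]
  constructor
  · have : (ξ + (1/b)^2) - (ξ + (1/b)^3) = (1/b)^2 * (1 - 1/b) := by ring
    rw [← this] at h3
    exact h3
  · have : (ξ + (1/b)^4) - (ξ + (1/b)^3) = (1/b)^2 * (1 - 1/b) * (-(1/b)) := by ring
    rw [← this] at h4
    exact sub_pos.1 h4

open Classical in
lemma aux_struct [Fintype V] (G : SimpleGraph V) (hconn : G.Connected) (D : ℕ) (p : ℕ → ℕ → ℕ → ℕ)
    (hD : 4 ≤ D)
    (hdiam_le : ∀ x y : V, G.dist x y ≤ D) (hdr : G.IsDistRegularWith D p) (ha1 : p 1 1 1 = 0)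
    (x y : V) (h : ℕ) (hxy : G.dist x y = h) (hh : 2 ≤ h) (S T : Finset V)
    (hS : S = Finset.univ.filter (fun z => G.dist x z = 1 ∧ G.dist y z = 2))
    (hT : T = Finset.univ.filter (fun z => G.dist y z = 1 ∧ G.dist x z = 2))
    (e : ℕ → ℝ) :
    S.card = p h 1 2 ∧ T.card = p h 1 2 ∧
    (∑ a ∈ S, ∑ a' ∈ S, e (G.dist a a') = p h 1 2 * (e 0 - e 2 + p h 1 2 * e 2)) ∧
    (∑ a ∈ T, ∑ a' ∈ T, e (G.dist a a') = p h 1 2 * (e 0 - e 2 + p h 1 2 * e 2)) ∧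
    (∑ a ∈ S, ∑ a' ∈ T, e (G.dist a a') = 
      p h 1 2 * (p h 1 2 * e 2 + p 2 1 1 * (e 1 - e 2)) +
        (e 3 - e 2) * ∑ a ∈ S, ∑ a' ∈ T, (if G.dist a a' = 3 then (1:ℝ) else 0)) ∧
    (∑ a ∈ S, ∑ a' ∈ T, e (G.dist a a') = 
      p h 1 2 * (p h 1 2 * e 3 + p 2 1 1 * (e 1 - e 3)) +
        (e 2 - e 3) * ∑ a ∈ S, ∑ a' ∈ T, (if G.dist a a' = 2 then (1:ℝ) else 0)) ∧
    (∑ a ∈ S, e (G.dist a x) - ∑ a ∈ S, e (G.dist a y)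
          - ∑ a ∈ T, e (G.dist a x) + ∑ a ∈ T, e (G.dist a y) = 2 * p h 1 2 * (e 1 - e 2)) := by
  have htri : ∀ u v w : V, G.dist u v = 1 → G.dist v w = 1 → G.dist u w ≠ 1 := by
    intro u v w huv hvw huw
    have := aux_card G D p hdiam_le hdr u v 1 1 (by omega) (by omega)
    rw [huv, ha1, Finset.card_eq_zero, Finset.filter_eq_empty_iff] at this
    exact this (Finset.mem_univ w) ⟨huw, hvw⟩
  have tri : ∀ u v w : V, G.dist u w ≤ G.dist u v + G.dist v w := fun u v w => hconn.dist_triangle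
  have hz : ∀ u v : V, G.dist u v = 0 → u = v := fun u v h => hconn.dist_eq_zero_iff.1 h
  have hyx : G.dist y x = h := by rw [G.dist_comm]; exact hxy
  have cS : S.card = p h 1 2 := by
    rw [hS, aux_card G D p hdiam_le hdr x y 1 2 (by omega) (by omega), hxy]
  have cT : T.card = p h 1 2 := by
    rw [hT, aux_card G D p hdiam_le hdr y x 1 2 (by omega) (by omega), hyx]
  have mS : ∀ a, a ∈ S ↔ G.dist x a = 1 ∧ G.dist y a = 2 := by intro a; simp [hS]
  have mT : ∀ a, a ∈ T ↔ G.dist y a = 1 ∧ G.dist x a = 2 := by intro a; simp [hT]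
  have hself : ∀ (P : Finset V) (q : V), (∀ a ∈ P, G.dist q a = 1) →
      ∑ a ∈ P, ∑ a' ∈ P, e (G.dist a a') = P.card * (e 0 - e 2 + P.card * e 2) := by
    intro P q hP
    have : ∀ a ∈ P, ∑ a' ∈ P, e (G.dist a a') = e 0 - e 2 + P.card * e 2 := by
      intro a ha
      have hv : ∀ a' ∈ P, e (G.dist a a') = (if a = a' then e 0 - e 2 else 0) + e 2 := by
        intro a' ha'
        split_ifs with heq
        · rw [heq, G.dist_self]; ring
        · have h1 := tri a q a'
          rw [G.dist_comm (u := a) (v := q), hP a ha, hP a' ha'] at h1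
          have h2 : G.dist a a' ≠ 0 := fun h => heq (hz _ _ h)
          have h3 := htri a q a' (by rw [G.dist_comm]; exact hP a ha) (hP a' ha')
          have h4 : G.dist a a' = 2 := by omega
          rw [h4]; ring
      rw [Finset.sum_congr rfl hv, Finset.sum_add_distrib, Finset.sum_ite_eq, if_pos ha,
        Finset.sum_const, nsmul_eq_mul]
    rw [Finset.sum_congr rfl this, Finset.sum_const, nsmul_eq_mul]
  have hd : ∀ a ∈ S, ∀ a' ∈ T, G.dist a a' = 1 ∨ G.dist a a' = 2 ∨ G.dist a a' = 3 := by
    intro a ha a' ha'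
    rw [mS] at ha
    rw [mT] at ha'
    have h1 := tri a x a'
    rw [G.dist_comm (u := a) (v := x)] at h1
    have h2 : G.dist a a' ≠ 0 := by
      intro h
      have := hz _ _ h
      subst this
      omega
    omega
  have hc2 : ∀ a ∈ S, (T.filter (fun t => G.dist a t = 1)).card = p 2 1 1 := by
    intro a ha
    rw [mS] at ha
    have h1 := aux_card G D p hdiam_le hdr a y 1 1 (by omega) (by omega)
    rw [G.dist_comm (u := a) (v := y), ha.2] at h1
    rw [← h1]
    congr 1
    ext t
    simp only [Finset.mem_filter, Finset.mem_univ, true_and, mT]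
    constructor
    · tauto
    · rintro ⟨h2, h3⟩
      refine ⟨⟨h3, ?_⟩, h2⟩
      have h4 := tri x a t
      have h5 := htri x a t ha.1 h2
      have h6 : G.dist x t ≠ 0 := by
        intro h
        have := hz _ _ h
        subst this
        omega
      omega
  have hone : ∀ a ∈ S, ∑ a' ∈ T, (if G.dist a a' = 1 then (1:ℝ) else 0) = p 2 1 1 := by
    intro a ha
    rw [← Finset.sum_filter, Finset.sum_const, hc2 a ha]
    simp
  refine ⟨cS, cT, ?_, ?_, ?_, ?_, ?_⟩
  · rw [hself S x (fun a ha => ((mS a).1 ha).1), cS]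
  · rw [hself T y (fun a ha => ((mT a).1 ha).1), cT]
  · have : ∀ a ∈ S, ∑ a' ∈ T, e (G.dist a a') = (p h 1 2 * e 2 + p 2 1 1 * (e 1 - e 2)) +
        (e 3 - e 2) * ∑ a' ∈ T, (if G.dist a a' = 3 then (1:ℝ) else 0) := by
      intro a ha
      have hv : ∀ a' ∈ T, e (G.dist a a') = e 2 + (e 1 - e 2) * (if G.dist a a' = 1 then (1:ℝ) else 0)
          + (e 3 - e 2) * (if G.dist a a' = 3 then (1:ℝ) else 0) := by
        intro a' ha'
        rcases hd a ha a' ha' with h | h | h <;> rw [h] <;> norm_num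
      rw [Finset.sum_congr rfl hv, Finset.sum_add_distrib, Finset.sum_add_distrib,
        ← Finset.mul_sum, ← Finset.mul_sum, hone a ha, Finset.sum_const, cT, nsmul_eq_mul]
      ring
    rw [Finset.sum_congr rfl this, Finset.sum_add_distrib, ← Finset.mul_sum, Finset.sum_const, cS,
      nsmul_eq_mul]
  · have : ∀ a ∈ S, ∑ a' ∈ T, e (G.dist a a') = (p h 1 2 * e 3 + p 2 1 1 * (e 1 - e 3)) +
        (e 2 - e 3) * ∑ a' ∈ T, (if G.dist a a' = 2 then (1:ℝ) else 0) := by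
      intro a ha
      have hv : ∀ a' ∈ T, e (G.dist a a') = e 3 + (e 1 - e 3) * (if G.dist a a' = 1 then (1:ℝ) else 0)
          + (e 2 - e 3) * (if G.dist a a' = 2 then (1:ℝ) else 0) := by
        intro a' ha'
        rcases hd a ha a' ha' with h | h | h <;> rw [h] <;> norm_num
      rw [Finset.sum_congr rfl hv, Finset.sum_add_distrib, Finset.sum_add_distrib,
        ← Finset.mul_sum, ← Finset.mul_sum, hone a ha, Finset.sum_const, cT, nsmul_eq_mul]
      ring
    rw [Finset.sum_congr rfl this, Finset.sum_add_distrib, ← Finset.mul_sum, Finset.sum_const, cS,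
      nsmul_eq_mul]
  · have e1 : ∑ a ∈ S, e (G.dist a x) = p h 1 2 * e 1 := by
      rw [Finset.sum_congr rfl (g := fun _ => e 1), Finset.sum_const, cS, nsmul_eq_mul]
      intro a ha
      rw [G.dist_comm, ((mS a).1 ha).1]
    have e2 : ∑ a ∈ S, e (G.dist a y) = p h 1 2 * e 2 := by
      rw [Finset.sum_congr rfl (g := fun _ => e 2), Finset.sum_const, cS, nsmul_eq_mul]
      intro a ha
      rw [G.dist_comm, ((mS a).1 ha).2]
    have e3 : ∑ a ∈ T, e (G.dist a x) = p h 1 2 * e 2 := by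
      rw [Finset.sum_congr rfl (g := fun _ => e 2), Finset.sum_const, cT, nsmul_eq_mul]
      intro a ha
      rw [G.dist_comm, ((mT a).1 ha).2]
    have e4 : ∑ a ∈ T, e (G.dist a y) = p h 1 2 * e 1 := by
      rw [Finset.sum_congr rfl (g := fun _ => e 1), Finset.sum_const, cT, nsmul_eq_mul]
      intro a ha
      rw [G.dist_comm, ((mT a).1 ha).1]
    rw [e1, e2, e3, e4]; ring

/-- Classical parameters `(D, b, α, β)`, `D ≥ 4`, `a₁ = 0`, `a₂ ≠ 0`.
If `s t u z w` is a pentagon with `s, u ∈ Γ₃(x)` and `z ∈ Γ₂(x)`, then every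
`v ∈ B(x,u)` satisfies `∂(v,s) ≠ 2`. -/
theorem pentagon_Bset_dist_ne_two [Fintype V] (G : SimpleGraph V) (hconn : G.Connected)
    (D : ℕ) (hD : 4 ≤ D)
    (hdiam_le : ∀ x y : V, G.dist x y ≤ D) (hdiam : ∃ x y : V, G.dist x y = D)
    (p : ℕ → ℕ → ℕ → ℕ) (hdr : G.IsDistRegularWith D p)
    (b α β : ℝ) (hcp : HasClassicalParams D p b α β)
    (ha1 : p 1 1 1 = 0) (ha2 : p 2 1 2 ≠ 0)
    (x s t u z w : V)
    (hst : G.dist s t = 1) (htu : G.dist t u = 1) (huz : G.dist u z = 1)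
    (hzw : G.dist z w = 1) (hws : G.dist w s = 1)
    (hs : G.dist x s = 3) (hu : G.dist x u = 3) (hz : G.dist x z = 2) :
    ∀ v ∈ Bset G x u, G.dist v s ≠ 2 := by
  classical
  intro v hv hvs
  obtain ⟨hxv, huv⟩ := hv
  have tri : ∀ u v w : V, G.dist u w ≤ G.dist u v + G.dist v w := fun u v w => hconn.dist_triangle
  have hzero : ∀ u v : V, G.dist u v = 0 → u = v := fun u v h => hconn.dist_eq_zero_iff.1 h
  have htri : ∀ u v w : V, G.dist u v = 1 → G.dist v w = 1 → G.dist u w ≠ 1 := by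
    intro u v w huv hvw huw
    have := aux_card G D p hdiam_le hdr u v 1 1 (by omega) (by omega)
    rw [huv, ha1, Finset.card_eq_zero, Finset.filter_eq_empty_iff] at this
    exact this (Finset.mem_univ w) ⟨huw, hvw⟩
  rw [hu] at huv
  have hvu : G.dist v u = 4 := by rw [G.dist_comm]; exact huv
  have hsu : G.dist s u = 2 := by
    have h1 := tri s t u
    have h2 := tri v s u
    omega
  have hzs : G.dist z s = 2 := by
    have h1 := tri z w s
    have h2 := htri z w s hzw hws
    have h3 : G.dist z s ≠ 0 := by
      intro h
      have := hzero _ _ h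
      subst this
      omega
    omega
  have hvz : G.dist v z ≤ 3 := by
    have h1 := tri v x z
    rw [G.dist_comm (u := v) (v := x)] at h1
    omega
  -- parameters
  have hcp' := hcp
  obtain ⟨hb0, hb1, hc, hbb⟩ := hcp'
  have g1 : gaussBracket b 1 = 1 := by simp [gaussBracket]
  have g2 : gaussBracket b 2 = 1 + b := by simp [gaussBracket, Finset.sum_range_succ]
  have g3 : gaussBracket b 3 = 1 + b + b^2 := by simp [gaussBracket, Finset.sum_range_succ]
  have g4 : gaussBracket b 4 = 1 + b + b^2 + b^3 := by simp [gaussBracket, Finset.sum_range_succ]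
  have g0 : gaussBracket b 0 = 0 := by simp [gaussBracket]
  have hk : (p 0 1 1 : ℝ) = gaussBracket b D * β := by
    have := hbb 0 (by omega)
    simpa [g0] using this
  have c1 : (p 1 1 0 : ℝ) = 1 := by
    have := hc 1 (by omega)
    simpa [g0, g1] using this
  have b1 := hbb 1 (by omega)
  have b2 := hbb 2 (by omega)
  have c2 := hc 2 (by omega)
  have c3 := hc 3 (by omega)
  have c4 := hc 4 (by omega)
  norm_num [g1, g2, g3, g4] at b1 b2 c2 c3 c4
  have n1 := aux_nbr G hconn D p hD hdiam_le hdr t s 1 hst (by omega) (by omega)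
  have n2 := aux_nbr G hconn D p hD hdiam_le hdr u s 2 hsu (by omega) (by omega)
  norm_num at n1 n2
  have h34 : p 3 1 2 ≤ p 4 1 3 := by
    have e1 := aux_card G D p hdiam_le hdr u x 1 2 (by omega) (by omega)
    have e2 := aux_card G D p hdiam_le hdr u v 1 3 (by omega) (by omega)
    rw [huv] at e2
    rw [G.dist_comm (u := u) (v := x), hu] at e1
    rw [← e1, ← e2]
    apply Finset.card_le_card
    intro q
    simp only [Finset.mem_filter, Finset.mem_univ, true_and]
    rintro ⟨h1, h2⟩
    refine ⟨h1, ?_⟩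
    have h3 := tri v x q
    have h4 := tri v q u
    rw [G.dist_comm (u := v) (v := x)] at h3
    rw [G.dist_comm (u := q) (v := u)] at h4
    omega
  have ha2' : 1 ≤ p 2 1 2 := Nat.one_le_iff_ne_zero.2 ha2
  obtain ⟨hβ, ha2v, hb⟩ := aux_params (gaussBracket b D) b α β (p 2 1 2) (p 3 1 2) (p 4 1 3)
    (p 0 1 1) (p 1 1 2) (p 2 1 3) (p 2 1 1) hb0 hb1 hk b1
    (by
      have : (p 1 1 0 : ℝ) + p 1 1 1 + p 1 1 2 = p 0 1 1 := by exact_mod_cast n1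
      rw [c1, ha1] at this
      simpa using this) c2 b2 (by exact_mod_cast n2) c3 c4 (by exact_mod_cast h34)
    (by exact_mod_cast ha2')
  have hkpos : (0:ℝ) ≤ p 0 1 1 := by positivity
  have hkpos' : (0:ℝ) < p 0 1 1 := by
    have : 0 < p 0 1 1 := by omega
    exact_mod_cast this
  have hden : (b-1)*p 0 1 1 + b + 1 < 0 := by nlinarith
  set ξ : ℝ := -(b+1) / ((b-1)*p 0 1 1 + b + 1) with hξd
  have hξ : ((b-1)*p 0 1 1 + b + 1) * ξ = -(b+1) := by
    rw [hξd]; exact mul_div_cancel₀ _ hden.ne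
  set e : ℕ → ℝ := fun i => ξ + (1/b)^i with he
  have he0 : 0 < e 0 := by
    have h1 : ((b-1)*p 0 1 1 + b + 1) * (ξ + 1) = (b-1)*p 0 1 1 := by linarith
    have h2 : (b-1)*p 0 1 1 < 0 := by nlinarith
    simp only [he, pow_zero]
    by_contra hcon
    have h3 := mul_nonneg_of_nonpos_of_nonpos hden.le (not_lt.1 hcon)
    linarith
  obtain ⟨c, hcpos, hK⟩ := aux_EE G hconn D p hdiam_le hdr e _ he0 x
    (fun o y => aux_eig G hconn D p hD hdiam_le hdr b α β ξ _ hcp hβ hb rfl hξ o y)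
  have hr : b * (1/b) = 1 := by field_simp
  have hrneg : 1/b < 0 := one_div_neg.2 (by linarith)
  -- distance three pairs
  have no3 : ∀ x y a a' : V, G.dist x y = 3 → G.dist x a = 1 → G.dist y a = 2 →
      G.dist y a' = 1 → G.dist x a' = 2 → G.dist a a' ≠ 2 := by
    intro x y a a' hxy h1 h2 h3 h4 h5
    obtain ⟨cS, cT, f1, f2, -, f3, f4⟩ := aux_struct G hconn D p hD hdiam_le hdr ha1 x y 3 hxy
      (by norm_num) _ _ rfl rfl e
    set S := Finset.univ.filter (fun z => G.dist x z = 1 ∧ G.dist y z = 2) with hS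
    set T := Finset.univ.filter (fun z => G.dist y z = 1 ∧ G.dist x z = 2) with hT
    set N := ∑ a ∈ S, ∑ a' ∈ T, (if G.dist a a' = 2 then (1:ℝ) else 0) with hN
    have hNpos : 1 ≤ N := by
      have e1 : (if G.dist a a' = 2 then (1:ℝ) else 0) ≤
          ∑ a' ∈ T, (if G.dist a a' = 2 then (1:ℝ) else 0) :=
        Finset.single_le_sum (f := fun a' => (if G.dist a a' = 2 then (1:ℝ) else 0))
          (fun i _ => by positivity) (Finset.mem_filter.2 ⟨Finset.mem_univ _, h3, h4⟩)
      have e2 : ∑ a' ∈ T, (if G.dist a a' = 2 then (1:ℝ) else 0) ≤ N :=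
        Finset.single_le_sum (f := fun a => ∑ a' ∈ T, (if G.dist a a' = 2 then (1:ℝ) else 0))
          (fun i _ => Finset.sum_nonneg (fun j _ => by positivity)) (Finset.mem_filter.2 ⟨Finset.mem_univ _, h1, h2⟩)
      rw [if_pos h5] at e1
      linarith
    have hq := aux_quad G e c hK S T x y (b * (1 + α * (1 + b)))
    rw [f1, f2, f3, f4, hxy] at hq
    have hnn := hq ▸ Finset.sum_nonneg (fun o (_ : o ∈ Finset.univ) => sq_nonneg
      (∑ a ∈ S, e (G.dist o a) - ∑ a ∈ T, e (G.dist o a)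
        - (b * (1 + α * (1 + b))) * (e (G.dist o x) - e (G.dist o y))))
    have hnn2 := nonneg_of_mul_nonneg_right hnn hcpos
    have hval := aux_v3 b α ξ N (p 3 1 2) (p 2 1 1) e hb0 he c3 c2
    rw [hval] at hnn2
    have h23 := (aux_mono b ξ e hb he).1
    have : 0 < 2 * (e 2 - e 3) * N := by positivity
    linarith
  -- the pair s, u
  obtain ⟨cS, cT, f1, f2, f3, -, f4⟩ := aux_struct G hconn D p hD hdiam_le hdr ha1 s u 2 hsu
      (by norm_num) _ _ rfl rfl e
  set S := Finset.univ.filter (fun z => G.dist s z = 1 ∧ G.dist u z = 2) with hS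
  set T := Finset.univ.filter (fun z => G.dist u z = 1 ∧ G.dist s z = 2) with hT
  have hN : ∑ a ∈ S, ∑ a' ∈ T, (if G.dist a a' = 3 then (1:ℝ) else 0) = 0 := by
    apply Finset.sum_eq_zero
    intro a ha
    apply Finset.sum_eq_zero
    intro a' ha'
    simp only [hS, hT, Finset.mem_filter, Finset.mem_univ, true_and] at ha ha'
    rw [if_neg]
    intro h3
    exact no3 a a' s u h3 (by rw [G.dist_comm]; exact ha.1) (by rw [G.dist_comm]; exact ha'.2)
      (by rw [G.dist_comm]; exact ha'.1) (by rw [G.dist_comm]; exact ha.2) hsu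
  have hq := aux_quad G e c hK S T s u (-α * (1 + b))
  rw [f1, f2, f3, f4, hsu, hN] at hq
  have hval := aux_v2 b α ξ (p 2 1 2) (p 2 1 1) e hb0 he ha2v c2
  rw [hval, mul_zero, Finset.sum_eq_zero_iff_of_nonneg (fun o _ => sq_nonneg _)] at hq
  have hv0 := pow_eq_zero_iff (two_ne_zero) |>.1 (hq v (Finset.mem_univ v))
  rw [hvs, hvu] at hv0
  have h23 : e 3 ≤ e 2 := by linarith [(aux_mono b ξ e hb he).1]
  have h43 : e 3 < e 4 := (aux_mono b ξ e hb he).2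
  have hSs : (p 2 1 2 : ℝ) * e 3 ≤ ∑ a ∈ S, e (G.dist v a) := by
    rw [← cS, ← nsmul_eq_mul]
    apply Finset.card_nsmul_le_sum
    intro a ha
    simp only [hS, Finset.mem_filter, Finset.mem_univ, true_and] at ha
    have h1 := tri v s a
    have h2 := tri v a u
    rw [G.dist_comm (u := a) (v := u)] at h2
    have h3 : G.dist v a = 2 ∨ G.dist v a = 3 := by omega
    rcases h3 with h3 | h3 <;> rw [h3]
    exact h23
  have hTs : ∑ a ∈ T, e (G.dist v a) < (p 2 1 2 : ℝ) * e 4 := by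
    rw [← cT, ← nsmul_eq_mul, ← Finset.sum_const]
    have hcase : ∀ a ∈ T, G.dist v a = 3 ∨ G.dist v a = 4 := by
      intro a ha
      simp only [hT, Finset.mem_filter, Finset.mem_univ, true_and] at ha
      have h1 := tri v s a
      have h2 := tri v a u
      rw [G.dist_comm (u := a) (v := u)] at h2
      omega
    have hzT : z ∈ T := by
      simp only [hT, Finset.mem_filter, Finset.mem_univ, true_and]
      exact ⟨huz, by rw [G.dist_comm]; exact hzs⟩
    apply Finset.sum_lt_sum
    · intro a ha
      rcases hcase a ha with h | h <;> rw [h]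
      exact h43.le
    · refine ⟨z, hzT, ?_⟩
      rcases hcase z hzT with h | h
      · rw [h]; exact h43
      · omega
  have hfin := aux_fin b α ξ (p 2 1 2) e hb0 he ha2v
  linarith
end

section
/- Let Γ be a distance-regular graph with classical parameters (D, b, α, β), D ≥ 4, and intersection numbers a₁ = 0 and a₂ ≠ 0. Suppose s t u z w is a pentagon in Γ, where s, u ∈ Γ₃(x) and z ∈ Γ₂(x) for some vertex x. Then every vertex r ∈ B(u,x) (i.e., every neighbor r of u with ∂(x,r) = 4) satisfies ∂(s,r) = 3. -/
/-!
Common definitions: distance-regular graphs (via an intersection-number function `p`),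
classical parameters, and the sets `B(x,y)`, `A(x,y)`, `C(x,y)`.
The distance `∂` is `SimpleGraph.dist`.
-/

variable {V : Type*}

namespace PB
open Matrix

def Phi {R : Type*} [Ring R] [Algebra ℝ R] (s γ ρ : ℝ) (A X : R) : R :=
  A * A * A * X - s • (A * A * X * A) + s • (A * X * A * A) - X * A * A * A
    - γ • (A * A * X - X * A * A) - ρ • (A * X - X * A)

theorem Phi_add_const {R : Type*} [Ring R] [Algebra ℝ R] (s γ ρ c : ℝ) (A X : R) :
    Phi s γ ρ A (c • (1 : R) + X) = Phi s γ ρ A X := by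
  unfold Phi
  simp only [mul_add, add_mul, smul_mul_assoc, mul_smul_comm, mul_one, one_mul, smul_add, smul_sub]
  abel

theorem Phi_comm {R : Type*} [Ring R] [Algebra ℝ R] (s γ ρ ω η : ℝ) (A X : R)
    (h : A * A * X - (s - 1) • (A * X * A) + X * A * A - γ • (A * X + X * A) - ρ • X
      = ω • A + η • (1 : R)) : Phi s γ ρ A X = 0 := by
  have e : Phi s γ ρ A X = A * (A * A * X - (s - 1) • (A * X * A) + X * A * A
      - γ • (A * X + X * A) - ρ • X) - (A * A * X - (s - 1) • (A * X * A) + X * A * A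
      - γ • (A * X + X * A) - ρ • X) * A := by
    unfold Phi
    simp only [mul_add, add_mul, mul_sub, sub_mul, smul_mul_assoc, mul_smul_comm, smul_add,
      smul_sub, sub_smul, one_smul, mul_assoc]
    abel
  rw [e, h]
  simp [mul_add, add_mul]

variable {V : Type*} [Fintype V] [DecidableEq V]

theorem Phi_add (s γ ρ : ℝ) (A X Y : Matrix V V ℝ) :
    Phi s γ ρ A (X + Y) = Phi s γ ρ A X + Phi s γ ρ A Y := by
  unfold Phi
  simp only [mul_add, add_mul, smul_add, smul_sub]
  abel

theorem Phi_smul (s γ ρ c : ℝ) (A X : Matrix V V ℝ) :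
    Phi s γ ρ A (c • X) = c • Phi s γ ρ A X := by
  unfold Phi
  simp only [smul_mul_assoc, mul_smul_comm, smul_add, smul_sub, smul_smul, mul_comm]

def PhiL (s γ ρ : ℝ) (A : Matrix V V ℝ) : Matrix V V ℝ →ₗ[ℝ] Matrix V V ℝ where
  toFun := Phi s γ ρ A
  map_add' := Phi_add s γ ρ A
  map_smul' c X := Phi_smul s γ ρ c A X

theorem trace_Phi (s γ ρ : ℝ) (A X Y : Matrix V V ℝ) :
    trace (Phi s γ ρ A X * Y) = - trace (X * Phi s γ ρ A Y) := by
  unfold Phi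
  simp only [mul_add, add_mul, mul_sub, sub_mul, smul_mul_assoc, mul_smul_comm, trace_add,
    trace_sub, trace_smul, smul_sub]
  have c1 : ∀ P Q : Matrix V V ℝ, trace (A * P * Q) = trace (P * (Q * A)) := by
    intro P Q; rw [mul_assoc, trace_mul_comm, mul_assoc]
  have e1 : trace (A * A * A * X * Y) = trace (X * (Y * A * A * A)) := by
    rw [trace_mul_comm, ← mul_assoc, trace_mul_comm]; simp only [mul_assoc]
  have e2 : trace (A * A * X * A * Y) = trace (X * (A * Y * A * A)) := by
    rw [mul_assoc A A X, mul_assoc A, mul_assoc A, trace_mul_comm]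
    rw [mul_assoc A X, mul_assoc A, mul_assoc A, trace_mul_comm]; simp only [mul_assoc]
  have e3 : trace (A * X * A * A * Y) = trace (X * (A * A * Y * A)) := by
    rw [mul_assoc A X, mul_assoc A, mul_assoc A, trace_mul_comm]; simp only [mul_assoc]
  have e4 : trace (X * A * A * A * Y) = trace (X * (A * A * A * Y)) := by
    simp only [mul_assoc]
  have e5 : trace (A * A * X * Y) = trace (X * (Y * A * A)) := by
    rw [trace_mul_comm, ← mul_assoc, trace_mul_comm]; simp only [mul_assoc]
  have e6 : trace (X * A * A * Y) = trace (X * (A * A * Y)) := by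
    simp only [mul_assoc]
  have e7 : trace (A * X * Y) = trace (X * (Y * A)) := by
    rw [mul_assoc, trace_mul_comm, mul_assoc]
  have e8 : trace (X * A * Y) = trace (X * (A * Y)) := by
    simp only [mul_assoc]
  rw [e1, e2, e3, e4, e5, e6, e7, e8]
  ring

theorem Phi_transpose (s γ ρ : ℝ) (A X : Matrix V V ℝ) (hA : Aᵀ = A) (hX : Xᵀ = X) :
    (Phi s γ ρ A X)ᵀ = - Phi s γ ρ A X := by
  unfold Phi
  simp only [transpose_add, transpose_sub, transpose_smul, transpose_mul, hA, hX, mul_assoc,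
    smul_sub]
  abel

theorem Phi_diag_zero (s γ ρ : ℝ) (A T : Matrix V V ℝ) (y : V)
    (h : ∀ (l : ℕ) (z : V), (T * A ^ l) z y = 0) : (Phi s γ ρ A T) y y = 0 := by
  have h' : ∀ (M : Matrix V V ℝ) (l : ℕ), (M * (T * A ^ l)) y y = 0 := by
    intro M l
    rw [Matrix.mul_apply]
    exact Finset.sum_eq_zero fun z _ => by rw [h, mul_zero]
  have e : Phi s γ ρ A T = (A * A * A) * (T * A ^ 0) - s • ((A * A) * (T * A ^ 1))
      + s • (A * (T * A ^ 2)) - 1 * (T * A ^ 3)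
      - γ • ((A * A) * (T * A ^ 0) - 1 * (T * A ^ 2)) - ρ • (A * (T * A ^ 0) - 1 * (T * A ^ 1)) := by
    unfold Phi
    simp only [pow_succ, pow_zero, mul_one, one_mul, mul_assoc]
  rw [e]
  simp only [Matrix.add_apply, Matrix.sub_apply, Matrix.smul_apply, h']
  simp

theorem key (s γ ρ κ : ℝ) (A E : Matrix V V ℝ) (hA : Aᵀ = A) (hE : Eᵀ = E)
    (hEE : E * E = κ • E)
    (h : ∀ (y : V) (l : ℕ) (z : V), (Phi s γ ρ A (diagonal (E y)) * A ^ l) z y = 0) (v : V) :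
    Phi s γ ρ A (diagonal (E v)) = 0 := by
  set T : V → Matrix V V ℝ := fun v => Phi s γ ρ A (diagonal (E v)) with hT
  have hEs : ∀ x y, E x y = E y x := fun x y => by
    conv_lhs => rw [← hE]
    rfl
  let Ψ : V → (V → ℝ) → ℝ := fun y d => (Phi s γ ρ A (Phi s γ ρ A (diagonal d))) y y
  have hΨ : ∀ y d, Ψ y d = ∑ z, d z * Ψ y (Pi.single z 1) := by
    intro y d
    have : diagonal d = ∑ z, d z • diagonal (Pi.single z (1:ℝ)) := by
      ext i j
      rw [Matrix.sum_apply]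
      by_cases hij : i = j
      · subst hij
        simp [Pi.single_apply]
      · simp [diagonal_apply_ne _ hij]
    have e2 : PhiL s γ ρ A (PhiL s γ ρ A (diagonal d)) =
        ∑ z, d z • PhiL s γ ρ A (PhiL s γ ρ A (diagonal (Pi.single z (1:ℝ)))) := by
      rw [this]
      simp only [map_sum, map_smul]
    have e3 := congrFun (congrFun e2 y) y
    rw [Matrix.sum_apply] at e3
    exact e3
  have norm : ∑ v, trace (T v * (T v)ᵀ) = 0 := by
    have h1 : ∀ v, trace (T v * (T v)ᵀ) = ∑ y, E v y * Ψ y (E v) := by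
      intro v
      rw [Phi_transpose s γ ρ A _ hA (diagonal_transpose _), mul_neg, trace_neg, hT]
      dsimp only
      rw [trace_Phi, neg_neg, trace]
      simp only [diag_apply, diagonal_mul]
      rfl
    simp only [h1]
    rw [Finset.sum_comm]
    have h2 : ∀ y, ∑ v, E v y * Ψ y (E v) = κ * Ψ y (E y) := by
      intro y
      rw [hΨ y (E y), Finset.mul_sum]
      have : ∀ v, E v y * Ψ y (E v) = ∑ z, E v y * E v z * Ψ y (Pi.single z 1) := by
        intro v
        rw [hΨ y (E v), Finset.mul_sum]
        simp only [mul_assoc]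
      simp only [this]
      rw [Finset.sum_comm]
      refine Finset.sum_congr rfl fun z _ => ?_
      rw [← Finset.sum_mul, ← mul_assoc]
      congr 1
      have := congrFun (congrFun hEE y) z
      rw [Matrix.mul_apply] at this
      simp only [hEs _ y]
      simpa using this
    simp only [h2]
    refine Finset.sum_eq_zero fun y _ => ?_
    have : Ψ y (E y) = 0 := Phi_diag_zero s γ ρ A _ y (h y)
    rw [this, mul_zero]
  have h3 : ∀ v, trace (T v * (T v)ᵀ) = ∑ x, ∑ y, (T v x y) ^ 2 := by
    intro v
    simp only [trace, diag_apply, Matrix.mul_apply, transpose_apply, sq]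
  simp only [h3] at norm
  rw [Finset.sum_eq_zero_iff_of_nonneg (fun _ _ => by positivity)] at norm
  have n1 := norm v (Finset.mem_univ _)
  rw [Finset.sum_eq_zero_iff_of_nonneg (fun _ _ => by positivity)] at n1
  ext x y
  have n2 := n1 x (Finset.mem_univ _)
  rw [Finset.sum_eq_zero_iff_of_nonneg (fun _ _ => by positivity)] at n2
  simpa using n2 y (Finset.mem_univ _)

/-! radial operator -/

noncomputable def cN (b α : ℝ) (i : ℕ) : ℝ := gaussBracket b i * (1 + α * b⁻¹ * (gaussBracket b i - 1))
noncomputable def bN (k b α : ℝ) (i : ℕ) : ℝ := k - gaussBracket b i * (1 + α) + α * gaussBracket b i ^ 2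

noncomputable def Bop (k b α : ℝ) : Module.End ℝ (ℕ → ℝ) where
  toFun f := fun i => k * f i + bN k b α i * (f (i + 1) - f i) + cN b α i * (f (i - 1) - f i)
  map_add' f g := by ext i; simp; ring
  map_smul' c f := by ext i; simp; ring

def Mul (g : ℕ → ℝ) : Module.End ℝ (ℕ → ℝ) where
  toFun f := fun i => g i * f i
  map_add' f g := by ext i; simp; ring
  map_smul' c f := by ext i; simp; ring

theorem gb_eq {b : ℝ} (hb : b ≠ 1) (i : ℕ) : gaussBracket b i = (b ^ i - 1) / (b - 1) :=
  geom_sum_eq hb i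

noncomputable def etaP (k b α : ℝ) : ℝ := (1 + b) / b ^ 2 * ((k - 1) * (1 + b) * (1 + α) - k * (1 + b ^ 2))

theorem AW (k b α : ℝ) (hb0 : b ≠ 0) (hb1 : b ≠ 1) :
    Bop k b α * Bop k b α * Mul (fun i => b⁻¹ ^ i)
      - ((b + b⁻¹ + 1) - 1) • (Bop k b α * Mul (fun i => b⁻¹ ^ i) * Bop k b α)
      + Mul (fun i => b⁻¹ ^ i) * Bop k b α * Bop k b α
      - (α * (1 + b⁻¹)) • (Bop k b α * Mul (fun i => b⁻¹ ^ i) + Mul (fun i => b⁻¹ ^ i) * Bop k b α)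
      - (k * (1 - b⁻¹ ^ 2) - etaP k b α) • Mul (fun i => b⁻¹ ^ i)
      = (-α * (1 + b⁻¹) ^ 2) • Bop k b α + etaP k b α • (1 : Module.End ℝ (ℕ → ℝ)) := by
  have hb1' : b - 1 ≠ 0 := sub_ne_zero.2 hb1
  ext1 f
  funext i
  simp only [LinearMap.sub_apply, LinearMap.add_apply, LinearMap.smul_apply, Module.End.mul_apply,
    Module.End.one_apply, Pi.sub_apply, Pi.add_apply, Pi.smul_apply, smul_eq_mul, Bop, Mul,
    LinearMap.coe_mk, AddHom.coe_mk, bN, cN, etaP, gb_eq hb1]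
  rcases i with _ | _ | j
  · simp
    field_simp
    ring
  · simp
    field_simp
    ring
  · simp only [Nat.add_sub_cancel, show j + 1 + 1 - 1 = j + 1 by omega,
      show j + 1 + 1 + 1 - 1 = j + 1 + 1 by omega, pow_succ, inv_pow]
    have hX : b ^ j ≠ 0 := pow_ne_zero _ hb0
    generalize b ^ j = X at hX ⊢
    field_simp
    ring

theorem eig (k b α : ℝ) (hb0 : b ≠ 0) (hb1 : b ≠ 1) (i : ℕ) :
    Bop k b α (fun i => b⁻¹ ^ i) i = (k * b⁻¹ - 1 - b⁻¹) * b⁻¹ ^ i + (1 + b⁻¹) := by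
  have hb1' : b - 1 ≠ 0 := sub_ne_zero.2 hb1
  simp only [Bop, LinearMap.coe_mk, AddHom.coe_mk, bN, cN, gb_eq hb1]
  rcases i with _ | j
  · simp
    field_simp
    ring
  · simp only [Nat.add_sub_cancel, pow_succ, inv_pow]
    have hX : b ^ j ≠ 0 := pow_ne_zero _ hb0
    generalize b ^ j = X at hX ⊢
    field_simp
    ring

end PB

namespace PB
open Matrix

theorem b_neg_aux (b α : ℝ) (c2 a2 c3 a3 c4 : ℕ) (hb : 0 < b)
    (h2 : (c2 : ℝ) = (1 + b) * (1 + α)) (ha2 : (a2 : ℝ) = -α * (1 + b) ^ 2)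
    (h3 : (c3 : ℝ) = (1 + b + b ^ 2) * (1 + α * (1 + b)))
    (ha3 : (a3 : ℝ) = -α * (1 + b + b ^ 2) * (1 + b) ^ 2)
    (h4 : (c4 : ℝ) = (1 + b + b ^ 2 + b ^ 3) * (1 + α * (1 + b + b ^ 2)))
    (p2 : 0 < c2) (pa2 : 0 < a2) (p3 : 0 < c3) (p4 : 0 < c4) : False := by
  have hq : (0:ℝ) < 1 + α * (1 + b + b ^ 2) := by
    have : (0:ℝ) < (c4 : ℝ) := by exact_mod_cast p4
    rw [h4] at this
    exact (pos_iff_pos_of_mul_pos this).1 (by positivity)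
  have ha2lt : (a2 : ℝ) < 2 := by
    have e : (a2 : ℝ) * (1 + b + b ^ 2) < 2 * (1 + b + b ^ 2) := by
      rw [ha2]
      have := mul_pos hq (show (0:ℝ) < (1 + b) ^ 2 by positivity)
      nlinarith
    exact lt_of_mul_lt_mul_right e (by positivity)
  have ha2' : a2 = 1 := by
    have : a2 < 2 := by exact_mod_cast ha2lt
    omega
  subst ha2'
  obtain ⟨B, hB⟩ : ∃ B, B = 1 + b := ⟨_, rfl⟩
  have hb' : b = B - 1 := by linarith
  subst hb'
  have hB1 : 1 < B := by linarith
  have hα : α * B ^ 2 = -1 := by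
    rw [← hB] at ha2; push_cast at ha2; linarith
  have hm : (c2 : ℝ) * B = B ^ 2 - 1 := by
    rw [h2]; linear_combination hα
  have hN : (a3 : ℝ) = B ^ 2 - B + 1 := by
    rw [ha3]; linear_combination (-(1 + (B - 1) + (B - 1) ^ 2)) * hα
  have hc3 : (c3 : ℝ) * B = (B ^ 2 - B + 1) * (B - 1) := by
    rw [h3]; linear_combination (1 + (B - 1) + (B - 1) ^ 2) * hα
  have hc3' : (1 : ℝ) ≤ c3 := by exact_mod_cast p3
  obtain ⟨j, rfl⟩ : ∃ j, c2 = j + 1 := ⟨c2 - 1, by omega⟩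
  push_cast at hm
  have hk : ((a3 : ℤ) - 2 : ℝ) = j * B := by push_cast; linear_combination hN - hm
  have hk2 : ((a3 : ℤ) - 2 : ℝ) * (((a3 : ℤ) - 2 : ℝ) - j * (j + 1)) = j ^ 2 := by
    rw [hk]; linear_combination (-(j:ℝ)^2) * hm
  have hk3 : ((a3 : ℤ) - 2) * (((a3 : ℤ) - 2) - (j : ℤ) * (j + 1)) = (j : ℤ) ^ 2 := by
    exact_mod_cast hk2
  rcases Nat.eq_zero_or_pos j with rfl | hj
  · simp at hm hk
    have : (a3 : ℝ) = 2 := by linarith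
    nlinarith
  · have hjr : (1:ℝ) ≤ j := by exact_mod_cast hj
    have hBj : (j : ℝ) + 1 < B := by
      by_contra hcon
      push Not at hcon
      nlinarith
    have hgt : (j : ℝ) * (j + 1) < ((a3 : ℤ) - 2 : ℝ) := by
      rw [hk]; exact mul_lt_mul_of_pos_left hBj (by linarith)
    have hgt' : (j : ℤ) * (j + 1) < (a3 : ℤ) - 2 := by exact_mod_cast hgt
    have hj' : (1 : ℤ) ≤ j := by exact_mod_cast hj
    generalize (a3 : ℤ) - 2 = K at hk3 hgt'
    generalize (j : ℤ) = J at hk3 hgt' hj'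
    have hK : 0 < K := by
      have : 0 < J * (J + 1) := by positivity
      linarith
    have h5 : K * 1 ≤ K * (K - J * (J + 1)) := mul_le_mul_of_nonneg_left (by linarith) hK.le
    nlinarith

section
set_option linter.unusedSectionVars false
variable {V : Type*} [Fintype V] (G : SimpleGraph V) (D : ℕ) (p : ℕ → ℕ → ℕ → ℕ)

open Classical in
theorem count_eq (hdr : G.IsDistRegularWith D p) (hle : ∀ x y : V, G.dist x y ≤ D)
    (i j : ℕ) (hi : i ≤ D) (hj : j ≤ D) (x y : V) :
    (∑ z, if G.dist x z = i ∧ G.dist y z = j then (1:ℝ) else 0) = p (G.dist x y) i j := by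
  rw [← hdr _ i j (hle x y) hi hj x y rfl, Finset.sum_boole, Set.ncard_eq_toFinset_card']
  congr 2
  ext z
  simp

theorem exists_prev (hconn : G.Connected) (x y : V) (n : ℕ) (h : G.dist x y = n + 1) :
    ∃ z, G.dist x z = n ∧ G.dist z y = 1 := by
  obtain ⟨w, hw⟩ := hconn.exists_walk_length_eq_dist y x
  rw [SimpleGraph.dist_comm, h] at hw
  cases w with
  | nil => simp at hw
  | @cons _ z _ ha w' =>
    simp at hw
    have h1 : G.dist z y = 1 := SimpleGraph.dist_eq_one_iff_adj.2 ha.symm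
    have h2 : G.dist z x ≤ n := hw ▸ SimpleGraph.dist_le w'
    have h3 := hconn.dist_triangle (u := x) (v := z) (w := y)
    rw [SimpleGraph.dist_comm] at h2
    exact ⟨z, by omega, h1⟩

theorem exists_pair (hconn : G.Connected) (hdiam : ∃ x y : V, G.dist x y = D) (i : ℕ)
    (hi : i ≤ D) : ∃ x y : V, G.dist x y = i := by
  obtain ⟨x, y, h⟩ := hdiam
  obtain ⟨k, rfl⟩ := Nat.exists_eq_add_of_le hi
  induction k generalizing y with
  | zero => exact ⟨x, y, h⟩
  | succ k ih =>
    obtain ⟨z, hz, _⟩ := exists_prev G hconn x y (i + k) h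
    exact ih z (by omega) hz

theorem p_pos (hconn : G.Connected) (hdr : G.IsDistRegularWith D p)
    (hdiam : ∃ x y : V, G.dist x y = D) (i : ℕ) (hi : i + 1 ≤ D) :
    0 < p i 1 (i + 1) ∧ 0 < p (i + 1) 1 i := by
  obtain ⟨x, y, h⟩ := exists_pair G D hconn hdiam (i + 1) hi
  obtain ⟨z, hz, hzy⟩ := exists_prev G hconn x y i h
  constructor
  · rw [← hdr i 1 (i + 1) (by omega) (by omega) hi z x (by rw [SimpleGraph.dist_comm, hz])]
    exact (Set.ncard_pos (Set.toFinite _)).2 ⟨y, hzy, h⟩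
  · rw [← hdr (i + 1) 1 i (by omega) (by omega) (by omega) y x (by rw [SimpleGraph.dist_comm, h])]
    exact (Set.ncard_pos (Set.toFinite _)).2 ⟨z, by rw [SimpleGraph.dist_comm, hzy], hz⟩

open Classical in
noncomputable def Adj : Matrix V V ℝ := Matrix.of fun x y => if G.dist x y = 1 then 1 else 0

theorem Adj_apply (x y : V) : Adj G x y = if G.dist x y = 1 then 1 else 0 := by
  simp [Adj]

open Classical in
theorem radial_raw (hconn : G.Connected) (hdr : G.IsDistRegularWith D p)
    (hle : ∀ x y : V, G.dist x y ≤ D) (hD : 4 ≤ D) (hDD : p D 1 (D + 1) = 0) (f : ℕ → ℝ) (x y : V) :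
    ∑ z, Adj G x z * f (G.dist y z) = (p 0 1 1 : ℝ) * f (G.dist y x)
      + (p (G.dist y x) 1 (G.dist y x + 1) : ℝ) * (f (G.dist y x + 1) - f (G.dist y x))
      + (p (G.dist y x) 1 (G.dist y x - 1) : ℝ) * (f (G.dist y x - 1) - f (G.dist y x)) := by
  set h := G.dist y x with hh
  have e : ∀ z, Adj G x z * f (G.dist y z) =
      (if G.dist x z = 1 ∧ G.dist x z = 1 then (1:ℝ) else 0) * f h
      + (if G.dist x z = 1 ∧ G.dist y z = h + 1 then (1:ℝ) else 0) * (f (h + 1) - f h)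
      + (if G.dist x z = 1 ∧ G.dist y z = h - 1 then (1:ℝ) else 0) * (f (h - 1) - f h) := by
    intro z
    rw [Adj_apply]
    by_cases h1 : G.dist x z = 1
    · have t1 := hconn.dist_triangle (u := y) (v := x) (w := z)
      have t2 := hconn.dist_triangle (u := y) (v := z) (w := x)
      rw [SimpleGraph.dist_comm (u := z)] at t2
      have : G.dist y z = h + 1 ∨ G.dist y z = h ∨ (G.dist y z = h - 1 ∧ 0 < h) := by omega
      rcases this with h2 | h2 | ⟨h2, h3⟩
      · simp [h1, h2]; intro; omega
      · simp [h1, h2]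
        rcases Nat.eq_zero_or_pos h with h0 | h0
        · simp [h0]
        · intro; omega
      · have : ¬ (h - 1 = h + 1) := by omega
        simp [h1, h2, this]
    · simp [h1]
  simp only [e, Finset.sum_add_distrib, ← Finset.sum_mul]
  have k1 := count_eq G D p hdr hle 1 1 (by omega) (by omega) x x
  rw [SimpleGraph.dist_self] at k1
  rw [k1]
  have hcomm : G.dist x y = h := by rw [hh, SimpleGraph.dist_comm]
  have hhD : h ≤ D := hle _ _
  have k2 : (∑ z, if G.dist x z = 1 ∧ G.dist y z = h + 1 then (1:ℝ) else 0) = p h 1 (h + 1) := by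
    by_cases hlt : h + 1 ≤ D
    · rw [count_eq G D p hdr hle 1 (h + 1) (by omega) hlt x y, hcomm]
    · have : h = D := by omega
      rw [this, hDD]
      push_cast
      refine Finset.sum_eq_zero fun z _ => ?_
      rw [if_neg]
      intro hz
      have := hle y z
      omega
  have k3 := count_eq G D p hdr hle 1 (h - 1) (by omega) (by omega) x y
  rw [hcomm] at k3
  rw [k2, k3]

theorem a_eq (hconn : G.Connected) (hdr : G.IsDistRegularWith D p)
    (hle : ∀ x y : V, G.dist x y ≤ D) (hD : 4 ≤ D) (hDD : p D 1 (D + 1) = 0)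
    (hdiam : ∃ x y : V, G.dist x y = D) (i : ℕ) (hi : 1 ≤ i) (hiD : i ≤ D) :
    (p i 1 i : ℝ) = p 0 1 1 - p i 1 (i + 1) - p i 1 (i - 1) := by
  classical
  obtain ⟨y, x, h⟩ := exists_pair G D hconn hdiam i hiD
  have r := radial_raw G D p hconn hdr hle hD hDD (fun j => if j = i then 1 else 0) x y
  have k := count_eq G D p hdr hle 1 i (by omega) hiD x y
  rw [SimpleGraph.dist_comm, h] at k
  rw [h] at r
  have e : ∀ z, Adj G x z * (if G.dist y z = i then (1:ℝ) else 0) =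
      if G.dist x z = 1 ∧ G.dist y z = i then (1:ℝ) else 0 := by
    intro z
    rw [Adj_apply]
    by_cases h1 : G.dist x z = 1 <;> simp [h1]
  simp only [e] at r
  rw [k] at r
  have : ¬ (i - 1 = i) := by omega
  simp [this] at r
  rw [r]; ring

end

end PB

namespace PB
open Matrix

theorem gb0 (b : ℝ) : gaussBracket b 0 = 0 := by simp [gaussBracket]
theorem gb1 (b : ℝ) : gaussBracket b 1 = 1 := by simp [gaussBracket]
theorem gb2 (b : ℝ) : gaussBracket b 2 = 1 + b := by simp [gaussBracket, Finset.sum_range_succ]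
theorem gb3 (b : ℝ) : gaussBracket b 3 = 1 + b + b ^ 2 := by
  simp [gaussBracket, Finset.sum_range_succ]
theorem gb4 (b : ℝ) : gaussBracket b 4 = 1 + b + b ^ 2 + b ^ 3 := by
  simp [gaussBracket, Finset.sum_range_succ]
theorem gb_succ (b : ℝ) (i : ℕ) : gaussBracket b (i + 1) = 1 + b * gaussBracket b i := by
  simp only [gaussBracket, Finset.sum_range_succ', Finset.mul_sum, pow_succ', pow_zero]
  ring

section
set_option linter.unusedSectionVars false
variable {V : Type*} [Fintype V] (G : SimpleGraph V) (D : ℕ) (p : ℕ → ℕ → ℕ → ℕ)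

theorem params (hconn : G.Connected) (hdr : G.IsDistRegularWith D p)
    (hle : ∀ x y : V, G.dist x y ≤ D) (hD : 4 ≤ D)
    (hdiam : ∃ x y : V, G.dist x y = D) (b α β : ℝ) (hcp : HasClassicalParams D p b α β)
    (ha1 : p 1 1 1 = 0) (ha2 : p 2 1 2 ≠ 0) :
    p D 1 (D + 1) = 0 ∧ (∀ h ≤ D, (p h 1 (h - 1) : ℝ) = cN b α h) ∧
    (∀ h ≤ D, (p h 1 (h + 1) : ℝ) = bN (p 0 1 1) b α h) ∧ b < 0 ∧
    (p 2 1 2 : ℝ) = - α * (1 + b) ^ 2 := by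
  obtain ⟨hb0, hbm, hc, hb⟩ := hcp
  have hDD : p D 1 (D + 1) = 0 := by
    have := hb D le_rfl
    rw [sub_self, zero_mul] at this
    exact_mod_cast this
  have hc' : ∀ h ≤ D, (p h 1 (h - 1) : ℝ) = cN b α h := by
    intro h hh
    rw [hc h hh, cN]
    rcases h with _ | j
    · simp [gb0]
    · rw [Nat.add_sub_cancel, gb_succ]
      field_simp
      ring
  have hk := hb 0 (by omega)
  have e1 := a_eq G D p hconn hdr hle hD hDD hdiam 1 le_rfl (by omega)
  rw [ha1, hb 1 (by omega), hc 1 (by omega)] at e1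
  simp only [gb0, gb1, Nat.sub_self, zero_add] at e1 hk
  have hb' : ∀ h ≤ D, (p h 1 (h + 1) : ℝ) = bN (p 0 1 1) b α h := by
    intro h hh
    rw [hb h hh, bN, hk]
    rw [hk] at e1
    push_cast at e1
    linear_combination gaussBracket b h * e1
  have e2 := a_eq G D p hconn hdr hle hD hDD hdiam 2 (by omega) (by omega)
  have e3 := a_eq G D p hconn hdr hle hD hDD hdiam 3 (by omega) (by omega)
  rw [hb' 2 (by omega), hc' 2 (by omega)] at e2
  rw [hb' 3 (by omega), hc' 3 (by omega)] at e3
  simp only [bN, cN, gb2, gb3] at e2 e3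
  have e2' : (p 2 1 2 : ℝ) = - α * (1 + b) ^ 2 := by
    rw [e2]; field_simp; ring
  refine ⟨hDD, hc', hb', ?_, e2'⟩
  by_contra hcon
  have hbp : 0 < b := lt_of_le_of_ne (not_lt.1 hcon) (Ne.symm hb0)
  have c2 := hc 2 (by omega)
  have c3 := hc 3 (by omega)
  have c4 := hc 4 (by omega)
  simp only [show 2 - 1 = 1 by rfl, show 3 - 1 = 2 by rfl, show 4 - 1 = 3 by rfl, gb1, gb2, gb3, gb4]
    at c2 c3 c4
  refine b_neg_aux b α _ _ _ (p 3 1 3) _ hbp (by rw [c2]; ring) e2' c3 ?_ c4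
    (p_pos G D p hconn hdr hdiam 1 (by omega)).2 (Nat.pos_of_ne_zero ha2)
    (p_pos G D p hconn hdr hdiam 2 (by omega)).2 (p_pos G D p hconn hdr hdiam 3 (by omega)).2
  rw [e3]; field_simp; ring

variable [DecidableEq V]

theorem radial_mulVec (k b α : ℝ)
    (hrad : ∀ (f : ℕ → ℝ) (x y : V),
      ∑ z, Adj G x z * f (G.dist y z) = Bop k b α f (G.dist y x))
    (f : ℕ → ℝ) (y : V) :
    Adj G *ᵥ (fun z => f (G.dist y z)) = fun z => Bop k b α f (G.dist y z) := by
  funext x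
  rw [← hrad f x y]
  rfl

theorem Phi_radial (k b α s γ ρ : ℝ)
    (hrad : ∀ (f : ℕ → ℝ) (x y : V),
      ∑ z, Adj G x z * f (G.dist y z) = Bop k b α f (G.dist y x))
    (ε f : ℕ → ℝ) (y : V) :
    Phi s γ ρ (Adj G) (diagonal fun z => ε (G.dist y z)) *ᵥ (fun z => f (G.dist y z)) =
      fun z => Phi s γ ρ (Bop k b α) (Mul ε) f (G.dist y z) := by
  have hm := fun f => radial_mulVec G k b α hrad f y
  have hd : ∀ f : ℕ → ℝ, (diagonal fun z => ε (G.dist y z)) *ᵥ (fun z => f (G.dist y z))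
      = fun z => Mul ε f (G.dist y z) := by
    intro f
    funext x
    rw [mulVec_diagonal]
    rfl
  unfold Phi
  simp only [add_mulVec, sub_mulVec, smul_mulVec, ← mulVec_mulVec, hm, hd]
  rfl

theorem pow_radial (hconn : G.Connected) (k b α : ℝ)
    (hrad : ∀ (f : ℕ → ℝ) (x y : V),
      ∑ z, Adj G x z * f (G.dist y z) = Bop k b α f (G.dist y x)) (l : ℕ) (y : V) :
    ∃ f : ℕ → ℝ, ∀ z, (Adj G ^ l) z y = f (G.dist y z) := by
  induction l with
  | zero =>
    refine ⟨fun i => if i = 0 then 1 else 0, fun z => ?_⟩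
    rw [pow_zero]
    by_cases h : z = y
    · subst h; simp
    · have h2 : G.dist y z ≠ 0 := (hconn.pos_dist_of_ne (Ne.symm h)).ne'
      simp [Matrix.one_apply_ne h, h2]
  | succ l ih =>
    obtain ⟨f, hf⟩ := ih
    refine ⟨Bop k b α f, fun z => ?_⟩
    rw [pow_succ', Matrix.mul_apply, ← hrad f z y]
    simp only [hf]

theorem Adj_symm : (Adj G)ᵀ = Adj G := by
  ext x y
  rw [transpose_apply, Adj_apply, Adj_apply, SimpleGraph.dist_comm]

theorem EE (hconn : G.Connected) (hdr : G.IsDistRegularWith D p)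
    (hle : ∀ x y : V, G.dist x y ≤ D)
    (hdiam : ∃ x y : V, G.dist x y = D) (k b α θ : ℝ)
    (hbN : ∀ i < D, bN k b α i ≠ 0)
    (hrad : ∀ (f : ℕ → ℝ) (x y : V),
      ∑ z, Adj G x z * f (G.dist y z) = Bop k b α f (G.dist y x))
    (ε : ℕ → ℝ) (hε : ∀ i, Bop k b α ε i = θ * ε i) (hε0 : ε 0 ≠ 0) :
    ∃ κ : ℝ, (Matrix.of fun x y => ε (G.dist x y)) * (Matrix.of fun x y : V => ε (G.dist x y))
      = κ • (Matrix.of fun x y => ε (G.dist x y)) := by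
  classical
  let φ : ℕ → ℝ := fun h => ∑ i ∈ Finset.range (D + 1), ∑ j ∈ Finset.range (D + 1),
    (p h i j : ℝ) * (ε i * ε j)
  have hφ : ∀ x y : V, ∑ z, ε (G.dist x z) * ε (G.dist y z) = φ (G.dist x y) := by
    intro x y
    have : ∀ z, ε (G.dist x z) * ε (G.dist y z) = ∑ i ∈ Finset.range (D + 1),
        ∑ j ∈ Finset.range (D + 1), (if G.dist x z = i ∧ G.dist y z = j then (1:ℝ) else 0)
          * (ε i * ε j) := by
      intro z
      have h1 := hle x z
      have h2 := hle y z
      rw [Finset.sum_eq_single (G.dist x z), Finset.sum_eq_single (G.dist y z)]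
      · simp
      · intro j _ hj; simp [Ne.symm hj]
      · intro hn; exact absurd (Finset.mem_range.2 (by omega)) hn
      · intro i _ hi; simp [Ne.symm hi]
      · intro hn; exact absurd (Finset.mem_range.2 (by omega)) hn
    simp only [this]
    rw [Finset.sum_comm]
    refine Finset.sum_congr rfl fun i hi => ?_
    rw [Finset.sum_comm]
    refine Finset.sum_congr rfl fun j hj => ?_
    rw [← Finset.sum_mul, count_eq G D p hdr hle i j (by simp at hi; omega) (by simp at hj; omega)]
  -- φ satisfies the recurrence
  have hφB : ∀ i ≤ D, Bop k b α φ i = θ * φ i := by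
    intro i hi
    obtain ⟨y, x, h⟩ := exists_pair G D hconn hdiam i hi
    have h1 := hrad φ x y
    rw [h] at h1
    rw [← h1]
    simp only [← hφ]
    calc ∑ z, Adj G x z * ∑ w, ε (G.dist y w) * ε (G.dist z w)
        = ∑ w, ε (G.dist y w) * ∑ z, Adj G x z * ε (G.dist w z) := by
          simp only [Finset.mul_sum]
          rw [Finset.sum_comm]
          refine Finset.sum_congr rfl fun w _ => Finset.sum_congr rfl fun z _ => ?_
          rw [SimpleGraph.dist_comm (u := z)]; ring
      _ = θ * ∑ w, ε (G.dist y w) * ε (G.dist x w) := by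
          rw [Finset.mul_sum]
          refine Finset.sum_congr rfl fun w _ => ?_
          rw [hrad, hε, SimpleGraph.dist_comm (u := w)]; ring
      _ = θ * φ i := by rw [hφ, h]
  have hH : ∀ n ≤ D, ∀ i ≤ n, ε 0 * φ i = φ 0 * ε i := by
    intro n
    induction n with
    | zero =>
      intro _ i hi
      obtain rfl : i = 0 := by omega
      ring
    | succ n ih =>
      intro hn i hi
      rcases Nat.lt_or_ge i (n + 1) with hlt | hge
      · exact ih (by omega) i (by omega)
      · obtain rfl : i = n + 1 := by omega
        have i1 := ih (by omega) n le_rfl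
        have i2 := ih (by omega) (n - 1) (by omega)
        have h1 := hφB n (by omega)
        have h2 := hε n
        simp only [Bop, LinearMap.coe_mk, AddHom.coe_mk] at h1 h2
        apply mul_left_cancel₀ (hbN n (by omega))
        linear_combination ε 0 * h1 - φ 0 * h2
          + (θ - k + bN k b α n + cN b α n) * i1 - cN b α n * i2
  refine ⟨φ 0 / ε 0, ?_⟩
  ext x y
  rw [Matrix.mul_apply]
  simp only [of_apply, Matrix.smul_apply, smul_eq_mul]
  have := hφ x y
  simp only [SimpleGraph.dist_comm (u := y)] at this
  rw [this]
  field_simp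
  rw [← hH D le_rfl _ (hle x y)]
  ring

end
end PB

namespace PB
open Matrix

section
set_option linter.unusedSectionVars false
variable {V : Type*} [Fintype V] [DecidableEq V] (G : SimpleGraph V) (D : ℕ) (p : ℕ → ℕ → ℕ → ℕ)

theorem Phi_zero (hconn : G.Connected) (hdr : G.IsDistRegularWith D p)
    (hle : ∀ x y : V, G.dist x y ≤ D) (hD : 4 ≤ D)
    (hdiam : ∃ x y : V, G.dist x y = D) (b α : ℝ)
    (hDD : p D 1 (D + 1) = 0) (hc : ∀ h ≤ D, (p h 1 (h - 1) : ℝ) = cN b α h)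
    (hb : ∀ h ≤ D, (p h 1 (h + 1) : ℝ) = bN (p 0 1 1) b α h) (hneg : b < 0) (v : V) :
    ∃ ρ : ℝ, Phi (b + b⁻¹ + 1) (α * (1 + b⁻¹)) ρ (Adj G)
      (diagonal fun z => b⁻¹ ^ G.dist v z) = 0 := by
  obtain ⟨k, hk⟩ : ∃ k : ℝ, k = p 0 1 1 := ⟨_, rfl⟩
  have hk1 : 1 ≤ k := by
    have := (p_pos G D p hconn hdr hdiam 0 (by omega)).1
    rw [hk]; exact_mod_cast this
  have hb0 : b ≠ 0 := hneg.ne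
  have hb1 : b ≠ 1 := by linarith
  have hq : b⁻¹ < 0 := inv_lt_zero.2 hneg
  have hrad : ∀ (f : ℕ → ℝ) (x y : V),
      ∑ z, Adj G x z * f (G.dist y z) = Bop k b α f (G.dist y x) := by
    intro f x y
    rw [radial_raw G D p hconn hdr hle hD hDD f x y, hc _ (hle _ _), hb _ (hle _ _), ← hk]
    rfl
  have hbN : ∀ i < D, bN k b α i ≠ 0 := by
    intro i hi
    rw [hk, ← hb i hi.le]
    exact_mod_cast (p_pos G D p hconn hdr hdiam i hi).1.ne'
  set θ := k * b⁻¹ - 1 - b⁻¹ with hθ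
  have hθk : θ - k < 0 := by rw [hθ]; nlinarith
  set c := (1 + b⁻¹) / (θ - k) with hcdef
  have hcc : c * (θ - k) = 1 + b⁻¹ := by rw [hcdef, div_mul_cancel₀ _ hθk.ne]
  let ε : ℕ → ℝ := fun i => c + b⁻¹ ^ i
  have hε : ∀ i, Bop k b α ε i = θ * ε i := by
    intro i
    have h1 := eig k b α hb0 hb1 i
    simp only [Bop, LinearMap.coe_mk, AddHom.coe_mk, ε] at h1 ⊢
    linear_combination h1 - hcc
  have hε0 : ε 0 ≠ 0 := by
    intro h0
    simp only [ε, pow_zero] at h0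
    have : (c + 1) * (θ - k) = k * (b⁻¹ - 1) := by
      linear_combination hcc + hθ
    rw [h0, zero_mul] at this
    nlinarith
  obtain ⟨κ, hκ⟩ := EE G D p hconn hdr hle hdiam k b α θ hbN hrad ε hε hε0
  let ρ := k * (1 - b⁻¹ ^ 2) - etaP k b α
  have hM : Mul ε = c • (1 : Module.End ℝ (ℕ → ℝ)) + Mul (fun i => b⁻¹ ^ i) := by
    ext1 f
    funext i
    simp [Mul, ε, add_mul]
  have hP : Phi (b + b⁻¹ + 1) (α * (1 + b⁻¹)) ρ (Bop k b α) (Mul ε) = 0 := by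
    rw [hM, Phi_add_const]
    exact Phi_comm _ _ _ _ _ _ _ (AW k b α hb0 hb1)
  have hkey := key (b + b⁻¹ + 1) (α * (1 + b⁻¹)) ρ κ (Adj G)
    (Matrix.of fun x y => ε (G.dist x y)) (Adj_symm G)
    (by ext x y; simp only [transpose_apply, of_apply]; rw [SimpleGraph.dist_comm]) hκ
    (by
      intro y l z
      obtain ⟨f, hf⟩ := pow_radial G hconn k b α hrad l y
      have h1 := congrFun (Phi_radial G k b α (b + b⁻¹ + 1) (α * (1 + b⁻¹)) ρ hrad ε f y) z
      rw [hP] at h1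
      rw [Matrix.mul_apply]
      simp only [hf]
      exact h1) v
  refine ⟨ρ, ?_⟩
  rw [← hkey, ← Phi_add_const _ _ _ c]
  congr 1
  ext i j
  by_cases hij : i = j
  · subst hij; simp [ε]
  · simp [hij]

open Classical in
theorem identity (hconn : G.Connected) (hdr : G.IsDistRegularWith D p)
    (hle : ∀ x y : V, G.dist x y ≤ D) (hD : 4 ≤ D)
    (ha1 : p 1 1 1 = 0) (hc2 : p 2 1 1 ≠ 0) (s γ ρ : ℝ) (Q : V → ℝ)
    (h0 : Phi s γ ρ (Adj G) (diagonal Q) = 0) (y z : V) (hyz : G.dist y z = 2) :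
    s * ((∑ x, if G.dist z x = 1 ∧ G.dist y x = 2 then Q x else 0) -
      ∑ x, if G.dist y x = 1 ∧ G.dist z x = 2 then Q x else 0) =
      (p 2 1 2 - γ) * (Q z - Q y) := by
  have hAA : ∀ x y, (Adj G * Adj G) x y = p (G.dist x y) 1 1 := by
    intro x y
    rw [← count_eq G D p hdr hle 1 1 (by omega) (by omega) x y, Matrix.mul_apply]
    refine Finset.sum_congr rfl fun w _ => ?_
    rw [Adj_apply, Adj_apply, SimpleGraph.dist_comm (u := w)]
    by_cases h1 : G.dist x w = 1 <;> by_cases h2 : G.dist y w = 1 <;> simp [h1, h2]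
  have p3 : ∀ x y : V, G.dist x y = 3 → p 3 1 1 = 0 := by
    intro x y h
    rw [← hdr 3 1 1 (by omega) (by omega) (by omega) x y h, Set.ncard_eq_zero]
    ext w
    simp only [Set.mem_ofPred_eq, Set.mem_empty_iff_false, iff_false, not_and]
    intro h1 h2
    have := hconn.dist_triangle (u := x) (v := w) (w := y)
    rw [SimpleGraph.dist_comm (u := w)] at this
    omega
  have hprod : ∀ y z, G.dist y z = 2 → ∀ x, Adj G z x * (Adj G * Adj G) x y =
      p 2 1 1 * if G.dist z x = 1 ∧ G.dist y x = 2 then 1 else 0 := by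
    intro y z hyz x
    rw [hAA, Adj_apply]
    by_cases h1 : G.dist z x = 1
    · have t1 := hconn.dist_triangle (u := y) (v := x) (w := z)
      have t2 := hconn.dist_triangle (u := y) (v := z) (w := x)
      rw [SimpleGraph.dist_comm (u := x)] at t1
      have : G.dist y x = 1 ∨ G.dist y x = 2 ∨ G.dist y x = 3 := by omega
      rcases this with h | h | h
      · simp [h1, h, SimpleGraph.dist_comm (u := x), ha1]
      · simp [h1, h, SimpleGraph.dist_comm (u := x)]
      · simp [h1, h, SimpleGraph.dist_comm (u := x), p3 y x h]
    · simp [h1]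
  have hzy : G.dist z y = 2 := by rw [SimpleGraph.dist_comm, hyz]
  have symA : ∀ x y, Adj G x y = Adj G y x := fun x y => by
    rw [Adj_apply, Adj_apply, SimpleGraph.dist_comm]
  have symAA : ∀ x y, (Adj G * Adj G) x y = (Adj G * Adj G) y x := fun x y => by
    rw [hAA, hAA, SimpleGraph.dist_comm]
  have T1 : (Adj G * Adj G * diagonal Q * Adj G) y z = p 2 1 1 *
      ∑ x, if G.dist z x = 1 ∧ G.dist y x = 2 then Q x else 0 := by
    rw [Matrix.mul_apply, Finset.mul_sum]
    refine Finset.sum_congr rfl fun x _ => ?_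
    rw [mul_diagonal, symA x z, symAA y x]
    have := hprod y z hyz x
    split_ifs at this ⊢ <;> linear_combination Q x * this
  have T2 : (Adj G * diagonal Q * Adj G * Adj G) y z = p 2 1 1 *
      ∑ x, if G.dist y x = 1 ∧ G.dist z x = 2 then Q x else 0 := by
    rw [Matrix.mul_assoc, Matrix.mul_apply, Finset.mul_sum]
    refine Finset.sum_congr rfl fun x _ => ?_
    rw [mul_diagonal]
    have := hprod z y hzy x
    split_ifs at this ⊢ <;> linear_combination Q x * this
  have T3 : (Adj G * Adj G * Adj G) y z = p 2 1 1 * p 2 1 2 := by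
    have c := count_eq G D p hdr hle 1 2 (by omega) (by omega) z y
    rw [hzy] at c
    rw [← c, Matrix.mul_apply, Finset.mul_sum]
    refine Finset.sum_congr rfl fun x _ => ?_
    rw [symA x z, symAA y x, mul_comm]
    exact hprod y z hyz x
  have e := congrFun (congrFun h0 y) z
  unfold Phi at e
  simp only [Matrix.add_apply, Matrix.sub_apply, Matrix.smul_apply, T1, T2, smul_eq_mul] at e
  rw [mul_diagonal, mul_diagonal, mul_diagonal, T3, Matrix.mul_assoc, Matrix.mul_assoc,
    Matrix.mul_assoc (diagonal Q), diagonal_mul,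
    diagonal_mul, diagonal_mul, ← Matrix.mul_assoc, T3, hAA, hyz, Adj_apply, hyz] at e
  simp [-SimpleGraph.dist_eq_one_iff_adj] at e
  have hc2' : (p 2 1 1 : ℝ) ≠ 0 := by exact_mod_cast hc2
  apply mul_left_cancel₀ hc2'
  linear_combination -e

end
end PB

namespace PB
open Matrix

theorem F {V : Type*} [Fintype V] (G : SimpleGraph V) (D : ℕ) (p : ℕ → ℕ → ℕ → ℕ)
    (hconn : G.Connected) (hdr : G.IsDistRegularWith D p)
    (hle : ∀ x y : V, G.dist x y ≤ D) (hD : 4 ≤ D)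
    (hdiam : ∃ x y : V, G.dist x y = D) (b α : ℝ)
    (hDD : p D 1 (D + 1) = 0) (hc : ∀ h ≤ D, (p h 1 (h - 1) : ℝ) = cN b α h)
    (hb : ∀ h ≤ D, (p h 1 (h + 1) : ℝ) = bN (p 0 1 1) b α h) (hneg : b < 0)
    (ha1 : p 1 1 1 = 0) (ha2 : (p 2 1 2 : ℝ) = - α * (1 + b) ^ 2)
    (v y z : V) (n : ℕ) (hyz : G.dist y z = 2) (hvy : G.dist v y = n) (hvz : G.dist v z = n + 2) :
    ∀ w, G.dist z w = 1 → G.dist y w = 2 → G.dist v w = n + 2 := by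
  classical
  obtain ⟨ρ, hρ⟩ := Phi_zero G D p hconn hdr hle hD hdiam b α hDD hc hb hneg v
  have hI := identity G D p hconn hdr hle hD ha1
    (p_pos G D p hconn hdr hdiam 1 (by omega)).2.ne' _ _ _ _ hρ y z hyz
  have c1 := count_eq G D p hdr hle 1 2 (by omega) (by omega) z y
  have c2 := count_eq G D p hdr hle 1 2 (by omega) (by omega) y z
  rw [SimpleGraph.dist_comm, hyz] at c1
  rw [hyz] at c2
  obtain ⟨q, hq⟩ : ∃ q, q = b⁻¹ := ⟨_, rfl⟩
  rw [← hq] at hI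
  have hbq : b * q = 1 := by rw [hq, mul_inv_cancel₀ hneg.ne]
  have hqneg : q < 0 := by rw [hq]; exact inv_lt_zero.2 hneg
  have hs : b + q + 1 ≠ 0 := by
    intro h
    have : (b + q + 1) * b = 0 := by rw [h, zero_mul]
    nlinarith [sq_nonneg (b + 1), sq_nonneg b]
  have hpos : 0 < q ^ n * q ^ n := by
    have : q ^ n ≠ 0 := pow_ne_zero _ hqneg.ne
    exact mul_self_pos.2 this
  have hI2 : (∑ x, if G.dist z x = 1 ∧ G.dist y x = 2 then q ^ G.dist v x else 0) -
      (∑ x, if G.dist y x = 1 ∧ G.dist z x = 2 then q ^ G.dist v x else 0) =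
      p 2 1 2 * (q ^ (n + 2) - q ^ (n + 1)) := by
    apply mul_left_cancel₀ hs
    rw [hI, hvy, hvz, ha2]
    have hbq' : b = q⁻¹ := by rw [hq, inv_inv]
    rw [hbq']
    have := hqneg.ne
    field_simp
    ring
  have hL : ∀ x, (if G.dist z x = 1 ∧ G.dist y x = 2 then q ^ G.dist v x - q ^ (n + 2) else 0) * q ^ n ≤ 0 := by
    intro x
    split_ifs with h
    · have t1 := hconn.dist_triangle (u := v) (v := x) (w := z)
      have t2 := hconn.dist_triangle (u := v) (v := y) (w := x)
      rw [SimpleGraph.dist_comm (u := x)] at t1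
      have : G.dist v x = n + 1 ∨ G.dist v x = n + 2 := by omega
      rcases this with e | e
      · rw [e]
        have : (q ^ (n + 1) - q ^ (n + 2)) * q ^ n = (q ^ n * q ^ n) * (q * (1 - q)) := by ring
        rw [this]
        exact mul_nonpos_of_nonneg_of_nonpos hpos.le (by nlinarith)
      · rw [e]; simp
    · simp
  have hR : ∀ x, 0 ≤ (if G.dist y x = 1 ∧ G.dist z x = 2 then q ^ G.dist v x - q ^ (n + 1) else 0) * q ^ n := by
    intro x
    split_ifs with h
    · have t1 := hconn.dist_triangle (u := v) (v := x) (w := z)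
      have t2 := hconn.dist_triangle (u := v) (v := y) (w := x)
      rw [SimpleGraph.dist_comm (u := x)] at t1
      have : G.dist v x = n ∨ G.dist v x = n + 1 := by omega
      rcases this with e | e
      · rw [e]
        have : (q ^ n - q ^ (n + 1)) * q ^ n = (q ^ n * q ^ n) * (1 - q) := by ring
        rw [this]
        exact mul_nonneg hpos.le (by nlinarith)
      · rw [e]; simp
    · simp
  have split : ∀ (P : V → Prop) [DecidablePred P] (c : ℝ), (∑ x, (if P x then q ^ G.dist v x - c else 0) * q ^ n) =
      ((∑ x, if P x then q ^ G.dist v x else 0) - c * ∑ x, if P x then 1 else 0) * q ^ n := by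
    intro P _ c
    rw [← Finset.sum_mul, Finset.mul_sum, ← Finset.sum_sub_distrib]
    congr 1
    refine Finset.sum_congr rfl fun x _ => ?_
    split_ifs <;> ring
  have hS : (∑ x, (if G.dist z x = 1 ∧ G.dist y x = 2 then q ^ G.dist v x - q ^ (n + 2) else 0) * q ^ n) =
    ∑ x, (if G.dist y x = 1 ∧ G.dist z x = 2 then q ^ G.dist v x - q ^ (n + 1) else 0) * q ^ n := by
    rw [split (fun x => G.dist z x = 1 ∧ G.dist y x = 2),
      split (fun x => G.dist y x = 1 ∧ G.dist z x = 2), c1, c2]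
    linear_combination q ^ n * hI2
  have h0 : (∑ x, (if G.dist z x = 1 ∧ G.dist y x = 2 then q ^ G.dist v x - q ^ (n + 2) else 0) * q ^ n) = 0 := by
    apply le_antisymm (Finset.sum_nonpos fun x _ => hL x)
    rw [hS]
    exact Finset.sum_nonneg fun x _ => hR x
  rw [Finset.sum_eq_zero_iff_of_nonpos fun x _ => hL x] at h0
  intro w h1 h2
  have h3 := h0 w (Finset.mem_univ _)
  rw [if_pos ⟨h1, h2⟩] at h3
  have t1 := hconn.dist_triangle (u := v) (v := w) (w := z)
  have t2 := hconn.dist_triangle (u := v) (v := y) (w := w)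
  rw [SimpleGraph.dist_comm (u := w)] at t1
  have : G.dist v w = n + 1 ∨ G.dist v w = n + 2 := by omega
  rcases this with e | e
  · exfalso
    rw [e] at h3
    have : (q ^ (n + 1) - q ^ (n + 2)) * q ^ n = (q ^ n * q ^ n) * (q * (1 - q)) := by ring
    rw [this] at h3
    have : (q ^ n * q ^ n) * (q * (1 - q)) < 0 := mul_neg_of_pos_of_neg hpos (by nlinarith)
    linarith
  · exact e

end PB

/-- Classical parameters `(D, b, α, β)`, `D ≥ 4`, `a₁ = 0`, `a₂ ≠ 0`.
If `s t u z w` is a pentagon with `s, u ∈ Γ₃(x)` and `z ∈ Γ₂(x)`, then every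
`r ∈ B(u,x)` (i.e. every neighbor `r` of `u` with `∂(x,r) = 4`) satisfies `∂(s,r) = 3`. -/
theorem pentagon_Bset_dist_eq_three [Fintype V] (G : SimpleGraph V) (hconn : G.Connected)
    (D : ℕ) (hD : 4 ≤ D)
    (hdiam_le : ∀ x y : V, G.dist x y ≤ D) (hdiam : ∃ x y : V, G.dist x y = D)
    (p : ℕ → ℕ → ℕ → ℕ) (hdr : G.IsDistRegularWith D p)
    (b α β : ℝ) (hcp : HasClassicalParams D p b α β)
    (ha1 : p 1 1 1 = 0) (ha2 : p 2 1 2 ≠ 0)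
    (x s t u z w : V)
    (hst : G.dist s t = 1) (htu : G.dist t u = 1) (huz : G.dist u z = 1)
    (hzw : G.dist z w = 1) (hws : G.dist w s = 1)
    (hs : G.dist x s = 3) (hu : G.dist x u = 3) (hz : G.dist x z = 2) :
    ∀ r ∈ Bset G u x, G.dist s r = 3 := by
  classical
  obtain ⟨hDD, hc, hb, hneg, ha2'⟩ :=
    PB.params G D p hconn hdr hdiam_le hD hdiam b α β hcp ha1 ha2
  have F := PB.F G D p hconn hdr hdiam_le hD hdiam b α hDD hc hb hneg ha1 ha2'
  have tri : ∀ x y z : V, G.dist x y = 1 → G.dist y z = 1 → G.dist x z ≠ 1 := by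
    intro x y z h1 h2 h3
    have h := hdr 1 1 1 (by omega) (by omega) (by omega) x z h3
    rw [ha1, Set.ncard_eq_zero] at h
    have : y ∈ {w : V | G.dist x w = 1 ∧ G.dist z w = 1} := ⟨h1, by rw [G.dist_comm, h2]⟩
    rw [h] at this
    exact this
  have two : ∀ x y z : V, G.dist x y = 1 → G.dist y z = 1 → x ≠ z → G.dist x z = 2 := by
    intro x y z h1 h2 h3
    have t1 := hconn.dist_triangle (u := x) (v := y) (w := z)
    have t2 := tri x y z h1 h2
    have t3 := hconn.pos_dist_of_ne h3
    omega
  have C : ∀ x y : V, G.dist x y = G.dist y x := fun x y => G.dist_comm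
  rintro r ⟨hur, hxr⟩
  rw [C u x, hu] at hxr
  norm_num at hxr
  have hsu : G.dist s u = 2 := by
    refine two s t u hst htu ?_
    rintro rfl
    exact tri s z w huz hzw (by rw [C, hws])
  have hsz : G.dist s z = 2 := by
    refine two s w z (by rw [C, hws]) (by rw [C, hzw]) ?_
    rintro rfl
    omega
  have hzr : G.dist z r = 2 := by
    refine two z u r (by rw [C, huz]) hur ?_
    rintro rfl
    omega
  have F2 : ∀ r, G.dist z r = 2 → G.dist x r = 4 → ∀ y, G.dist r y = 1 → G.dist z y = 2 →
      G.dist x y = 4 := fun r h1 h2 y h3 h4 => F x z r 2 h1 hz h2 y h3 h4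
  have t1 := hconn.dist_triangle (u := s) (v := u) (w := r)
  have t2 := hconn.dist_triangle (u := x) (v := s) (w := r)
  have n1 : G.dist s r ≠ 1 := by
    intro h
    have := F2 r hzr hxr s (by rw [C, h]) (by rw [C, hsz])
    omega
  have n2 : G.dist s r ≠ 2 := by
    intro h
    have : ∃ y, G.dist r y = 1 ∧ G.dist s y = 1 ∧ G.dist z y = 2 := by
      by_contra hcon
      push Not at hcon
      have hsub : {y : V | G.dist r y = 1 ∧ G.dist s y = 1} ⊆
          {y : V | G.dist r y = 1 ∧ G.dist z y = 1} := by
        rintro y ⟨h1, h2⟩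
        refine ⟨h1, ?_⟩
        have h3 := hcon y h1 h2
        have t3 := hconn.dist_triangle (u := z) (v := s) (w := y)
        have t4 := hconn.dist_triangle (u := z) (v := y) (w := s)
        rw [C y s, C z s, hsz, h2] at t4
        rw [C z s, hsz, h2] at t3
        by_contra h4
        have h5 : G.dist y z = 3 := by rw [C y z]; omega
        have h6 : G.dist y u = 3 :=
          F y s z 1 hsz (by rw [C, h2]) h5 u (by rw [C, huz]) hsu
        have h7 : G.dist y r = 3 := F y s u 1 hsu (by rw [C, h2]) h6 r hur h
        rw [C] at h7
        omega
      have e1 := hdr 2 1 1 (by omega) (by omega) (by omega) r s (by rw [C, h])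
      have e2 := hdr 2 1 1 (by omega) (by omega) (by omega) r z (by rw [C, hzr])
      have heq := Set.eq_of_subset_of_ncard_le hsub (by rw [e1, e2]) (Set.toFinite _)
      have hmem : u ∈ {y : V | G.dist r y = 1 ∧ G.dist z y = 1} :=
        ⟨by rw [C, hur], by rw [C, huz]⟩
      rw [← heq] at hmem
      have := hmem.2
      omega
    obtain ⟨y, h1, h2, h3⟩ := this
    have h4 := F2 r hzr hxr y h1 h3
    have := F2 y h3 h4 s (by rw [C, h2]) (by rw [C, hsz])
    omega
  omega
end

section
/- Let Γ be a distance-regular graph with classical parameters (D, b, α, β), D ≥ 4, and intersection numbers a₁ = 0 and a₂ ≠ 0. Suppose s t u z w is a pentagon in Γ, where s, u ∈ Γ₃(x) and z ∈ Γ₂(x) for some vertex x. Then B(x,s) = B(x,u). -/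
/-!
Common definitions: distance-regular graphs (via an intersection-number function `p`),
classical parameters, and the sets `B(x,y)`, `A(x,y)`, `C(x,y)`.
The distance `∂` is `SimpleGraph.dist`.
-/

variable {V : Type*}

noncomputable def Lop (c a d f : ℕ → ℝ) : ℕ → ℝ :=
  fun i => c i * f (i - 1) + a i * f i + d i * f (i + 1)

lemma aw_op (c a d f : ℕ → ℝ) (q bt γ ρ ω η : ℝ) (hbt : bt * q = q ^ 2 + 1) (hc0 : c 0 = 0)
    (W1 : ∀ i, (a i + a (i+1)) * (q^i + q^(i+1)) - bt * (a i * q^i + a (i+1) * q^(i+1))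
      - γ * (q^i + q^(i+1)) = ω)
    (W2 : ∀ i, 2 * q^i * (c i * d (i-1) + a i ^ 2 + d i * c (i+1))
      - bt * (c i * d (i-1) * q^(i-1) + a i ^2 * q^i + d i * c (i+1) * q^(i+1))
      - 2 * γ * a i * q^i - ρ * q^i = ω * a i + η) (i : ℕ) :
    Lop c a d (Lop c a d (fun j => q^j * f j)) i - bt * Lop c a d (fun j => q^j * Lop c a d f j) i
      + q^i * Lop c a d (Lop c a d f) i
      - γ * (Lop c a d (fun j => q^j * f j) i + q^i * Lop c a d f i) - ρ * (q^i * f i)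
    = ω * Lop c a d f i + η * f i := by
  match i with
  | 0 =>
    have w1 := W1 0
    have w2 := W2 0
    simp only [Lop, hc0] at *
    simp at *
    linear_combination f 1 * d 0 * w1 + f 0 * w2 - d 0 * d 1 * f 2 * hbt
  | 1 =>
    have w1 := W1 1
    have w0 := W1 0
    have w2 := W2 1
    simp only [Lop, hc0] at *
    simp at *
    linear_combination f 2 * d 1 * w1 + c 1 * f 0 * w0 + f 1 * w2 - d 1 * d 2 * q * f 3 * hbt
  | n+2 =>
    have w1 := W1 (n+2)
    have w0 := W1 (n+1)
    have w2 := W2 (n+2)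
    simp only [Lop, show n + 2 - 1 = n + 1 from rfl, show n+2+1 = n+3 from rfl, show n+3-1=n+2 from rfl, show n+1-1=n from rfl, show n + 1 + 1 = n+2 from rfl, show n+3+1=n+4 from rfl] at *
    linear_combination f (n+3) * d (n+2) * w1 + c (n+2) * f (n+1) * w0 + f (n+2) * w2 - d (n+2) * d (n+3) * q^(n+2) * f (n+4) * hbt - c (n+2) * c (n+1) * q^n * f n * hbt

lemma gb_eq (b : ℝ) (hb : b ≠ 1) (i : ℕ) : gaussBracket b i = (b^i - 1) / (b - 1) := by
  unfold gaussBracket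
  exact geom_sum_eq hb i

lemma cl_W1 (b α B : ℝ) (hb0 : b ≠ 0) (hb1 : b ≠ 1) (hB : B ≠ 0) (a a' : ℝ)
    (ha : a = -(α * (b+1) / (b * (b-1)^2)) * (B - 1) * (B - b))
    (ha' : a' = -(α * (b+1) / (b * (b-1)^2)) * (B * b - 1) * (B * b - b)) :
    (a + a') * (B⁻¹ + (B*b)⁻¹) - (b + b⁻¹) * (a * B⁻¹ + a' * (B*b)⁻¹)
      - (α*(b+1)/b) * (B⁻¹ + (B*b)⁻¹) = -(α*(b+1)^2/b^2) := by
  have : b - 1 ≠ 0 := sub_ne_zero.mpr hb1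
  subst ha ha'
  field_simp
  ring

lemma cl_W2 (b α N B k β c c' d d' a η : ℝ) (hb0 : b ≠ 0) (hb1 : b ≠ 1) (hB : B ≠ 0)
    (hβ : β = 1 + α - α * (N-1)/(b-1))
    (hk : k = (N-1)/(b-1) * β)
    (ha : a = -(α * (b+1) / (b * (b-1)^2)) * (B - 1) * (B - b))
    (hc : c = (B-1)/(b-1) * (1 + α * ((B/b-1)/(b-1))))
    (hc' : c' = (B*b-1)/(b-1) * (1 + α * ((B-1)/(b-1))))
    (hd : d = ((N-1)/(b-1) - (B-1)/(b-1)) * (β - α * ((B-1)/(b-1))))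
    (hd' : d' = ((N-1)/(b-1) - (B/b-1)/(b-1)) * (β - α * ((B/b-1)/(b-1))))
    (hη : η = ((1-b^2)*k + (1-1/b^2)*(k-1)*((1+b)*(1+α)) - k*(1-1/b^2))/(b-1)) :
    2 * B⁻¹ * (c * d' + a^2 + d * c') - (b + b⁻¹) * (c * d' * (B/b)⁻¹ + a^2 * B⁻¹ + d * c' * (B*b)⁻¹)
      - 2 * (α*(b+1)/b) * a * B⁻¹ - (k*(1-1/b^2) - η) * B⁻¹ = -(α*(b+1)^2/b^2) * a + η := by
  have : b - 1 ≠ 0 := sub_ne_zero.mpr hb1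
  subst hη ha hc hc' hd hd' hk hβ
  field_simp
  ring

lemma cl_T (b α N B k β c d a : ℝ) (hb0 : b ≠ 0) (hb1 : b ≠ 1) (hB : B ≠ 0)
    (hβ : β = 1 + α - α * (N-1)/(b-1))
    (hk : k = (N-1)/(b-1) * β)
    (ha : a = -(α * (b+1) / (b * (b-1)^2)) * (B - 1) * (B - b))
    (hc : c = (B-1)/(b-1) * (1 + α * ((B/b-1)/(b-1))))
    (hd : d = ((N-1)/(b-1) - (B-1)/(b-1)) * (β - α * ((B-1)/(b-1)))) :
    c * (B/b)⁻¹ + a * B⁻¹ + d * (B*b)⁻¹ = (k/b - 1 - 1/b) * B⁻¹ + (b+1)/b := by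
  have : b - 1 ≠ 0 := sub_ne_zero.mpr hb1
  subst ha hc hd hk hβ
  field_simp
  ring

lemma cl_a (b α N B k β c d : ℝ) (hb0 : b ≠ 0) (hb1 : b ≠ 1)
    (hβ : β = 1 + α - α * (N-1)/(b-1))
    (hk : k = (N-1)/(b-1) * β)
    (hc : c = (B-1)/(b-1) * (1 + α * ((B/b-1)/(b-1))))
    (hd : d = ((N-1)/(b-1) - (B-1)/(b-1)) * (β - α * ((B-1)/(b-1)))) :
    k - d - c = -(α * (b+1) / (b * (b-1)^2)) * (B - 1) * (B - b) := by
  have : b - 1 ≠ 0 := sub_ne_zero.mpr hb1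
  subst hc hd hk hβ
  field_simp
  ring

section mats
open Matrix

noncomputable def Xm [Fintype V] (G : SimpleGraph V) (f : ℕ → ℝ) : Matrix V V ℝ :=
  Matrix.of fun y z => f (G.dist y z)

noncomputable def Am [Fintype V] (G : SimpleGraph V) : Matrix V V ℝ :=
  Xm G (fun i => if i = 1 then 1 else 0)

open Classical in
noncomputable def Sm [Fintype V] (G : SimpleGraph V) (q : ℝ) (x : V) : Matrix V V ℝ :=
  Matrix.diagonal (fun y => q ^ (G.dist x y))

lemma Xm_apply [Fintype V] (G : SimpleGraph V) (f : ℕ → ℝ) (y z : V) :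
    Xm G f y z = f (G.dist y z) := rfl

lemma Xm_transpose [Fintype V] (G : SimpleGraph V) (f : ℕ → ℝ) : (Xm G f)ᵀ = Xm G f := by
  ext y z
  simp [Xm_apply, G.dist_comm]

lemma Xm_hadamard [Fintype V] (G : SimpleGraph V) (f h : ℕ → ℝ) :
    Xm G f ⊙ Xm G h = Xm G (fun j => f j * h j) := by
  ext y z
  simp [Xm_apply]

lemma tr_sum [Fintype V] (G : SimpleGraph V) (q : ℝ) (Y1 Y2 : Matrix V V ℝ) :
    ∑ x, (Y1 * Sm G q x * Y2 * Sm G q x).trace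
      = (Y1 * ((Xm G (fun j => q^j) * Xm G (fun j => q^j)) ⊙ Y2)).trace := by
  classical
  simp only [Matrix.trace, Matrix.diag_apply, Sm]
  rw [Finset.sum_comm]
  refine Finset.sum_congr rfl fun i _ => ?_
  have : ∀ x, (Y1 * Matrix.diagonal (fun y => q ^ (G.dist x y)) * Y2 *
      Matrix.diagonal (fun y => q ^ (G.dist x y))) i i =
      ∑ j, Y1 i j * ((q ^ G.dist x j * q ^ G.dist x i) * Y2 j i) := by
    intro x
    rw [Matrix.mul_diagonal, Matrix.mul_apply, Finset.sum_mul]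
    refine Finset.sum_congr rfl fun j _ => ?_
    rw [Matrix.mul_diagonal]
    ring
  rw [Finset.sum_congr rfl (fun x _ => this x), Finset.sum_comm, Matrix.mul_apply]
  refine Finset.sum_congr rfl fun j _ => ?_
  rw [← Finset.mul_sum, ← Finset.sum_mul, Matrix.hadamard_apply, Matrix.mul_apply]
  simp only [Xm_apply, G.dist_comm (u := j)]

lemma aw_mat [Fintype V] (G : SimpleGraph V) (c a d : ℕ → ℝ) (q bt γ ρ ω η : ℝ)
    (hX : ∀ f, Am G * Xm G f = Xm G (Lop c a d f))
    (haw : ∀ f i, Lop c a d (Lop c a d (fun j => q^j * f j)) i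
      - bt * Lop c a d (fun j => q^j * Lop c a d f j) i
      + q^i * Lop c a d (Lop c a d f) i
      - γ * (Lop c a d (fun j => q^j * f j) i + q^i * Lop c a d f i) - ρ * (q^i * f i)
    = ω * Lop c a d f i + η * f i) (f : ℕ → ℝ) :
    Am G * (Am G * (Xm G (fun j => q^j) ⊙ Xm G f))
      - bt • (Am G * (Xm G (fun j => q^j) ⊙ (Am G * Xm G f)))
      + Xm G (fun j => q^j) ⊙ (Am G * (Am G * Xm G f))
      - γ • (Am G * (Xm G (fun j => q^j) ⊙ Xm G f) + Xm G (fun j => q^j) ⊙ (Am G * Xm G f))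
      - ρ • (Xm G (fun j => q^j) ⊙ Xm G f)
     = ω • (Am G * Xm G f) + η • Xm G f := by
  simp only [hX, Xm_hadamard]
  ext y z
  have := haw f (G.dist y z)
  simp [Xm_apply]
  linear_combination this

noncomputable def Km [Fintype V] (G : SimpleGraph V) (q bt γ ρ : ℝ) (x : V) : Matrix V V ℝ :=
  Am G * Am G * Sm G q x - bt • (Am G * Sm G q x * Am G) + Sm G q x * Am G * Am G
    - γ • (Am G * Sm G q x + Sm G q x * Am G) - ρ • Sm G q x

open Classical in
lemma K_sum [Fintype V] (G : SimpleGraph V) (c a d : ℕ → ℝ) (q bt γ ρ ω η e e' : ℝ)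
    (hX : ∀ f, Am G * Xm G f = Xm G (Lop c a d f))
    (haw : ∀ f i, Lop c a d (Lop c a d (fun j => q^j * f j)) i
      - bt * Lop c a d (fun j => q^j * Lop c a d f j) i
      + q^i * Lop c a d (Lop c a d f) i
      - γ * (Lop c a d (fun j => q^j * f j) i + q^i * Lop c a d f i) - ρ * (q^i * f i)
    = ω * Lop c a d f i + η * f i)
    (hQ : Xm G (fun j => q^j) * Xm G (fun j => q^j)
      = e • Xm G (fun j => q^j) + e' • Xm G (fun _ => 1)) (f : ℕ → ℝ) (Y : Matrix V V ℝ) :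
    ∑ x, (Y * Km G q bt γ ρ x * Xm G f * Sm G q x).trace =
      (Y * ((e • (ω • Am G + η • 1) + e' • ((2 - bt) • (Am G * Am G) - (2 * γ) • Am G - ρ • 1))
        * Xm G f)).trace := by
  have hh : ∀ Y2 : Matrix V V ℝ, (Xm G (fun j => q^j) * Xm G (fun j => q^j)) ⊙ Y2
      = e • (Xm G (fun j => q^j) ⊙ Y2) + e' • Y2 := by
    intro Y2
    rw [hQ]
    ext y z
    simp [Xm_apply]
    ring
  set A := Am G with hA
  set F := Xm G f with hF
  set Q := Xm G (fun j => q^j) with hQdef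
  have e1 := tr_sum G q (Y * A * A) F
  have e2 := tr_sum G q (Y * A) (A * F)
  have e3 := tr_sum G q Y (A * (A * F))
  have e4 := tr_sum G q (Y * A) F
  have e5 := tr_sum G q Y (A * F)
  have e6 := tr_sum G q Y F
  rw [← hQdef, hh] at e1 e2 e3 e4 e5 e6
  have main := aw_mat G c a d q bt γ ρ ω η hX haw f
  rw [← hA, ← hF, ← hQdef] at main
  have hx : ∀ x, (Y * Km G q bt γ ρ x * F * Sm G q x).trace =
      (Y * A * A * Sm G q x * F * Sm G q x).trace
      - bt * (Y * A * Sm G q x * (A * F) * Sm G q x).trace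
      + (Y * Sm G q x * (A * (A * F)) * Sm G q x).trace
      - γ * ((Y * A * Sm G q x * F * Sm G q x).trace + (Y * Sm G q x * (A * F) * Sm G q x).trace)
      - ρ * (Y * Sm G q x * F * Sm G q x).trace := by
    intro x
    rw [Km, ← hA]
    simp only [Matrix.mul_add, Matrix.mul_sub, Matrix.add_mul, Matrix.sub_mul, Matrix.mul_smul,
      Matrix.smul_mul, Matrix.trace_add, Matrix.trace_sub, Matrix.trace_smul, smul_eq_mul,
      Matrix.mul_assoc]
  rw [Finset.sum_congr rfl (fun x _ => hx x)]
  simp only [Finset.sum_sub_distrib, Finset.sum_add_distrib, ← Finset.mul_sum]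
  rw [e1, e2, e3, e4, e5, e6]
  have m2 := congrArg (fun M => (Y * M).trace) main
  simp only [Matrix.mul_add, Matrix.mul_sub, Matrix.add_mul, Matrix.sub_mul, Matrix.mul_smul,
      Matrix.smul_mul, Matrix.trace_add, Matrix.trace_sub, Matrix.trace_smul, smul_eq_mul,
      Matrix.mul_assoc, Matrix.one_mul] at m2 ⊢
  linear_combination e * m2

open Classical in
lemma R_zero [Fintype V] (G : SimpleGraph V) (c a d : ℕ → ℝ) (q bt γ ρ ω η e e' : ℝ)
    (hX : ∀ f, Am G * Xm G f = Xm G (Lop c a d f)) (hI : (1 : Matrix V V ℝ) = Xm G (fun i => if i = 0 then 1 else 0))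
    (haw : ∀ f i, Lop c a d (Lop c a d (fun j => q^j * f j)) i
      - bt * Lop c a d (fun j => q^j * Lop c a d f j) i
      + q^i * Lop c a d (Lop c a d f) i
      - γ * (Lop c a d (fun j => q^j * f j) i + q^i * Lop c a d f i) - ρ * (q^i * f i)
    = ω * Lop c a d f i + η * f i)
    (hQ : Xm G (fun j => q^j) * Xm G (fun j => q^j)
      = e • Xm G (fun j => q^j) + e' • Xm G (fun _ => 1)) (x : V) :
    Am G * Km G q bt γ ρ x = Km G q bt γ ρ x * Am G := by
  set R : V → Matrix V V ℝ := fun x => Am G * Km G q bt γ ρ x - Km G q bt γ ρ x * Am G with hR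
  have key : ∀ (f : ℕ → ℝ) (Y : Matrix V V ℝ), ∑ x, (Y * R x * Xm G f * Sm G q x).trace = 0 := by
    intro f Y
    have k1 := K_sum G c a d q bt γ ρ ω η e e' hX haw hQ f (Y * Am G)
    have k2 := K_sum G c a d q bt γ ρ ω η e e' hX haw hQ (Lop c a d f) Y
    rw [← hX] at k2
    have : ∀ x, (Y * R x * Xm G f * Sm G q x).trace =
      (Y * Am G * Km G q bt γ ρ x * Xm G f * Sm G q x).trace
        - (Y * Km G q bt γ ρ x * (Am G * Xm G f) * Sm G q x).trace := by
      intro x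
      simp only [hR, Matrix.mul_sub, Matrix.sub_mul, Matrix.trace_sub, Matrix.mul_assoc]
    rw [Finset.sum_congr rfl (fun x _ => this x), Finset.sum_sub_distrib, k1, k2]
    simp only [Matrix.mul_add, Matrix.mul_sub, Matrix.add_mul, Matrix.sub_mul, Matrix.mul_smul,
      Matrix.smul_mul, Matrix.trace_add, Matrix.trace_sub, Matrix.trace_smul, smul_eq_mul,
      Matrix.mul_assoc, Matrix.one_mul]
    ring
  have hST : ∀ x, (Sm G q x)ᵀ = Sm G q x := fun x => by simp [Sm]
  have hAT : (Am G)ᵀ = Am G := Xm_transpose G _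
  have hKT : ∀ x, (Km G q bt γ ρ x)ᵀ = Km G q bt γ ρ x := by
    intro x
    simp only [Km, Matrix.transpose_add, Matrix.transpose_sub, Matrix.transpose_smul,
      Matrix.transpose_mul, hST, hAT, Matrix.mul_assoc]
    rw [add_comm (Sm G q x * Am G) (Am G * Sm G q x)]
    abel
  have hRT : ∀ x, (R x)ᵀ = Km G q bt γ ρ x * Am G - Am G * Km G q bt γ ρ x := by
    intro x
    simp only [hR, Matrix.transpose_sub, Matrix.transpose_mul, hKT, hAT]
  have pw : ∀ (m : ℕ), ∃ f, (Am G)^m = Xm G f := by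
    intro m
    induction m with
    | zero => exact ⟨_, by rw [pow_zero]; exact hI⟩
    | succ m ih => obtain ⟨f, hf⟩ := ih; exact ⟨_, by rw [pow_succ', hf, hX]⟩
  have key2 : ∀ (m : ℕ) (Y : Matrix V V ℝ), ∑ x, (R x * ((Am G)^m * Sm G q x * Y)).trace = 0 := by
    intro m Y
    obtain ⟨f, hf⟩ := pw m
    rw [hf, ← key f Y]
    refine Finset.sum_congr rfl fun x _ => ?_
    rw [← Matrix.mul_assoc, Matrix.trace_mul_comm]
    simp only [Matrix.mul_assoc]
  have hRR : ∑ x, (R x * (R x)ᵀ).trace = 0 := by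
    set A := Am G with hA
    have : ∀ x, (R x * (R x)ᵀ).trace =
      (R x * (A^2 * Sm G q x * A)).trace - bt * (R x * (A^1 * Sm G q x * (A*A))).trace
      + (R x * (A^0 * Sm G q x * (A * A * A))).trace
      - γ * ((R x * (A^1 * Sm G q x * A)).trace + (R x * (A^0 * Sm G q x * (A * A))).trace)
      - ρ * (R x * (A^0 * Sm G q x * A)).trace
      - ((R x * (A^3 * Sm G q x * 1)).trace - bt * (R x * (A^2 * Sm G q x * A)).trace
      + (R x * (A^1 * Sm G q x * (A * A))).trace
      - γ * ((R x * (A^2 * Sm G q x * 1)).trace + (R x * (A^1 * Sm G q x * A)).trace)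
      - ρ * (R x * (A^1 * Sm G q x * 1)).trace) := by
      intro x
      rw [hRT, Km, ← hA]
      simp only [Matrix.mul_add, Matrix.mul_sub, Matrix.add_mul, Matrix.sub_mul, Matrix.mul_smul,
        Matrix.smul_mul, Matrix.trace_add, Matrix.trace_sub, Matrix.trace_smul, smul_eq_mul,
        Matrix.mul_assoc, Matrix.one_mul, Matrix.mul_one, pow_succ, pow_zero]
    rw [Finset.sum_congr rfl (fun x _ => this x)]
    simp only [Finset.sum_sub_distrib, Finset.sum_add_distrib, ← Finset.mul_sum, key2]
    simp
  have hnn : ∀ x ∈ Finset.univ, 0 ≤ (R x * (R x)ᵀ).trace := by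
    intro x _
    simp only [Matrix.trace, Matrix.diag_apply, Matrix.mul_apply, Matrix.transpose_apply]
    exact Finset.sum_nonneg fun i _ => Finset.sum_nonneg fun j _ => mul_self_nonneg _
  have h0 := (Finset.sum_eq_zero_iff_of_nonneg hnn).mp hRR x (Finset.mem_univ x)
  have hR0 : R x = 0 := by
    simp only [Matrix.trace, Matrix.diag_apply, Matrix.mul_apply, Matrix.transpose_apply] at h0
    ext i j
    have h1 := (Finset.sum_eq_zero_iff_of_nonneg (fun i _ => Finset.sum_nonneg fun j _ => mul_self_nonneg _)).mp h0 i (Finset.mem_univ i)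
    have h2 := (Finset.sum_eq_zero_iff_of_nonneg (fun j _ => mul_self_nonneg _)).mp h1 j (Finset.mem_univ j)
    simpa using h2
  exact sub_eq_zero.mp hR0

lemma bal_alg {M : Type*} [Ring M] [Algebra ℝ M] (A S : M) (bt γ ρ : ℝ)
    (h : A * (A * A * S - bt • (A * S * A) + S * A * A - γ • (A * S + S * A) - ρ • S)
      = (A * A * S - bt • (A * S * A) + S * A * A - γ • (A * S + S * A) - ρ • S) * A) :
    ((bt + 1) • (A*A*S*A - A*S*A*A) = (A*A*A*S - S*A*A*A) - γ • (A*A*S - S*A*A) - ρ • (A*S-S*A)) ∧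
    ((bt * (bt + 1)) • (A*A*A*S*A - A*S*A*A*A) = (bt + 1) • ((A*A*A*A*S - S*A*A*A*A)
      - γ • (A*A*A*S - S*A*A*A) - ρ • (A*A*S-S*A*A)) - γ • ((A*A*A*S - S*A*A*A) - γ • (A*A*S - S*A*A) - ρ • (A*S-S*A))) := by
  have h1 : (bt + 1) • (A*A*S*A - A*S*A*A) = (A*A*A*S - S*A*A*A) - γ • (A*A*S - S*A*A) - ρ • (A*S-S*A) := by
    simp only [mul_add, mul_sub, add_mul, sub_mul, mul_smul_comm, smul_mul_assoc, ← mul_assoc, smul_sub, smul_add, add_smul, one_smul] at h ⊢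
    rw [← sub_eq_zero] at h ⊢
    rw [← neg_eq_zero, ← h]
    abel
  refine ⟨h1, ?_⟩
  have hU : bt • (A*A*A*S*A - A*S*A*A*A) = (A*A*A*A*S - S*A*A*A*A) - γ • (A*A*A*S - S*A*A*A)
      - γ • (A*A*S*A - A*S*A*A) - ρ • (A*A*S - S*A*A) := by
    have h2 := congrArg (fun W => A * W + W * A) h1
    simp only [mul_sub, sub_mul, mul_smul_comm, smul_mul_assoc, ← mul_assoc] at h2
    linear_combination (norm := module) h2
  linear_combination (norm := module) (bt + 1) • hU - γ • h1

end mats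

section graph
open Matrix

noncomputable def Sg [Fintype V] (G : SimpleGraph V) (F : V → ℝ) (y z : V) (j : ℕ) : ℝ :=
  ∑ w ∈ Finset.univ.filter (fun w => G.dist z w = 1 ∧ G.dist y w = j), F w

lemma split_sum [Fintype V] (G : SimpleGraph V) (hconn : G.Connected) (f : ℕ → ℝ) (F : V → ℝ)
    (y z : V) (n : ℕ) (hn : G.dist y z = n + 1) :
    ∑ w, (if G.dist z w = 1 then f (G.dist y w) * F w else 0)
      = f n * Sg G F y z n + f (n+1) * Sg G F y z (n+1) + f (n+2) * Sg G F y z (n+2) := by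
  simp only [Sg, Finset.sum_filter, Finset.mul_sum, ← Finset.sum_add_distrib]
  refine Finset.sum_congr rfl fun w _ => ?_
  by_cases h : G.dist z w = 1
  · have h1 := hconn.dist_triangle (u := y) (v := z) (w := w)
    have h2 := hconn.dist_triangle (u := y) (v := w) (w := z)
    rw [G.dist_comm (u := w)] at h2
    have : G.dist y w = n ∨ G.dist y w = n + 1 ∨ G.dist y w = n + 2 := by omega
    rcases this with h3 | h3 | h3 <;> simp [h, h3]
  · simp [h]

lemma AmXm_apply [Fintype V] (G : SimpleGraph V) (f : ℕ → ℝ) (y z : V) :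
    (Am G * Xm G f) y z = ∑ w, (if G.dist y w = 1 then f (G.dist z w) * 1 else 0) := by
  rw [Matrix.mul_apply]
  refine Finset.sum_congr rfl fun w _ => ?_
  simp only [Am, Xm_apply, G.dist_comm (u := w) (v := z)]
  split_ifs <;> simp

lemma XSA_apply [Fintype V] (G : SimpleGraph V) (f : ℕ → ℝ) (q : ℝ) (x y z : V) :
    (Xm G f * Sm G q x * Am G) y z
      = ∑ w, (if G.dist z w = 1 then f (G.dist y w) * q ^ G.dist x w else 0) := by
  classical
  rw [Matrix.mul_apply]
  refine Finset.sum_congr rfl fun w _ => ?_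
  rw [Sm, Matrix.mul_diagonal]
  simp only [Am, Xm_apply, G.dist_comm (u := w) (v := z)]
  split_ifs <;> simp

lemma ASX_apply [Fintype V] (G : SimpleGraph V) (f : ℕ → ℝ) (q : ℝ) (x y z : V) :
    (Am G * Sm G q x * Xm G f) y z
      = ∑ w, (if G.dist y w = 1 then f (G.dist z w) * q ^ G.dist x w else 0) := by
  classical
  rw [Matrix.mul_apply]
  refine Finset.sum_congr rfl fun w _ => ?_
  rw [Sm, Matrix.mul_diagonal]
  simp only [Am, Xm_apply, G.dist_comm (u := w) (v := z)]
  split_ifs <;> simp [mul_comm]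

lemma SX_apply [Fintype V] (G : SimpleGraph V) (f : ℕ → ℝ) (q : ℝ) (x y z : V) :
    (Xm G f * Sm G q x - Sm G q x * Xm G f) y z
      = f (G.dist y z) * (q ^ G.dist x z - q ^ G.dist x y) := by
  classical
  rw [Matrix.sub_apply, Sm, Matrix.mul_diagonal, Matrix.diagonal_mul]
  simp only [Xm_apply]
  ring

lemma bal_exist [Fintype V] (G : SimpleGraph V) (hconn : G.Connected) (c a d : ℕ → ℝ)
    (q bt γ ρ : ℝ) (hbt : bt ≠ 0) (hbt1 : bt + 1 ≠ 0) (hc1 : a 1 = 0)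
    (hc2 : c 2 ≠ 0) (hc3 : c 3 ≠ 0)
    (hX : ∀ f, Am G * Xm G f = Xm G (Lop c a d f))
    (hK : ∀ x, Am G * Km G q bt γ ρ x = Km G q bt γ ρ x * Am G) (j : ℕ) (hj : j = 2 ∨ j = 3) :
    ∃ r : ℝ, ∀ x y z, G.dist y z = j →
      Sg G (fun w => q ^ G.dist x w) y z j - Sg G (fun w => q ^ G.dist x w) z y j
        = r * (q ^ G.dist x z - q ^ G.dist x y) := by
  classical
  obtain ⟨f1, hf1⟩ : ∃ f : ℕ → ℝ, f = (fun i => if i = 1 then 1 else 0) := ⟨_, rfl⟩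
  have hA1 : Am G = Xm G f1 := by rw [hf1]; rfl
  set f2 := Lop c a d f1 with hf2
  set f3 := Lop c a d f2 with hf3
  set f4 := Lop c a d f3 with hf4
  have hA2 : Am G * Am G = Xm G f2 := by nth_rewrite 2 [hA1]; exact hX _
  have hA3 : Am G * Am G * Am G = Xm G f3 := by rw [mul_assoc, hA2]; exact hX _
  have hA4 : Am G * Am G * Am G * Am G = Xm G f4 := by
    rw [mul_assoc (Am G * Am G), mul_assoc (Am G), ← mul_assoc (Am G) (Am G) (Am G), hA3]; exact hX _
  have v21 : f2 1 = 0 := by simp [hf2, Lop, hf1, hc1]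
  have v22 : f2 2 = c 2 := by simp [hf2, Lop, hf1]
  have v23 : f2 3 = 0 := by simp [hf2, Lop, hf1]
  have v24 : f2 4 = 0 := by simp [hf2, Lop, hf1]
  have v25 : f2 5 = 0 := by simp [hf2, Lop, hf1]
  have v32 : f3 2 = a 2 * c 2 := by simp [hf3, Lop, v21, v22, v23]
  have v33 : f3 3 = c 3 * c 2 := by simp [hf3, Lop, v22, v23, v24]
  have v34 : f3 4 = 0 := by simp [hf3, Lop, v23, v24, v25]
  have S1 : ∀ x y z, (Am G * Sm G q x - Sm G q x * Am G) y z
      = f1 (G.dist y z) * (q ^ G.dist x z - q ^ G.dist x y) := by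
    intro x y z; rw [hA1]; exact SX_apply _ _ _ _ _ _
  have S2 : ∀ x y z, (Am G * Am G * Sm G q x - Sm G q x * Am G * Am G) y z
      = f2 (G.dist y z) * (q ^ G.dist x z - q ^ G.dist x y) := by
    intro x y z; rw [mul_assoc (Sm G q x), hA2]; exact SX_apply _ _ _ _ _ _
  have S3 : ∀ x y z, (Am G * Am G * Am G * Sm G q x - Sm G q x * Am G * Am G * Am G) y z
      = f3 (G.dist y z) * (q ^ G.dist x z - q ^ G.dist x y) := by
    intro x y z
    rw [mul_assoc (Sm G q x), mul_assoc (Sm G q x), hA3]; exact SX_apply _ _ _ _ _ _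
  have S4 : ∀ x y z, (Am G * Am G * Am G * Am G * Sm G q x
      - Sm G q x * Am G * Am G * Am G * Am G) y z
      = f4 (G.dist y z) * (q ^ G.dist x z - q ^ G.dist x y) := by
    intro x y z
    rw [mul_assoc (Sm G q x), mul_assoc (Sm G q x), mul_assoc (Sm G q x), hA4]
    exact SX_apply _ _ _ _ _ _
  have W2 : ∀ x y z, (Am G * Am G * Sm G q x * Am G - Am G * Sm G q x * Am G * Am G) y z
      = ∑ w, (if G.dist z w = 1 then f2 (G.dist y w) * q ^ G.dist x w else 0)
        - ∑ w, (if G.dist y w = 1 then f2 (G.dist z w) * q ^ G.dist x w else 0) := by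
    intro x y z
    rw [mul_assoc (Am G * Sm G q x), hA2, Matrix.sub_apply, XSA_apply, ASX_apply]
  have W3 : ∀ x y z, (Am G * Am G * Am G * Sm G q x * Am G
      - Am G * Sm G q x * Am G * Am G * Am G) y z
      = ∑ w, (if G.dist z w = 1 then f3 (G.dist y w) * q ^ G.dist x w else 0)
        - ∑ w, (if G.dist y w = 1 then f3 (G.dist z w) * q ^ G.dist x w else 0) := by
    intro x y z
    rw [mul_assoc (Am G * Sm G q x), mul_assoc (Am G * Sm G q x), hA3, Matrix.sub_apply, XSA_apply,
      ASX_apply]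
  have B2 : ∀ x y z, (bt + 1) * (∑ w, (if G.dist z w = 1 then f2 (G.dist y w) * q ^ G.dist x w else 0)
        - ∑ w, (if G.dist y w = 1 then f2 (G.dist z w) * q ^ G.dist x w else 0))
      = (f3 (G.dist y z) - γ * f2 (G.dist y z) - ρ * f1 (G.dist y z))
        * (q ^ G.dist x z - q ^ G.dist x y) := by
    intro x y z
    have h := (bal_alg (Am G) (Sm G q x) bt γ ρ (hK x)).1
    have h' := congrFun (congrFun h y) z
    simp only [Matrix.smul_apply, Matrix.sub_apply (_ - _), W2, S1, S2, S3, smul_eq_mul] at h'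
    linear_combination h'
  have B3 : ∀ x y z, (bt * (bt + 1)) * (∑ w, (if G.dist z w = 1 then f3 (G.dist y w) * q ^ G.dist x w else 0)
        - ∑ w, (if G.dist y w = 1 then f3 (G.dist z w) * q ^ G.dist x w else 0))
      = ((bt + 1) * (f4 (G.dist y z) - γ * f3 (G.dist y z) - ρ * f2 (G.dist y z))
        - γ * (f3 (G.dist y z) - γ * f2 (G.dist y z) - ρ * f1 (G.dist y z)))
        * (q ^ G.dist x z - q ^ G.dist x y) := by
    intro x y z
    have h := (bal_alg (Am G) (Sm G q x) bt γ ρ (hK x)).2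
    have h' := congrFun (congrFun h y) z
    simp only [Matrix.smul_apply, Matrix.sub_apply (_ - _), Matrix.sub_apply (_ • (_ : Matrix V V ℝ)), W3, S1, S2, S3, S4, smul_eq_mul] at h'
    linear_combination h'
  rcases hj with rfl | rfl
  · refine ⟨(f3 2 - γ * f2 2 - ρ * f1 2) / ((bt + 1) * c 2), fun x y z h => ?_⟩
    have h2 := B2 x y z
    rw [split_sum G hconn _ _ _ _ 1 h, split_sum G hconn _ _ _ _ 1 (by rw [G.dist_comm, h]), h] at h2
    simp only [Nat.reduceAdd, v21, v22, v23] at h2 ⊢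
    rw [div_mul_eq_mul_div, eq_div_iff (by positivity)]
    linear_combination h2
  · refine ⟨(((bt + 1) * (f4 3 - γ * f3 3 - ρ * f2 3) - γ * (f3 3 - γ * f2 3 - ρ * f1 3))
      - bt * a 2 * (f3 3 - γ * f2 3 - ρ * f1 3)) / (bt * (bt + 1) * c 2 * c 3), fun x y z h => ?_⟩
    have h2 := B2 x y z
    have h3 := B3 x y z
    rw [split_sum G hconn _ _ _ _ 2 h, split_sum G hconn _ _ _ _ 2 (by rw [G.dist_comm, h]), h] at h2 h3
    simp only [Nat.reduceAdd, v22, v23, v24, v32, v33, v34] at h2 h3 ⊢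
    rw [div_mul_eq_mul_div, eq_div_iff (by positivity)]
    linear_combination h3 - bt * a 2 * h2

end graph

lemma b_lt (b α : ℝ) (n2 n3 n4 m : ℕ) (h2 : 1 ≤ n2) (h4 : 1 ≤ n4) (hm : 1 ≤ m)
    (e2 : (n2 : ℝ) = (1 + b) * (1 + α)) (e3 : (n3 : ℝ) = (1 + b + b^2) * (1 + α * (1 + b)))
    (e4 : (n4 : ℝ) = (1 + b + b^2 + b^3) * (1 + α * (1 + b + b^2)))
    (em : (m : ℝ) = -α * (1 + b)^2) (hb : b ≠ -1) : b < -1 := by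
  by_contra hcon
  obtain ⟨y, hy⟩ : ∃ y, y = 1 + b := ⟨_, rfl⟩
  have hy0 : 0 < y := by
    rcases lt_or_eq_of_le (not_lt.mp hcon) with h | h
    · linarith
    · exact absurd h.symm hb
  obtain rfl : b = y - 1 := by linarith
  have h4' : (1 : ℝ) ≤ n4 := by exact_mod_cast h4
  have hm' : (1 : ℝ) ≤ m := by exact_mod_cast hm
  have h2' : (1 : ℝ) ≤ n2 := by exact_mod_cast h2
  have e4' : (n4 : ℝ) = (y * (1 + (y-1)^2)) * (1 + α * (y^2 - y + 1)) := by rw [e4]; ring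
  have hpos : 0 < 1 + α * (y^2 - y + 1) := by
    by_contra hh
    have : (y * (1 + (y-1)^2)) * (1 + α * (y^2 - y + 1)) ≤ 0 :=
      mul_nonpos_of_nonneg_of_nonpos (by positivity) (not_lt.mp hh)
    linarith
  have em' : (m : ℝ) = -α * y^2 := by rw [em]; ring
  have hlt : 0 < y^2 - m * (y^2 - y + 1) := by
    have := mul_pos (pow_pos hy0 2) hpos
    rw [em']; nlinarith
  have hm1 : m = 1 := by
    by_contra hne
    have h2m : 2 ≤ m := by omega
    have : (2 : ℝ) ≤ m := by exact_mod_cast h2m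
    nlinarith [sq_nonneg (y - 1), mul_le_mul_of_nonneg_right this (show 0 ≤ y^2 - y + 1 by nlinarith [sq_nonneg (y-1)])]
  subst hm1
  have hα : α * y^2 = -1 := by push_cast at em'; linarith
  have q2 : y^2 = n2 * y + 1 := by rw [e2]; linear_combination -hα
  have hyne := hy0.ne'
  have q3 : (n3 : ℝ) = (n2 - 3) * y + 3 + n2 := by
    apply mul_right_cancel₀ hyne
    have : (n3 : ℝ) * y = (y^2 - y + 1) * (y - 1) := by
      rw [e3]; linear_combination (y^2 - y + 1) * hα
    rw [this]; linear_combination (y + 1) * q2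
  have q4 : (n4 : ℝ) = (n2 - 5) * y + 5 + 2 * n2 := by
    apply mul_right_cancel₀ hyne
    have : (n4 : ℝ) * y = (1 + (y-1)^2) * (y - 1) := by
      rw [e4']; linear_combination (1 + (y-1)^2) * (y^2 - y + 1) * hα
    rw [this]; linear_combination (y + 2) * q2
  obtain ⟨M, hM⟩ : ∃ M : ℤ, M = (n3 : ℤ) - n4 + 2 + n2 := ⟨_, rfl⟩
  have hMy : (M : ℝ) = 2 * y := by
    rw [hM]; push_cast; rw [q3, q4]; ring
  have hM2 : M * M = 2 * n2 * M + 4 := by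
    have : (M : ℝ) * M = 2 * n2 * M + 4 := by rw [hMy]; linear_combination 4 * q2
    exact_mod_cast this
  have hMpos : 0 < M := by
    have : (0 : ℝ) < M := by rw [hMy]; linarith
    exact_mod_cast this
  have hev : Even (M * M) := ⟨n2 * M + 2, by rw [hM2]; ring⟩
  have hev' : Even M := by
    rcases Int.even_mul.mp hev with h | h <;> exact h
  obtain ⟨l, hl⟩ := hev'
  have hl2 : l * (l - n2) = 1 := by
    rw [hl] at hM2
    nlinarith
  have hl1 : l = 1 := by
    rcases Int.eq_one_or_neg_one_of_mul_eq_one hl2 with h | h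
    · exact h
    · omega
  rw [hl1] at hl2
  omega

lemma exists_pred (G : SimpleGraph V) (hconn : G.Connected) (x y : V) (n : ℕ)
    (h : G.dist x y = n + 1) : ∃ w, G.dist x w = n ∧ G.dist w y = 1 := by
  obtain ⟨p, hp⟩ := (hconn y x).exists_walk_length_eq_dist
  rw [G.dist_comm, h] at hp
  cases p with
  | nil => simp at hp
  | cons hadj p' =>
    rename_i w
    have h1 : G.dist y w = 1 := SimpleGraph.dist_eq_one_iff_adj.mpr hadj
    simp at hp
    have h2 := SimpleGraph.dist_le p'
    have h3 := hconn.dist_triangle (u := x) (v := w) (w := y)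
    rw [G.dist_comm] at h1 h2
    exact ⟨w, by omega, h1⟩

lemma exists_dist (G : SimpleGraph V) (hconn : G.Connected) (D : ℕ)
    (hdiam : ∃ x y : V, G.dist x y = D) (i : ℕ) (hi : i ≤ D) : ∃ x y : V, G.dist x y = i := by
  induction hi using Nat.decreasingInduction with
  | self => exact hdiam
  | of_succ k hk ih =>
    obtain ⟨x, y, h⟩ := ih
    obtain ⟨w, hw, _⟩ := exists_pred G hconn x y k h
    exact ⟨x, w, hw⟩

lemma card_filter [Fintype V] (G : SimpleGraph V) (D : ℕ) (p : ℕ → ℕ → ℕ → ℕ)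
    (hdr : G.IsDistRegularWith D p) (h i j : ℕ) (hh : h ≤ D) (hi : i ≤ D) (hj : j ≤ D) (x y : V)
    (hxy : G.dist x y = h) :
    (Finset.univ.filter (fun z => G.dist x z = i ∧ G.dist y z = j)).card = p h i j := by
  rw [← hdr h i j hh hi hj x y hxy, ← Set.ncard_coe_finset]
  congr 1
  ext z
  simp

lemma Sg_const [Fintype V] (G : SimpleGraph V) (D : ℕ) (p : ℕ → ℕ → ℕ → ℕ)
    (hdr : G.IsDistRegularWith D p) (h j : ℕ) (hh : h ≤ D) (hi : 1 ≤ D) (hj : j ≤ D) (F : V → ℝ) (e : ℝ)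
    (y z : V) (hF : ∀ w, G.dist z w = 1 → G.dist y w = j → F w = e)
    (hyz : G.dist z y = h) : Sg G F y z j = p h 1 j * e := by
  rw [Sg, Finset.sum_congr rfl (g := fun _ => e)]
  · rw [Finset.sum_const, card_filter G D p hdr h 1 j hh hi hj z y hyz, nsmul_eq_mul]
  · intro w hw
    simp only [Finset.mem_filter, Finset.mem_univ, true_and] at hw
    exact hF w hw.1 hw.2

lemma prod_closed [Fintype V] (G : SimpleGraph V) (D : ℕ) (p : ℕ → ℕ → ℕ → ℕ)
    (hdr : G.IsDistRegularWith D p) (hD : ∀ x y, G.dist x y ≤ D) (f h : ℕ → ℝ) :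
    ∃ ψ, Xm G f * Xm G h = Xm G ψ := by
  refine ⟨fun l => ∑ i ∈ Finset.range (D+1), ∑ j ∈ Finset.range (D+1), p l i j * (f i * h j), ?_⟩
  ext y z
  rw [Matrix.mul_apply]
  simp only [Xm_apply]
  have : ∀ i ∈ Finset.range (D+1), ∀ j ∈ Finset.range (D+1), (p (G.dist y z) i j : ℝ) * (f i * h j)
      = ∑ w, if G.dist y w = i ∧ G.dist z w = j then f i * h j else 0 := by
    intro i hi j hj
    rw [← card_filter G D p hdr (G.dist y z) i j (hD _ _) (by simp at hi; omega)
      (by simp at hj; omega) y z rfl, ← Finset.sum_filter, Finset.sum_const, nsmul_eq_mul]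
  rw [Finset.sum_congr rfl (fun i hi => Finset.sum_congr rfl (fun j hj => this i hi j hj))]
  rw [Finset.sum_congr rfl (fun i _ => Finset.sum_comm), Finset.sum_comm]
  refine Finset.sum_congr rfl fun w _ => ?_
  rw [Finset.sum_eq_single (G.dist y w), Finset.sum_eq_single (G.dist z w)]
  · simp [G.dist_comm (u := w)]
  · intro j _ hj; simp [Ne.symm hj]
  · intro hh; exact absurd (Finset.mem_range.mpr (Nat.lt_succ_of_le (hD z w))) hh
  · intro i _ hi; simp [Ne.symm hi]
  · intro hh; exact absurd (Finset.mem_range.mpr (Nat.lt_succ_of_le (hD y w))) hh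

lemma Q_sq [Fintype V] (G : SimpleGraph V) (D : ℕ) (hD : ∀ x y, G.dist x y ≤ D)
    (hex : ∀ i ≤ D, ∃ x y : V, G.dist x y = i)
    (hprod : ∀ f h, ∃ ψ, Xm G f * Xm G h = Xm G ψ) (c a d : ℕ → ℝ) (hc0 : c 0 = 0)
    (hX : ∀ f, Am G * Xm G f = Xm G (Lop c a d f)) (k q θ κ : ℝ) (hk : ∀ i, c i + a i + d i = k)
    (hd : ∀ i < D, d i ≠ 0)
    (hT : ∀ i, c i * q^(i-1) + a i * q^i + d i * q^(i+1) = θ * q^i + κ) (hΔ : k - θ - κ ≠ 0) :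
    ∃ e e' : ℝ, Xm G (fun j => q^j) * Xm G (fun j => q^j)
      = e • Xm G (fun j => q^j) + e' • Xm G (fun _ => 1) := by
  obtain ⟨ψ, hψ⟩ := hprod (fun j => q^j) (fun j => q^j)
  obtain ⟨χ, hχ⟩ := hprod (fun _ => 1) (fun j => q^j)
  have hχc : ∀ i ≤ D, χ i = χ 0 := by
    intro i hi
    obtain ⟨x, y, hxy⟩ := hex i hi
    have h1 := congrFun (congrFun hχ x) y
    have h2 := congrFun (congrFun hχ y) y
    rw [Matrix.mul_apply] at h1 h2
    simp only [Xm_apply, hxy, SimpleGraph.dist_self] at h1 h2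
    rw [← h1, ← h2]
  have hAQ : Am G * Xm G (fun j => q^j) = θ • Xm G (fun j => q^j) + κ • Xm G (fun _ => 1) := by
    rw [hX]
    ext y z
    have := hT (G.dist y z)
    simp [Xm_apply, Lop]
    linarith
  have hL : ∀ i ≤ D, c i * ψ (i-1) + a i * ψ i + d i * ψ (i+1) = θ * ψ i + κ * χ 0 := by
    intro i hi
    obtain ⟨x, y, hxy⟩ := hex i hi
    have h1 : Am G * Xm G ψ = θ • Xm G ψ + κ • Xm G χ := by
      rw [← hψ, ← Matrix.mul_assoc, hAQ, Matrix.add_mul, Matrix.smul_mul, Matrix.smul_mul, hχ]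
    rw [hX] at h1
    have h2 := congrFun (congrFun h1 x) y
    simp only [Xm_apply, hxy, Lop, Matrix.add_apply, Matrix.smul_apply, smul_eq_mul, hχc i hi] at h2
    exact h2
  obtain ⟨e', he'⟩ : ∃ e', e' = (κ * χ 0 - κ * ψ 0) / (k - θ - κ) := ⟨_, rfl⟩
  obtain ⟨e, he⟩ : ∃ e, e = ψ 0 - e' := ⟨_, rfl⟩
  have hκ : e * κ + e' * (k - θ) = κ * χ 0 := by
    rw [he, he']; field_simp; ring
  have hpsi : ∀ i, i ≤ D → ψ i = e * q^i + e' := by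
    intro i
    induction i using Nat.strong_induction_on with
    | _ i ih =>
      intro hi
      match i, ih, hi with
      | 0, _, _ => simp [he]
      | n+1, ih, hi =>
        have h1 := ih n (by omega) (by omega)
        have h3 := hL n (by omega)
        have h4 := hT n
        have h5 := hk n
        have hcc : c n * ψ (n-1) = c n * (e * q^(n-1) + e') := by
          rcases Nat.eq_zero_or_pos n with h0 | h0
          · subst h0; rw [hc0]; ring
          · rw [ih (n-1) (by omega) (by omega)]
        apply mul_left_cancel₀ (hd n (by omega))
        rw [hcc, h1] at h3
        linear_combination h3 - e * h4 - e' * h5 - hκ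
  refine ⟨e, e', ?_⟩
  rw [hψ]
  ext y z
  simp [Xm_apply, hpsi _ (hD y z)]

lemma tot_count [Fintype V] (G : SimpleGraph V) (D : ℕ) (hD1 : 1 ≤ D) (p : ℕ → ℕ → ℕ → ℕ)
    (hdr : G.IsDistRegularWith D p) (z : V) (e : ℝ) :
    ∑ w, (if G.dist z w = 1 then e else 0) = p 0 1 1 * e := by
  rw [← Finset.sum_filter, Finset.sum_const, nsmul_eq_mul,
    ← card_filter G D p hdr 0 1 1 (by omega) hD1 hD1 z z (by simp)]
  simp only [and_self]

lemma a_count [Fintype V] (G : SimpleGraph V) (hconn : G.Connected) (D : ℕ) (hD1 : 1 ≤ D)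
    (hdiam_le : ∀ x y : V, G.dist x y ≤ D) (p : ℕ → ℕ → ℕ → ℕ)
    (hdr : G.IsDistRegularWith D p) (c a d : ℕ → ℝ)
    (hc : ∀ i ≤ D, (p i 1 (i-1) : ℝ) = c i) (hd : ∀ i ≤ D, (p i 1 (i+1) : ℝ) = d i)
    (hdD : d D = 0) (ha : ∀ i, a i = d 0 - d i - c i) (y z : V) (n : ℕ)
    (h : G.dist y z = n + 1) :
    Sg G (fun _ => 1) y z n = c (n+1) ∧ Sg G (fun _ => 1) y z (n+1) = a (n+1) ∧
    Sg G (fun _ => 1) y z (n+2) = d (n+1) := by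
  have hn : n + 1 ≤ D := h ▸ hdiam_le y z
  have h' : G.dist z y = n + 1 := by rw [G.dist_comm, h]
  have h1 : Sg G (fun _ => 1) y z n = c (n+1) := by
    rw [Sg_const G D p hdr (n+1) n hn hD1 (by omega) (fun _ => 1) 1 y z (fun _ _ _ => rfl) h',
      ← hc (n+1) hn]
    simp
  have h3 : Sg G (fun _ => 1) y z (n+2) = d (n+1) := by
    rcases Nat.lt_or_ge (n+1) D with hlt | hge
    · rw [Sg_const G D p hdr (n+1) (n+2) hn hD1 (by omega) (fun _ => 1) 1 y z (fun _ _ _ => rfl) h',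
        ← hd (n+1) hn]
      simp
    · have : n + 1 = D := by omega
      rw [this, hdD, Sg]
      apply Finset.sum_eq_zero
      intro w hw
      simp only [Finset.mem_filter, Finset.mem_univ, true_and] at hw
      have := hdiam_le y w
      omega
  have ht := split_sum G hconn (fun _ => 1) (fun _ => 1) y z n h
  simp only [one_mul, mul_one] at ht
  rw [tot_count G D hD1 p hdr z 1, h1, h3] at ht
  have h0 := hd 0 (by omega)
  rw [zero_add] at h0
  refine ⟨h1, ?_, h3⟩
  rw [ha]; linarith

lemma hX_all [Fintype V] (G : SimpleGraph V) (hconn : G.Connected) (D : ℕ) (hD1 : 1 ≤ D)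
    (hdiam_le : ∀ x y : V, G.dist x y ≤ D) (p : ℕ → ℕ → ℕ → ℕ)
    (hdr : G.IsDistRegularWith D p) (c a d : ℕ → ℝ) (hc0 : c 0 = 0)
    (hc : ∀ i ≤ D, (p i 1 (i-1) : ℝ) = c i) (hd : ∀ i ≤ D, (p i 1 (i+1) : ℝ) = d i)
    (hdD : d D = 0) (ha : ∀ i, a i = d 0 - d i - c i) (f : ℕ → ℝ) :
    Am G * Xm G f = Xm G (Lop c a d f) := by
  ext y z
  rw [AmXm_apply, Xm_apply]
  rcases Nat.eq_zero_or_pos (G.dist y z) with h | h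
  · have hyz : y = z := (hconn.dist_eq_zero_iff).mp h
    subst hyz
    have h0 := hd 0 (by omega)
    rw [zero_add] at h0
    simp only [h, Lop, hc0, ha]
    have := tot_count G D hD1 p hdr y (f 1)
    rw [h0] at this
    simp only [zero_add, mul_one]
    rw [Finset.sum_congr rfl (g := fun w => if G.dist y w = 1 then f 1 else 0), this]
    · ring
    · intro w _
      split_ifs with hh
      · rw [hh]
      · rfl
  · obtain ⟨n, hn⟩ : ∃ n, G.dist y z = n + 1 := ⟨G.dist y z - 1, by omega⟩
    have hn' : G.dist z y = n + 1 := by rw [G.dist_comm, hn]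
    have := split_sum G hconn f (fun _ => 1) z y n hn'
    obtain ⟨e1, e2, e3⟩ := a_count G hconn D hD1 hdiam_le p hdr c a d hc hd hdD ha z y n hn'
    rw [this, hn, e1, e2, e3]
    simp only [Lop, Nat.add_sub_cancel]
    ring

lemma c_pos [Fintype V] (G : SimpleGraph V) (hconn : G.Connected) (D : ℕ) (hD1 : 1 ≤ D)
    (hdiam : ∃ x y : V, G.dist x y = D) (p : ℕ → ℕ → ℕ → ℕ)
    (hdr : G.IsDistRegularWith D p) (n : ℕ) (hn : n + 1 ≤ D) : 1 ≤ p (n+1) 1 n ∧ 1 ≤ p n 1 (n+1) := by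
  obtain ⟨x, y, h⟩ := exists_dist G hconn D hdiam (n+1) hn
  obtain ⟨w, h1, h2⟩ := exists_pred G hconn x y n h
  constructor
  · rw [← card_filter G D p hdr (n+1) 1 n hn hD1 (by omega) y x (by rw [G.dist_comm, h])]
    apply Finset.card_pos.mpr
    exact ⟨w, by simp only [Finset.mem_filter, Finset.mem_univ, true_and]; exact ⟨by rw [G.dist_comm, h2], h1⟩⟩
  · rw [← card_filter G D p hdr n 1 (n+1) (by omega) hD1 (by omega) w x (by rw [G.dist_comm, h1])]
    apply Finset.card_pos.mpr
    exact ⟨y, by simp only [Finset.mem_filter, Finset.mem_univ, true_and]; exact ⟨h2, h⟩⟩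

lemma main_bal [Fintype V] (G : SimpleGraph V) (hconn : G.Connected)
    (D : ℕ) (hD : 4 ≤ D)
    (hdiam_le : ∀ x y : V, G.dist x y ≤ D) (hdiam : ∃ x y : V, G.dist x y = D)
    (p : ℕ → ℕ → ℕ → ℕ) (hdr : G.IsDistRegularWith D p)
    (b α β : ℝ) (hcp : HasClassicalParams D p b α β)
    (ha1 : p 1 1 1 = 0) (ha2 : p 2 1 2 ≠ 0) :
    ∃ q : ℝ, -1 < q ∧ q < 0 ∧ ∀ j, j = 2 ∨ j = 3 → ∀ x y z, G.dist y z = j →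
      (q^j - 1) * (Sg G (fun w => q ^ G.dist x w) y z j - Sg G (fun w => q ^ G.dist x w) z y j)
        = p j 1 j * (q^j - q) * (q ^ G.dist x z - q ^ G.dist x y) := by
  classical
  obtain ⟨hb0, hbm, hc', hd'⟩ := hcp
  have hD1 : 1 ≤ D := by omega
  obtain ⟨c, hcdef⟩ : ∃ c : ℕ → ℝ, c = fun i => gaussBracket b i * (1 + α * gaussBracket b (i - 1)) := ⟨_, rfl⟩
  obtain ⟨d, hddef⟩ : ∃ d : ℕ → ℝ, d = fun i => (gaussBracket b D - gaussBracket b i) * (β - α * gaussBracket b i) := ⟨_, rfl⟩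
  obtain ⟨a, hadef⟩ : ∃ a : ℕ → ℝ, a = fun i => d 0 - d i - c i := ⟨_, rfl⟩
  have hc : ∀ i ≤ D, (p i 1 (i-1) : ℝ) = c i := by rw [hcdef]; exact hc'
  have hd : ∀ i ≤ D, (p i 1 (i+1) : ℝ) = d i := by rw [hddef]; exact hd'
  have ha : ∀ i, a i = d 0 - d i - c i := by rw [hadef]; exact fun i => rfl
  have hdD : d D = 0 := by rw [hddef]; simp
  have hc0 : c 0 = 0 := by rw [hcdef]; simp [gaussBracket]
  have hap : ∀ n, n + 1 ≤ D → (p (n+1) 1 (n+1) : ℝ) = a (n+1) := by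
    intro n hn
    obtain ⟨y, z, h⟩ := exists_dist G hconn D hdiam (n+1) hn
    have := (a_count G hconn D hD1 hdiam_le p hdr c a d hc hd hdD ha y z n h).2.1
    rw [← this, Sg_const G D p hdr (n+1) (n+1) hn hD1 hn (fun _ => 1) 1 y z (fun _ _ _ => rfl)
      (by rw [G.dist_comm, h])]
    simp
  have hX := hX_all G hconn D hD1 hdiam_le p hdr c a d hc0 hc hd hdD ha
  have hcne : ∀ n, n + 1 ≤ D → c (n+1) ≠ 0 := by
    intro n hn
    rw [← hc (n+1) hn, Nat.add_sub_cancel]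
    have := (c_pos G hconn D hD1 hdiam p hdr n hn).1
    exact_mod_cast (by omega : p (n+1) 1 n ≠ 0)
  have hdne : ∀ n < D, d n ≠ 0 := by
    intro n hn
    rw [← hd n (by omega)]
    have := (c_pos G hconn D hD1 hdiam p hdr n hn).2
    exact_mod_cast (by omega : p n 1 (n+1) ≠ 0)
  have g0 : gaussBracket b 0 = 0 := by simp [gaussBracket]
  have g1 : gaussBracket b 1 = 1 := by simp [gaussBracket]
  have g2 : gaussBracket b 2 = 1 + b := by simp [gaussBracket, Finset.sum_range_succ]
  have g3 : gaussBracket b 3 = 1 + b + b^2 := by simp [gaussBracket, Finset.sum_range_succ]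
  have g4 : gaussBracket b 4 = 1 + b + b^2 + b^3 := by simp [gaussBracket, Finset.sum_range_succ]
  have hA1 : a 1 = 0 := by
    rw [← hap 0 (by omega)]; simp [ha1]
  have hβ0 : β = 1 + α - α * gaussBracket b D := by
    have := hA1
    rw [ha, hddef, hcdef] at this
    simp only [g0, g1, Nat.sub_self] at this
    linarith
  have hA2 : (p 2 1 2 : ℝ) = -α * (1+b)^2 := by
    rw [hap 1 (by omega), ha, hddef, hcdef]
    simp only [show 1+1 = 2 from rfl, show 2 - 1 = 1 from rfl, g0, g1, g2]
    rw [hβ0]; ring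
  have hb : b < -1 := by
    apply b_lt b α (p 2 1 1) (p 3 1 2) (p 4 1 3) (p 2 1 2) (c_pos G hconn D hD1 hdiam p hdr 1 (by omega)).1
      (c_pos G hconn D hD1 hdiam p hdr 3 (by omega)).1 (by omega) _ _ _ hA2 hbm
    · have := hc' 2 (by omega)
      simpa only [show 2-1 = 1 from rfl, g1, g2, mul_one] using this
    · have := hc' 3 (by omega)
      simpa only [show 3-1 = 2 from rfl, g2, g3] using this
    · have := hc' 4 (by omega)
      simpa only [show 4-1 = 3 from rfl, g3, g4] using this
  have hb1 : b ≠ 1 := by linarith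
  have hb1' : b - 1 ≠ 0 := sub_ne_zero.mpr hb1
  obtain ⟨N, hN⟩ : ∃ N, N = b^D := ⟨_, rfl⟩
  have hgD : gaussBracket b D = (N-1)/(b-1) := by rw [gb_eq b hb1, hN]
  have hβ : β = 1 + α - α * (N-1)/(b-1) := by rw [hβ0, hgD]; ring
  obtain ⟨k, hkd⟩ : ∃ k, k = d 0 := ⟨_, rfl⟩
  have hk : k = (N-1)/(b-1) * β := by
    rw [hkd, hddef]; simp only [g0, hgD]; ring
  have hdf : ∀ i, d i = ((N-1)/(b-1) - (b^i-1)/(b-1)) * (β - α * ((b^i-1)/(b-1))) := by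
    intro i; rw [hddef]; simp only [hgD, gb_eq b hb1 i]
  have hcf : ∀ i, c i = (b^i-1)/(b-1) * (1 + α * ((b^i/b-1)/(b-1))) := by
    intro i
    rcases i with _ | n
    · rw [hc0]; simp
    · rw [hcdef]; simp only [gb_eq b hb1, Nat.add_sub_cancel]
      rw [show b^(n+1)/b = b^n by rw [pow_succ]; field_simp]
  have haf : ∀ i, a i = -(α * (b+1) / (b * (b-1)^2)) * (b^i - 1) * (b^i - b) := by
    intro i
    rw [ha, ← hkd]
    exact cl_a b α N (b^i) k β _ _ hb0 hb1 hβ hk (hcf i) (hdf i)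
  obtain ⟨q, hq⟩ : ∃ q, q = b⁻¹ := ⟨_, rfl⟩
  have hqi : ∀ i : ℕ, q^i = (b^i)⁻¹ := by intro i; rw [hq, inv_pow]
  have hqs : ∀ i : ℕ, q^(i+1) = (b^i * b)⁻¹ := by intro i; rw [hqi, pow_succ]
  have hBne : ∀ i : ℕ, b^i ≠ 0 := fun i => pow_ne_zero i hb0
  obtain ⟨η, hη⟩ : ∃ η, η = ((1-b^2)*k + (1-1/b^2)*(k-1)*((1+b)*(1+α)) - k*(1-1/b^2))/(b-1) := ⟨_, rfl⟩
  have hbt : (b + b⁻¹) * q = q^2 + 1 := by rw [hq]; field_simp; ring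
  have W1 : ∀ i, (a i + a (i+1)) * (q^i + q^(i+1)) - (b + b⁻¹) * (a i * q^i + a (i+1) * q^(i+1))
      - (α*(b+1)/b) * (q^i + q^(i+1)) = -(α*(b+1)^2/b^2) := by
    intro i
    rw [hqs, hqi]
    refine cl_W1 b α (b^i) hb0 hb1 (hBne i) _ _ (haf i) ?_
    rw [haf (i+1), pow_succ b i]
  have hcd : ∀ i, c i * d (i-1) = c i * (((N-1)/(b-1) - (b^i/b-1)/(b-1)) * (β - α * ((b^i/b-1)/(b-1)))) := by
    intro i
    rcases i with _ | n
    · rw [hc0]; ring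
    · rw [Nat.add_sub_cancel, hdf n, show b^(n+1)/b = b^n by rw [pow_succ]; field_simp]
  have hcq : ∀ i, c i * q^(i-1) = c i * (b^i/b)⁻¹ := by
    intro i
    rcases i with _ | n
    · rw [hc0]; ring
    · rw [Nat.add_sub_cancel, hqi, show b^(n+1)/b = b^n by rw [pow_succ]; field_simp]
  have W2 : ∀ i, 2 * q^i * (c i * d (i-1) + a i ^ 2 + d i * c (i+1))
      - (b + b⁻¹) * (c i * d (i-1) * q^(i-1) + a i ^2 * q^i + d i * c (i+1) * q^(i+1))
      - 2 * (α*(b+1)/b) * a i * q^i - (k*(1-1/b^2) - η) * q^i = -(α*(b+1)^2/b^2) * a i + η := by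
    intro i
    have h1 : c i * d (i-1) * q^(i-1) = c i * (((N-1)/(b-1) - (b^i/b-1)/(b-1)) * (β - α * ((b^i/b-1)/(b-1)))) * (b^i/b)⁻¹ := by
      rw [mul_right_comm, hcq, mul_right_comm, hcd]
    rw [h1, hcd, hqs, hqi]
    refine cl_W2 b α N (b^i) k β (c i) (c (i+1)) (d i) _ (a i) η hb0 hb1 (hBne i) hβ hk (haf i)
      (hcf i) ?_ (hdf i) rfl hη
    rw [hcf (i+1), pow_succ, mul_div_assoc, div_self hb0, mul_one]
  have hT : ∀ i, c i * q^(i-1) + a i * q^i + d i * q^(i+1) = (k/b - 1 - 1/b) * q^i + (b+1)/b := by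
    intro i
    rw [hcq, hqs, hqi]
    exact cl_T b α N (b^i) k β (c i) (d i) (a i) hb0 hb1 (hBne i) hβ hk (haf i) (hcf i) (hdf i)
  have hk0 : k ≠ 0 := by rw [hkd]; exact hdne 0 (by omega)
  have hΔ : k - (k/b - 1 - 1/b) - (b+1)/b ≠ 0 := by
    have : k - (k/b - 1 - 1/b) - (b+1)/b = k * (b - 1) / b := by field_simp; ring
    rw [this]
    exact div_ne_zero (mul_ne_zero hk0 hb1') hb0
  have hI : (1 : Matrix V V ℝ) = Xm G (fun i => if i = 0 then 1 else 0) := by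
    ext y z
    rw [Xm_apply, Matrix.one_apply]
    simp only [hconn.dist_eq_zero_iff]
  have haw := fun f => aw_op c a d f q (b + b⁻¹) (α*(b+1)/b) (k*(1-1/b^2) - η) (-(α*(b+1)^2/b^2)) η hbt hc0 W1 W2
  obtain ⟨e, e', hQ⟩ := Q_sq G D hdiam_le (exists_dist G hconn D hdiam)
    (prod_closed G D p hdr hdiam_le) c a d hc0 hX k q _ _ (fun i => by rw [ha, hkd]; ring) hdne hT hΔ
  have hK := R_zero G c a d q (b + b⁻¹) (α*(b+1)/b) (k*(1-1/b^2) - η) (-(α*(b+1)^2/b^2)) η e e' hX hI haw hQ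
  have hbinv : b * b⁻¹ = 1 := mul_inv_cancel₀ hb0
  have hqneg : q < 0 := by rw [hq]; exact inv_lt_zero.mpr (by linarith)
  have hqgt : -1 < q := by
    by_contra hcon
    rw [hq] at hcon hqneg
    nlinarith
  refine ⟨q, hqgt, hqneg, ?_⟩
  intro j hj x y z hyz
  obtain ⟨r, hr⟩ := bal_exist G hconn c a d q (b + b⁻¹) _ _ (by rw [← hq]; linarith) (by rw [← hq]; linarith)
    hA1 (hcne 1 (by omega)) (hcne 2 (by omega)) hX hK j hj
  have hjD : j ≤ D := by omega
  have h1 := hr y y z hyz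
  rw [Sg_const G D p hdr j j hjD hD1 hjD _ (q^j) y z (fun w _ hw => by rw [hw]) (by rw [G.dist_comm, hyz]),
    Sg_const G D p hdr j j hjD hD1 hjD _ q z y (fun w hw _ => by rw [hw, pow_one]) hyz, hyz,
    SimpleGraph.dist_self] at h1
  rw [hr x y z hyz]
  linear_combination -(q ^ G.dist x z - q ^ G.dist x y) * h1

structure Ctx [Fintype V] (G : SimpleGraph V) (D : ℕ) (p : ℕ → ℕ → ℕ → ℕ) (q : ℝ) : Prop where
  conn : G.Connected
  hD : 4 ≤ D
  hle : ∀ x y : V, G.dist x y ≤ D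
  hdr : G.IsDistRegularWith D p
  a1 : p 1 1 1 = 0
  a2 : p 2 1 2 ≠ 0
  q1 : -1 < q
  q0 : q < 0
  bal : ∀ j, j = 2 ∨ j = 3 → ∀ x y z, G.dist y z = j →
      (q^j - 1) * (Sg G (fun w => q ^ G.dist x w) y z j - Sg G (fun w => q ^ G.dist x w) z y j)
        = p j 1 j * (q^j - q) * (q ^ G.dist x z - q ^ G.dist x y)

lemma Sg_lin [Fintype V] (G : SimpleGraph V) (D : ℕ) (p : ℕ → ℕ → ℕ → ℕ)
    (hdr : G.IsDistRegularWith D p) (j : ℕ) (hi : 1 ≤ D) (hj : j ≤ D) (F : V → ℝ) (σ e : ℝ)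
    (y z : V) (hyz : G.dist y z = j) :
    Sg G (fun w => σ * (F w - e)) y z j = σ * (Sg G F y z j - p j 1 j * e) := by
  rw [← Sg_const G D p hdr j j hj hi hj (fun _ => e) e y z (fun _ _ _ => rfl)
    (by rw [G.dist_comm, hyz]), Sg, Sg, Sg, ← Finset.sum_sub_distrib, Finset.mul_sum]

lemma Sg_nonneg [Fintype V] (G : SimpleGraph V) (F : V → ℝ) (y z : V) (j : ℕ)
    (hF : ∀ w, G.dist z w = 1 → G.dist y w = j → 0 ≤ F w) : 0 ≤ Sg G F y z j := by
  apply Finset.sum_nonneg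
  intro w hw
  simp only [Finset.mem_filter, Finset.mem_univ, true_and] at hw
  exact hF w hw.1 hw.2

lemma Sg_pin [Fintype V] (G : SimpleGraph V) (F : V → ℝ) (y z : V) (j : ℕ)
    (hF : ∀ w, G.dist z w = 1 → G.dist y w = j → 0 ≤ F w) (h0 : Sg G F y z j ≤ 0) (w : V)
    (h1 : G.dist z w = 1) (h2 : G.dist y w = j) : F w = 0 := by
  have h3 : Sg G F y z j = 0 := le_antisymm h0 (Sg_nonneg G F y z j hF)
  rw [Sg, Finset.sum_eq_zero_iff_of_nonneg] at h3
  · exact h3 w (by simp only [Finset.mem_filter, Finset.mem_univ, true_and]; exact ⟨h1, h2⟩)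
  · intro w hw
    simp only [Finset.mem_filter, Finset.mem_univ, true_and] at hw
    exact hF w hw.1 hw.2

lemma Sg_zero [Fintype V] (G : SimpleGraph V) (F : V → ℝ) (y z : V) (j : ℕ)
    (hF : ∀ w, G.dist z w = 1 → G.dist y w = j → F w = 0) : Sg G F y z j = 0 := by
  apply Finset.sum_eq_zero
  intro w hw
  simp only [Finset.mem_filter, Finset.mem_univ, true_and] at hw
  exact hF w hw.1 hw.2

namespace Ctx

variable [Fintype V] {G : SimpleGraph V} {D : ℕ} {p : ℕ → ℕ → ℕ → ℕ} {q : ℝ}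

lemma tri (H : Ctx G D p q) (a b c : V) :
    G.dist a c ≤ G.dist a b + G.dist b c ∧ G.dist a b ≤ G.dist a c + G.dist b c ∧
    G.dist b c ≤ G.dist a b + G.dist a c ∧ G.dist b a = G.dist a b ∧
    G.dist c b = G.dist b c ∧ G.dist c a = G.dist a c := by
  have h1 := H.conn.dist_triangle (u := a) (v := b) (w := c)
  have h2 := H.conn.dist_triangle (u := a) (v := c) (w := b)
  have h3 := H.conn.dist_triangle (u := b) (v := a) (w := c)
  have h4 := G.dist_comm (u := a) (v := b)
  have h5 := G.dist_comm (u := b) (v := c)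
  have h6 := G.dist_comm (u := a) (v := c)
  omega

lemma tf (H : Ctx G D p q) (a b c : V) (h1 : G.dist a b = 1) (h2 : G.dist b c = 1)
    (h3 : G.dist a c = 1) : False := by
  have hD := H.hD
  have := card_filter G D p H.hdr 1 1 1 (by omega) (by omega) (by omega) a b h1
  rw [H.a1, Finset.card_eq_zero] at this
  have hm : c ∈ Finset.univ.filter (fun z => G.dist a z = 1 ∧ G.dist b z = 1) := by
    simp only [Finset.mem_filter, Finset.mem_univ, true_and]; exact ⟨h3, h2⟩
  rw [this] at hm
  simp at hm

lemma two (H : Ctx G D p q) (a b c : V) (h1 : G.dist a b = 1) (h2 : G.dist b c = 1)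
    (h3 : a ≠ c) : G.dist a c = 2 := by
  have h4 : G.dist a c ≠ 0 := fun h => h3 ((H.conn.dist_eq_zero_iff).mp h)
  have h5 : G.dist a c ≠ 1 := fun h => H.tf a b c h1 h2 h
  have := H.tri a b c
  omega

lemma P (H : Ctx G D p q) (j : ℕ) (hj : j = 2 ∨ j = 3) (x y u z : V) (hyu : G.dist y u = j)
    (hxy : G.dist x y = 1) (hxu : G.dist x u = j + 1) (huz : G.dist u z = 1)
    (hyz : G.dist y z = j) : G.dist x z = j + 1 := by
  have hD := H.hD
  have q0 := H.q0
  have q1 := H.q1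
  have h := H.bal j hj x y u hyu
  rw [Sg_const G D p H.hdr j j (by omega) (by omega) (by omega) _ (q^2) u y _ hyu, hxu, hxy] at h
  swap
  · intro w h1 h2
    have h3 : G.dist x w ≠ 0 := by
      intro h0
      have := H.tri x w u
      omega
    have h4 : G.dist x w ≠ 1 := fun h => H.tf x y w hxy h1 h
    have := H.tri x y w
    rw [show G.dist x w = 2 by omega]
  have hqj : q^j - 1 ≠ 0 := by
    rcases hj with rfl | rfl
    · nlinarith
    · have : q^3 < 0 := by
        have := mul_pos_of_neg_of_neg q0 q0
        nlinarith
      linarith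
  have hS : Sg G (fun w => q ^ G.dist x w) y u j = p j 1 j * q^(j+1) := by
    apply mul_left_cancel₀ hqj
    rw [pow_one] at h
    linear_combination h
  have hval : ∀ w, G.dist u w = 1 → G.dist y w = j → G.dist x w = j ∨ G.dist x w = j + 1 := by
    intro w h1 h2
    have := H.tri x u w
    have := H.tri x y w
    omega
  have hq2 : 0 < q^j * q^j := by
    exact mul_self_pos.mpr (pow_ne_zero j q0.ne)
  have hl := Sg_lin G D p H.hdr j (by omega) (by omega) (fun w => q ^ G.dist x w) (q^j) (q^(j+1)) y u hyu
  rw [hS, sub_self, mul_zero] at hl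
  have hpin := Sg_pin G _ y u j (fun w h1 h2 => by
    rcases hval w h1 h2 with h3 | h3
    · rw [h3, pow_succ]; nlinarith
    · rw [h3]; simp) hl.le z huz hyz
  rcases hval z huz hyz with h3 | h3
  · rw [h3, pow_succ] at hpin
    nlinarith
  · exact h3

lemma A' (H : Ctx G D p q) (s u v w : V) (i : ℕ) (hsu : G.dist s u = 2) (hvs : G.dist v s = i)
    (hvu : G.dist v u = i + 2) (huw : G.dist u w = 1) (hsw : G.dist s w = 2) :
    G.dist v w = i + 2 := by
  have hD := H.hD
  have q0 := H.q0
  have q1 := H.q1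
  have h := H.bal 2 (Or.inl rfl) v s u hsu
  rw [hvu, hvs] at h
  have hus : G.dist u s = 2 := by rw [G.dist_comm, hsu]
  have hqj : q^2 - 1 ≠ 0 := by nlinarith
  have hv1 : ∀ w, G.dist u w = 1 → G.dist s w = 2 → G.dist v w = i + 1 ∨ G.dist v w = i + 2 := by
    intro w h1 h2
    have := H.tri v u w
    have := H.tri v s w
    omega
  have hv2 : ∀ w, G.dist s w = 1 → G.dist u w = 2 → G.dist v w = i ∨ G.dist v w = i + 1 := by
    intro w h1 h2
    have := H.tri v u w
    have := H.tri v s w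
    omega
  have hQ : 0 < q^i * q^i := by
    exact mul_self_pos.mpr (pow_ne_zero i q0.ne)
  have h' : Sg G (fun w => q ^ G.dist v w) s u 2 - Sg G (fun w => q ^ G.dist v w) u s 2
      = p 2 1 2 * (q^2 - q) * q^i := by
    apply mul_left_cancel₀ hqj
    rw [h]; ring
  have l1 := Sg_lin G D p H.hdr 2 (by omega) (by omega) (fun w => q ^ G.dist v w) (-q^i) (q^(i+2)) s u hsu
  have l2 := Sg_lin G D p H.hdr 2 (by omega) (by omega) (fun w => q ^ G.dist v w) (q^i) (q^(i+1)) u s hus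
  have n2 := Sg_nonneg G (fun w => q^i * (q ^ G.dist v w - q^(i+1))) u s 2 (fun w h1 h2 => by
    rcases hv2 w h1 h2 with h3 | h3
    · rw [h3, pow_succ]; nlinarith
    · rw [h3]; simp)
  have hsum : Sg G (fun w => -q^i * (q ^ G.dist v w - q^(i+2))) s u 2 = - Sg G (fun w => q^i * (q ^ G.dist v w - q^(i+1))) u s 2 := by
    rw [l1, l2]
    linear_combination -q^i * h'
  have hpin := Sg_pin G (fun w => -q^i * (q ^ G.dist v w - q^(i+2))) s u 2 (fun w h1 h2 => by
    rcases hv1 w h1 h2 with h3 | h3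
    · rw [h3, show -q^i * (q^(i+1) - q^(i+2)) = (q^i * q^i) * (q^2 - q) by ring]
      apply mul_nonneg hQ.le; nlinarith
    · rw [h3]; simp) (by linarith) w huw hsw
  rcases hv1 w huw hsw with h3 | h3
  · exfalso
    simp only [h3] at hpin
    rw [show -q^i * (q^(i+1) - q^(i+2)) = (q^i * q^i) * (q^2 - q) by ring] at hpin
    have : 0 < (q^i * q^i) * (q^2 - q) := mul_pos hQ (by nlinarith)
    linarith
  · exact h3

lemma Bsub (H : Ctx G D p q) (x s t : V) (hs : G.dist x s = 3) (ht : G.dist x t = 3)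
    (hst : G.dist s t = 1) : Bset G x s ⊆ Bset G x t := by
  rintro v ⟨h1, h2⟩
  refine ⟨h1, ?_⟩
  have := H.P 3 (Or.inr rfl) v x s t hs (by rw [G.dist_comm, h1]) (by rw [G.dist_comm, h2, hs]) hst ht
  rw [G.dist_comm, this, ht]

set_option maxHeartbeats 800000 in
lemma key (H : Ctx G D p q) (x s t u z w v : V)
    (hst : G.dist s t = 1) (htu : G.dist t u = 1) (huz : G.dist u z = 1)
    (hsu : G.dist s u = 2) (hsz : G.dist s z = 2)
    (hs : G.dist x s = 3) (hu : G.dist x u = 3) (hz : G.dist x z = 2) (ht : G.dist x t = 2)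
    (hxv : G.dist x v = 1) (hvu : G.dist v u = 4) : G.dist v s = 4 := by
  have hD := H.hD
  have q0 := H.q0
  have q1 := H.q1
  have hq2 : 0 < q^2 := by rw [sq]; exact mul_pos_of_neg_of_neg q0 q0
  have hq23 : 0 < q^2 - q^3 := by
    rw [show q^2 - q^3 = q^2 * (1 - q) by ring]; exact mul_pos hq2 (by linarith)
  have hq34 : 0 < q^4 - q^3 := by
    rw [show q^4 - q^3 = q^2 * (q^2 - q) by ring]; exact mul_pos hq2 (by linarith)
  have T1 := H.tri v x z
  have T2 := H.tri v u z
  have T3 := H.tri v x t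
  have T4 := H.tri v u t
  have T5 := H.tri v x s
  have T6 := H.tri s u z
  have T7 := H.tri s t u
  have hvz : G.dist v z = 3 := by omega
  have hvt : G.dist v t = 3 := by omega
  have hcase : G.dist v s = 2 ∨ G.dist v s = 3 ∨ G.dist v s = 4 := by omega
  rcases hcase with hvs | hvs | hvs
  · have := H.A' s u v z 2 hsu hvs hvu huz hsz
    omega
  · exfalso
    have hi : ∀ y, G.dist s y = 1 → G.dist u y = 2 →
        (G.dist x y = 2 ∨ G.dist x y = 3) ∧ (G.dist v y = 3 ∨ G.dist v y = 4) := by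
      intro y h1 h2
      have U1 := H.tri x s y
      have U2 := H.tri v s y
      have U3 := H.tri y s z
      have U4 := H.tri x y z
      have U5 := H.tri y u z
      have n1 : G.dist x y ≠ 4 := by
        intro h4
        have hyz : G.dist y z ≠ 3 := by
          intro h3
          have := H.P 2 (Or.inl rfl) y s z u hsz (by omega) h3 (by omega) hsu
          omega
        have := H.A' z y x s 2 (by omega) hz h4 (by omega) (by omega)
        omega
      have n2 : G.dist v y ≠ 2 := by
        intro h4
        have hyt : G.dist y t = 2 := H.two y s t (by omega) hst (by
          rintro rfl
          omega)
        have := H.A' y u v t 2 (by omega) h4 hvu (by omega) hyt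
        omega
      omega
    have hii : ∀ y, G.dist u y = 1 → G.dist s y = 2 → G.dist x y ≠ 4 := by
      intro y h1 h2 h4
      have hall : ∀ r, G.dist s r = 1 → G.dist u r = 2 → G.dist x r = 3 := by
        intro r h5 h6
        rcases (hi r h5 h6).1 with h7 | h7
        · exfalso
          have U1 := H.tri x r y
          have U2 := H.tri r s y
          have U3 := H.tri r u y
          have hc : G.dist r y = 2 ∨ G.dist r y = 3 := by omega
          rcases hc with h8 | h8
          · have := H.A' r y x u 2 h8 h7 h4 (by omega) (by omega)
            omega
          · have := H.P 2 (Or.inl rfl) r s y u h2 (by omega) h8 (by omega) hsu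
            omega
        · exact h7
      have hb := H.bal 2 (Or.inl rfl) x s u hsu
      rw [Sg_const G D p H.hdr 2 2 (by omega) (by omega) (by omega) _ (q^3) u s
        (fun w h5 h6 => by rw [hall w h5 h6]) hsu, hs, hu, sub_self, mul_zero] at hb
      have hb' := (mul_eq_zero.mp hb).resolve_left (by nlinarith)
      have l1 := Sg_lin G D p H.hdr 2 (by omega) (by omega) (fun w => q ^ G.dist x w) 1 (q^3) s u hsu
      rw [hb', mul_zero] at l1
      have hpin := Sg_pin G _ s u 2 (fun w h5 h6 => by
        have U1 := H.tri x u w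
        have hc : G.dist x w = 2 ∨ G.dist x w = 3 ∨ G.dist x w = 4 := by omega
        rcases hc with h7 | h7 | h7 <;> rw [h7] <;> linarith) l1.le y h1 h2
      rw [h4] at hpin
      linarith
    have hiii : ∀ y, G.dist u y = 1 → G.dist s y = 2 → q ^ G.dist v y - q * q ^ G.dist x y = 0 := by
      intro y h1 h2
      have := hii y h1 h2
      have U1 := H.tri x u y
      have U2 := H.tri v u y
      have U3 := H.tri v x y
      have hc : G.dist x y = 2 ∨ G.dist x y = 3 := by omega
      rcases hc with h3 | h3
      · rw [h3, show G.dist v y = 3 by omega]; ring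
      · have := H.P 3 (Or.inr rfl) v x u y hu (by omega) hvu h1 h3
        rw [h3, this]; ring
    have b1 := H.bal 2 (Or.inl rfl) x s u hsu
    have b2 := H.bal 2 (Or.inl rfl) v s u hsu
    have e1 : Sg G (fun w => q ^ G.dist v w) s u 2 - q * Sg G (fun w => q ^ G.dist x w) s u 2 = 0 := by
      rw [← Sg_zero G (fun w => q ^ G.dist v w - q * q ^ G.dist x w) s u 2 hiii]
      simp only [Sg, Finset.sum_sub_distrib, Finset.mul_sum]
    have e2 : 0 ≤ q * Sg G (fun w => q ^ G.dist x w) u s 2 - Sg G (fun w => q ^ G.dist v w) u s 2 := by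
      have := Sg_nonneg G (fun w => q * q ^ G.dist x w - q ^ G.dist v w) u s 2 (by
        intro y h1 h2
        obtain ⟨h3, h4⟩ := hi y h1 h2
        have U3 := H.tri v x y
        rcases h3 with h3 | h3
        · rw [h3, show G.dist v y = 3 by omega]; apply le_of_eq; ring
        · rcases h4 with h4 | h4
          · rw [h3, h4, show q * q^3 - q^3 = q^4 - q^3 by ring]; exact hq34.le
          · rw [h3, h4]; apply le_of_eq; ring)
      simpa only [Sg, Finset.sum_sub_distrib, Finset.mul_sum] using this
    rw [hs, hu] at b1
    rw [hvs, hvu] at b2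
    have ha2 : (0 : ℝ) < p 2 1 2 := by
      have := H.a2
      exact_mod_cast Nat.pos_of_ne_zero this
    have hm : 0 < (p 2 1 2 : ℝ) * (q^2 - q) * (q^4 - q^3) := by
      have : 0 < q^2 - q := by linarith
      exact mul_pos (mul_pos ha2 this) hq34
    have h1q : 0 < 1 - q^2 := by nlinarith
    have h9 := mul_nonneg h1q.le e2
    have h10 : (1 - q^2) * (q * Sg G (fun w => q ^ G.dist x w) u s 2 - Sg G (fun w => q ^ G.dist v w) u s 2)
        = -((p 2 1 2 : ℝ) * (q^2 - q) * (q^4 - q^3)) := by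
      linear_combination q * b1 - b2 + (q^2 - 1) * e1
    linarith
  · exact hvs

end Ctx
/-- Classical parameters `(D, b, α, β)`, `D ≥ 4`, `a₁ = 0`, `a₂ ≠ 0`.
If `s t u z w` is a pentagon with `s, u ∈ Γ₃(x)` and `z ∈ Γ₂(x)`, then
`B(x,s) = B(x,u)`. -/
theorem pentagon_Bset_eq [Fintype V] (G : SimpleGraph V) (hconn : G.Connected)
    (D : ℕ) (hD : 4 ≤ D)
    (hdiam_le : ∀ x y : V, G.dist x y ≤ D) (hdiam : ∃ x y : V, G.dist x y = D)
    (p : ℕ → ℕ → ℕ → ℕ) (hdr : G.IsDistRegularWith D p)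
    (b α β : ℝ) (hcp : HasClassicalParams D p b α β)
    (ha1 : p 1 1 1 = 0) (ha2 : p 2 1 2 ≠ 0)
    (x s t u z w : V)
    (hst : G.dist s t = 1) (htu : G.dist t u = 1) (huz : G.dist u z = 1)
    (hzw : G.dist z w = 1) (hws : G.dist w s = 1)
    (hs : G.dist x s = 3) (hu : G.dist x u = 3) (hz : G.dist x z = 2) :
    Bset G x s = Bset G x u := by
  obtain ⟨q, q1, q0, hbal⟩ := main_bal G hconn D hD hdiam_le hdiam p hdr b α β hcp ha1 ha2
  have H : Ctx G D p q := ⟨hconn, hD, hdiam_le, hdr, ha1, ha2, q1, q0, hbal⟩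
  have c1 := H.tri s t u
  have c2 := H.tri u z w
  have c3 := H.tri z w s
  have c4 := H.tri x t s
  have hsu : G.dist s u = 2 := H.two s t u hst htu (by
    rintro rfl
    exact H.tf s z w huz hzw (by omega))
  have hsz : G.dist s z = 2 := H.two s w z (by omega) (by omega) (by
    rintro rfl
    omega)
  have htz : G.dist t z = 2 := H.two t u z htu huz (by
    rintro rfl
    exact H.tf s t w hst hzw (by omega))
  have c5 := H.tri t z x
  have hc : G.dist x t = 2 ∨ G.dist x t = 3 ∨ G.dist x t = 4 := by omega
  rcases hc with ht | ht | ht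
  · have hsub : Bset G x u ⊆ Bset G x s := by
      rintro v ⟨h1, h2⟩
      have c6 := H.tri u v s
      have := H.key x s t u z w v hst htu huz hsu hsz hs hu hz ht h1 (by omega)
      exact ⟨h1, by omega⟩
    have n1 : (Bset G x u).ncard = p 3 1 4 := by
      rw [← hdr 3 1 4 (by omega) (by omega) hD x u hu, Bset, hu]
    have n2 : (Bset G x s).ncard = p 3 1 4 := by
      rw [← hdr 3 1 4 (by omega) (by omega) hD x s hs, Bset, hs]
    exact (Set.eq_of_subset_of_ncard_le hsub (by rw [n1, n2]) (Set.toFinite _)).symm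
  · exact Set.Subset.antisymm
      ((H.Bsub x s t hs ht hst).trans (H.Bsub x t u ht hu htu))
      ((H.Bsub x u t hu ht (by omega)).trans (H.Bsub x t s ht hs (by omega)))
  · have := H.A' z t x s 2 (by omega) hz ht (by omega) (by omega)
    omega
end
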